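/- Let r, s be integers with r ≥ 4 and r−1 ≤ s ≤ 2r−4, and let S ⊂ P^r be an irreducible, reduced, nondegenerate projective surface of degree s, sectional genus π, and arithmetic genus p_a(S). Then −binom(π₀−π+1, 2) ≤ p_a(S) ≤ 0, where π₀ := s−r+1. -/

import Mathlib

/-!
The homogeneous coordinate ring of the surface `S` is replaced by the function field `F`, generated
over `k = ℂ` by the finite-dimensional space `V` spanned by the quotients `x_i / x_0`; its Hilbert
function is `t ↦ dim V ^ t`. A general hyperplane section is realised as the generic one
(`GenSec`): over `k₁ = k(u)` it has function field `F₁ = Frac (F[u] / (∑ z_i u_i))`. Doing this twice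
gives a curve `(k₁, F₁, V₁)` and a finite extension `L / K`, with `V₂ ⊆ L`, standing for the points
of a general section of codimension two. The role of the global sections of `𝒪(t)` is played by the
saturation `sat V t`, and a lemma of Dedekind–Mertens type (`coeff_mem_sat`) yields the usual
inequalities between the Hilbert functions, and the saturations, of a variety and of its section.

Two facts of Bertini type are needed: `k₁` is algebraically closed in `F₁`
(`mem_range_of_isAlgebraic`), and the monodromy of the points is twice transitive, whence `L / K` has
no proper intermediate field (`adjoin_eq_top_of_section`). Both follow from `IsPair.compare`: all
pairs of points of a generic section look alike, because `F ⊗ F` is a domain.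

Since `dim V₂ = r - 1` and `[L : K] ≤ s ≤ 2 r - 4`, one has `V₂ ^ 2 = L`. So `b t = dim (sat V₁ t)`
is linear in `t ≥ 1`, with value `s t + 1 - π`, and summing over `t` bounds the Hilbert function of
`S` from above, which gives `p_a ≤ 0`. For the lower bound consider the deficits
`d t = b t - dim V₁ ^ t`, with `d 1 = π₀ - π`. They do not increase, and once `d (t + 1) = d t`
holds the curve has no further growth beyond `[L : K]` (`finrank_pow_step`, which rests on the linear
Cauchy–Davenport inequality `cauchy_davenport`), so that they are constant from `t` on and vanish,
being zero for large `t`. Hence they decrease strictly until they vanish, their sum is at most the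
triangular number `binom (π₀ - π + 1) 2`, and `p_a` is at least minus that sum (`numeric_end`).
-/

open scoped BigOperators

noncomputable section

/-- The homogeneous coordinate ring of `ℙ^{n-1}` over `ℂ`: polynomials in `n` variables. -/
abbrev MPoly (n : ℕ) : Type := MvPolynomial (Fin n) ℂ

/-- An ideal is homogeneous if it contains all homogeneous components of its members. -/
def IsHomogIdeal {n : ℕ} (I : Ideal (MPoly n)) : Prop :=
  ∀ f ∈ I, ∀ k : ℕ, MvPolynomial.homogeneousComponent k f ∈ I

/-- The degree-`k` graded piece of the homogeneous coordinate ring of the subscheme `V(I)`. -/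
def degQ {n : ℕ} (I : Ideal (MPoly n)) (k : ℕ) : Submodule ℂ (MPoly n ⧸ I) :=
  (MvPolynomial.homogeneousSubmodule (Fin n) ℂ k).map (Ideal.Quotient.mkₐ ℂ I).toLinearMap

/-- The graded pieces, indexed by `ℤ` (zero in negative degrees). -/
def degQZ {n : ℕ} (I : Ideal (MPoly n)) (t : ℤ) : Submodule ℂ (MPoly n ⧸ I) :=
  if 0 ≤ t then degQ I t.toNat else ⊥

/-- The Hilbert function of the closed subscheme `V(I) ⊆ ℙ^{n-1}`. -/
def hilbNat {n : ℕ} (I : Ideal (MPoly n)) (t : ℤ) : ℕ :=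
  Module.finrank ℂ (degQZ I t)

/-- The Hilbert function, as an integer-valued function. -/
def hilbZ {n : ℕ} (I : Ideal (MPoly n)) (t : ℤ) : ℤ := (hilbNat I t : ℤ)

/-- The irrelevant maximal ideal `(x_0, …, x_{n-1})`. -/
def mId (n : ℕ) : Ideal (MPoly n) := Ideal.span (Set.range MvPolynomial.X)

/-- The space of degree-`t` graded module homomorphisms `m^k → R/I`. -/
def gradedHomSub {n : ℕ} (I : Ideal (MPoly n)) (k : ℕ) (t : ℤ) :
    Submodule ℂ ((mId n ^ k : Ideal (MPoly n)) →ₗ[MPoly n] (MPoly n ⧸ I)) where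
  carrier := {φ | ∀ (j : ℕ) (f : MPoly n) (hf : f ∈ mId n ^ k),
    f ∈ MvPolynomial.homogeneousSubmodule (Fin n) ℂ j → φ ⟨f, hf⟩ ∈ degQZ I ((j : ℤ) + t)}
  add_mem' := by
    intro a b ha hb j f hf hj
    simpa using Submodule.add_mem _ (ha j f hf hj) (hb j f hf hj)
  zero_mem' := by
    intro j f hf hj
    simpa using Submodule.zero_mem _
  smul_mem' := by
    intro c φ hφ j f hf hj
    simpa using Submodule.smul_mem _ c (hφ j f hf hj)

/-- `h⁰(X, 𝒪_X(t))` for `X = V(I)`: the stable value of the dimensions of the graded Hom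
modules `Hom(m^k, R/I)_t` (the Deligne formula for twisted global sections). -/
def h0Nat {n : ℕ} (I : Ideal (MPoly n)) (t : ℤ) : ℕ :=
  ⨆ k : ℕ, Module.finrank ℂ (gradedHomSub I k t)

/-- `h¹(ℙ^{n-1}, 𝓘_X(t)) = h⁰(X, 𝒪_X(t)) − h_X(t)` (valid for the saturated ideal of `X`). -/
def h1INat {n : ℕ} (I : Ideal (MPoly n)) (t : ℤ) : ℕ := h0Nat I t - hilbNat I t

/-- The dimension over `ℂ` of the Hartshorne–Rao module `M(X) = ⊕_t H¹(ℙ, 𝓘_X(t))`. -/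
def raoDim {n : ℕ} (I : Ideal (MPoly n)) : ℕ := ∑ᶠ t : ℤ, h1INat I t

/-- Arithmetically Cohen–Macaulay (for an integral curve): the Hartshorne–Rao module vanishes. -/
def IsACM {n : ℕ} (I : Ideal (MPoly n)) : Prop := ∀ t : ℤ, h0Nat I t = hilbNat I t

/-- Saturation of an ideal with respect to the irrelevant maximal ideal. -/
def satIdeal {n : ℕ} (I : Ideal (MPoly n)) : Ideal (MPoly n) where
  carrier := {f | ∃ k : ℕ, ∀ j : Fin n, MvPolynomial.X j ^ k * f ∈ I}
  zero_mem' := ⟨0, fun j => by simpa using I.zero_mem⟩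
  add_mem' := by
    rintro f g ⟨k, hk⟩ ⟨l, hl⟩
    refine ⟨k + l, fun j => ?_⟩
    have h1 : MvPolynomial.X (R := ℂ) j ^ (k + l) * (f + g)
        = MvPolynomial.X j ^ l * (MvPolynomial.X j ^ k * f)
          + MvPolynomial.X j ^ k * (MvPolynomial.X j ^ l * g) := by ring
    rw [h1]
    exact I.add_mem (I.mul_mem_left _ (hk j)) (I.mul_mem_left _ (hl j))
  smul_mem' := by
    rintro c f ⟨k, hk⟩
    refine ⟨k, fun j => ?_⟩
    have h1 : MvPolynomial.X (R := ℂ) j ^ k * (c • f) = c * (MvPolynomial.X j ^ k * f) := by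
      rw [smul_eq_mul]; ring
    rw [h1]
    exact I.mul_mem_left _ (hk j)

/-- The hyperplane section of `V(I)` by the hyperplane `{ℓ = 0}`, as a closed subscheme
(its saturated homogeneous ideal). -/
def sect {n : ℕ} (I : Ideal (MPoly n)) (ℓ : MPoly n) : Ideal (MPoly n) :=
  satIdeal (I ⊔ Ideal.span {ℓ})

/-- A property `P` holds for a *general* `k`-tuple of linear forms (hyperplanes): it holds on a
nonempty Zariski-open subset of the space of coefficients. -/
def GenericForms (n k : ℕ) (P : (Fin k → MPoly n) → Prop) : Prop :=
  ∃ Q : MvPolynomial (Fin k × Fin n) ℂ, Q ≠ 0 ∧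
    ∀ c : Fin k → Fin n → ℂ, MvPolynomial.eval (fun p => c p.1 p.2) Q ≠ 0 →
      P fun t => ∑ j : Fin n, MvPolynomial.C (c t j) * MvPolynomial.X j

/-- `V(I) ⊆ ℙ^{n-1}` is nondegenerate: contained in no hyperplane. -/
def Nondeg {n : ℕ} (I : Ideal (MPoly n)) : Prop :=
  ∀ f ∈ MvPolynomial.homogeneousSubmodule (Fin n) ℂ 1, f ∈ I → f = 0

/-- `V(I)` is an integral curve: `I` homogeneous prime, with cone of Krull dimension 2. -/
def IsCurve {n : ℕ} (I : Ideal (MPoly n)) : Prop :=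
  IsHomogIdeal I ∧ I.IsPrime ∧ ringKrullDim (MPoly n ⧸ I) = 2

/-- `V(I)` is an integral surface: `I` homogeneous prime, with cone of Krull dimension 3. -/
def IsSurface {n : ℕ} (I : Ideal (MPoly n)) : Prop :=
  IsHomogIdeal I ∧ I.IsPrime ∧ ringKrullDim (MPoly n ⧸ I) = 3

/-- The curve `V(I)` has degree `d` and arithmetic genus `g`: its Hilbert polynomial is
`d·t + 1 − g`. -/
def CurveInv {n : ℕ} (I : Ideal (MPoly n)) (d g : ℤ) : Prop :=
  ∃ N : ℤ, ∀ t : ℤ, N ≤ t → hilbZ I t = d * t + 1 - g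

/-- The surface `V(I)` has degree `s`, sectional genus `π` and arithmetic genus `pa`:
its Hilbert polynomial is `s·choose(t+1, 2) + (1 − π)·t + 1 + pa`. -/
def SurfInv {n : ℕ} (I : Ideal (MPoly n)) (s π pa : ℤ) : Prop :=
  ∃ N : ℤ, ∀ t : ℤ, N ≤ t → hilbZ I t = s * (t * (t + 1) / 2) + (1 - π) * t + 1 + pa

/-- `V(IC)` is not contained in any integral surface of degree `< s`. -/
def NotInSurfDegLT {n : ℕ} (IC : Ideal (MPoly n)) (s : ℤ) : Prop :=
  ∀ (T : Ideal (MPoly n)) (s' π' pa' : ℤ), IsSurface T → SurfInv T s' π' pa' → s' < s →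
    ¬ T ≤ IC

/-- `V(IC)` is not contained in any integral surface of degree `s` with sectional genus `> π`. -/
def NotInSurfSecGT {n : ℕ} (IC : Ideal (MPoly n)) (s π : ℤ) : Prop :=
  ∀ (T : Ideal (MPoly n)) (π' pa' : ℤ), IsSurface T → SurfInv T s π' pa' → π < π' →
    ¬ T ≤ IC

/-- `V(IC)` is not contained in any integral surface of degree `s` with arithmetic genus `< p`. -/
def NotInSurfGenLT {n : ℕ} (IC : Ideal (MPoly n)) (s p : ℤ) : Prop :=
  ∀ (T : Ideal (MPoly n)) (π' pa' : ℤ), IsSurface T → SurfInv T s π' pa' → pa' < p →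
    ¬ T ≤ IC

/-- `binom2 z = z.choose 2` for integers. -/
def binom2 (z : ℤ) : ℤ := z * (z - 1) / 2

/-- The bound `G*(r,d,s,π,p)` of Di Gennaro–Franco, with `m = (d-1)/s`, `ε = (d-1) % s`. -/
def Gstar (r d s π p : ℤ) : ℤ :=
  binom2 ((d - 1) / s) * s + ((d - 1) / s) * ((d - 1) % s + π) - p
    + max 0 ((2 * π - (s - 1 - (d - 1) % s)) / 2)

/-- The numerical function `h_{r,d,s,π}`. -/
def hF (r d s π : ℤ) (i : ℤ) : ℤ :=
  if 1 ≤ i ∧ i ≤ (d - 1) / s then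
    1 - π + i * s - max 0 ((s - r + 1) - π - i + 1)
  else if i = (d - 1) / s + 1 then
    d - max 0 ((2 * π - (s - 1 - (d - 1) % s)) / 2)
  else if (d - 1) / s + 2 ≤ i then d
  else 0

/-- The threshold `d₀(r)`. -/
def d0 (r : ℤ) : ℤ :=
  if r ≤ 6 then 16 * (r - 2) * (2 * r - 3)
  else if r ≤ 11 then 8 * (r - 2) ^ 3
  else 2 ^ (r.toNat + 1)

end
noncomputable section

/-- The affine cone of `V(I)`: common zeroes of the elements of `I`. -/
def zeroCone {n : ℕ} (I : Ideal (MPoly n)) : Set (Fin n → ℂ) :=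
  {a | ∀ f ∈ I, MvPolynomial.eval a f = 0}

/-- Jacobian-criterion smoothness: at every nonzero point of the affine cone (of dimension `c`)
the gradients of the equations span a subspace of dimension `n - c`. -/
def IsSmooth {n : ℕ} (I : Ideal (MPoly n)) (c : ℕ) : Prop :=
  ∀ a ∈ zeroCone I, a ≠ 0 →
    Module.finrank ℂ (Submodule.span ℂ
      {g : Fin n → ℂ | ∃ f ∈ I, g = fun j => MvPolynomial.eval a (MvPolynomial.pderiv j f)})
      = n - c

/-- Castelnuovo's bound for the genus of a nondegenerate integral curve of degree `d`
in `ℙ^R`. -/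
def castelG (R d : ℤ) : ℤ :=
  binom2 ((d - 1) / (R - 1)) * (R - 1) + ((d - 1) / (R - 1)) * ((d - 1) % (R - 1))

/-- The ideal of the projective cone (from `ℙ^{n-1}` to `ℙ^n`) over `V(I)`. -/
def coneIdeal {n : ℕ} (I : Ideal (MPoly n)) : Ideal (MPoly (n + 1)) :=
  Ideal.map (MvPolynomial.rename (Fin.castSucc : Fin n → Fin (n + 1))) I

/-- `J` is the (saturated homogeneous) ideal of a line in `ℙ^{n-1}`: it is generated by
`n - 2` linearly independent linear forms. -/
def IsLineIdeal {n : ℕ} (J : Ideal (MPoly n)) : Prop :=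
  ∃ V : Submodule ℂ (MPoly n), V ≤ MvPolynomial.homogeneousSubmodule (Fin n) ℂ 1 ∧
    Module.finrank ℂ V = n - 2 ∧ J = Ideal.span (V : Set (MPoly n))

/-- `V(T) ⊆ ℙ^{n-1}` is a smooth rational normal scroll surface: a smooth nondegenerate
integral surface of minimal degree `n - 2` (with sectional and arithmetic genus `0`)
containing a line (which rules out the Veronese surface). -/
def IsSmoothRNScroll {n : ℕ} (T : Ideal (MPoly n)) : Prop :=
  IsSurface T ∧ Nondeg T ∧ IsSmooth T 3 ∧ SurfInv T ((n : ℤ) - 2) 0 0 ∧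
    ∃ J : Ideal (MPoly n), IsLineIdeal J ∧ T ≤ J

/-- The linear projection on points determined by the matrix `L`. -/
def projPt {nb ns : ℕ} (L : Fin ns → Fin nb → ℂ) (a : Fin nb → ℂ) : Fin ns → ℂ :=
  fun t => ∑ j, L t j * a j

/-- The substitution algebra homomorphism determined by the matrix `L` (pullback of the
linear projection `ℙ^{nb-1} ⇢ ℙ^{ns-1}`). -/
def substHom {nb ns : ℕ} (L : Fin ns → Fin nb → ℂ) : MPoly ns →ₐ[ℂ] MPoly nb :=
  MvPolynomial.aeval fun t => ∑ j, MvPolynomial.C (L t j) * MvPolynomial.X j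

/-- The linear projection given by `L` maps `V(I')` isomorphically onto `V(I)`: the center of
projection misses `V(I')`, `V(I)` is the image, and the projection is (projectively) bijective
from `V(I')` onto `V(I)`. -/
def IsIsoProjection {nb ns : ℕ} (L : Fin ns → Fin nb → ℂ)
    (I' : Ideal (MPoly nb)) (I : Ideal (MPoly ns)) : Prop :=
  I = I'.comap (substHom L) ∧
  (∀ a ∈ zeroCone I', a ≠ 0 → projPt L a ≠ 0) ∧
  (∀ a ∈ zeroCone I', ∀ b ∈ zeroCone I', a ≠ 0 → b ≠ 0 →
    (∃ c : ℂ, c ≠ 0 ∧ projPt L a = c • projPt L b) → ∃ c : ℂ, c ≠ 0 ∧ a = c • b) ∧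
  (∀ y ∈ zeroCone I, y ≠ 0 → ∃ a ∈ zeroCone I', a ≠ 0 ∧ ∃ c : ℂ, c ≠ 0 ∧ y = c • projPt L a)

/-- `t` bounds the Castelnuovo–Mumford regularity of the surface `V(I) ⊆ ℙ^{n-1}`:
for every `t' ≥ t`, `H^i(ℙ, 𝓘(t'-i)) = 0` for all `i ≥ 1`, expressed through the standard
inductive characterization by successive general hyperplane sections. -/
def IsRegBound {n : ℕ} (I : Ideal (MPoly n)) (t : ℤ) : Prop :=
  GenericForms n 2 fun L => ∀ t' : ℤ, t ≤ t' →
    h1INat I (t' - 1) = 0 ∧ h1INat (sect I (L 0)) (t' - 1) = 0 ∧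
      h1INat (sect (sect I (L 0)) (L 1)) (t' - 1) = 0

end

/-! ### Products of subspaces in finite field extensions -/

namespace SurfGenus

lemma finrank_map_inj {K M N : Type*} [Field K] [AddCommGroup M] [AddCommGroup N] [Module K M]
    [Module K N] (A : Submodule K M) {f : M →ₗ[K] N} (hf : Function.Injective f) :
    Module.finrank K (A.map f) = Module.finrank K A :=
  (Submodule.equivMapOfInjective f hf A).finrank_eq.symm

section FieldProducts
variable {K L : Type} [Field K] [Field L] [Algebra K L]

/-- A nonzero functional on a finite field extension induces a nondegenerate pairing, so the
orthogonal of `B` has the complementary dimension. -/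
lemma finrank_orth [FiniteDimensional K L] {φ : L →ₗ[K] K} (hφ : φ ≠ 0) (A B : Submodule K L)
    (h : ∀ a ∈ A, ∀ b ∈ B, φ (a * b) = 0) :
    Module.finrank K A + Module.finrank K B ≤ Module.finrank K L := by
  let T : L →ₗ[K] Module.Dual K L := (LinearMap.mul K L).compr₂ φ
  have hT : Function.Injective T := by
    rw [← LinearMap.ker_eq_bot, LinearMap.ker_eq_bot']
    intro x hx
    by_contra hx0
    apply hφ
    ext y
    have := LinearMap.congr_fun hx (x⁻¹ * y)
    simpa [T, hx0] using this
  have hle : A.map T ≤ B.dualAnnihilator := by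
    rintro _ ⟨a, ha, rfl⟩
    rw [Submodule.mem_dualAnnihilator]
    intro b hb
    exact h a ha b hb
  have h1 := Submodule.finrank_mono hle
  rw [finrank_map_inj A hT] at h1
  have h2 := Subspace.finrank_add_finrank_dualAnnihilator_eq B
  omega

lemma mul_eq_top_of_finrank [FiniteDimensional K L] (A B : Submodule K L)
    (h : Module.finrank K L < Module.finrank K A + Module.finrank K B) : A * B = ⊤ := by
  by_contra hne
  obtain ⟨φ, hφ, hle⟩ := Submodule.exists_le_ker_of_lt_top _ (lt_top_iff_ne_top.2 hne)
  have := finrank_orth hφ A B (fun a ha b hb => hle (Submodule.mul_mem_mul ha hb))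
  omega

/-- A linear Cauchy–Davenport inequality, for extensions without proper intermediate fields. -/
lemma cauchy_davenport [FiniteDimensional K L]
    (hK : ∀ c : L, c ∉ Set.range (algebraMap K L) → IntermediateField.adjoin K {c} = ⊤) :
    ∀ (n : ℕ) (A B : Submodule K L), Module.finrank K A = n → A ≠ ⊥ → B ≠ ⊥ →
      min (Module.finrank K L) (Module.finrank K A + Module.finrank K B - 1)
        ≤ Module.finrank K (A * B : Submodule K L) := by
  intro n
  induction n using Nat.strong_induction_on with
  | _ n ih =>
  intro A B hAn hA hB
  by_cases hex : ∃ a ∈ A, ∃ b ∈ B, a ≠ 0 ∧ b ≠ 0 ∧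
      ¬ A ≤ B.map (LinearMap.mulLeft K (a * b⁻¹))
  -- Dyson's transform: with `e = a / b`, replace `A` by the smaller `A ∩ eB` and `B` by
  -- `e⁻¹ (A + eB)`; this preserves the sum of the dimensions and does not enlarge the product.
  · obtain ⟨a, ha, b, hb, ha0, hb0, hnle⟩ := hex
    set e : L := a * b⁻¹ with he
    have he0 : e ≠ 0 := mul_ne_zero ha0 (inv_ne_zero hb0)
    set eB := B.map (LinearMap.mulLeft K e)
    set A' := A ⊓ eB
    set B' := (A ⊔ eB).map (LinearMap.mulLeft K e⁻¹)
    have hinj : ∀ c : L, c ≠ 0 → Function.Injective (LinearMap.mulLeft K c) := fun c hc =>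
      mul_right_injective₀ hc
    have d1 : Module.finrank K eB = Module.finrank K B :=
      finrank_map_inj B (hinj e he0)
    have d2 : Module.finrank K B' = Module.finrank K (A ⊔ eB : Submodule K L) :=
      finrank_map_inj _ (hinj _ (inv_ne_zero he0))
    have d3 := Submodule.finrank_sup_add_finrank_inf_eq A eB
    have d4 : Module.finrank K A' < Module.finrank K A :=
      Submodule.finrank_lt_finrank_of_lt (lt_of_le_of_ne inf_le_left
        (fun h => hnle (inf_eq_left.1 h)))
    have haA' : a ∈ A' := ⟨ha, b, hb, by simp [he, hb0]⟩
    have hA' : A' ≠ ⊥ := fun h => ha0 (by rwa [h, Submodule.mem_bot] at haA')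
    have hB' : B' ≠ ⊥ := fun h => by
      have hx : e⁻¹ * a ∈ B' := ⟨a, Submodule.mem_sup_left ha, rfl⟩
      rw [h, Submodule.mem_bot] at hx
      exact mul_ne_zero (inv_ne_zero he0) ha0 hx
    have hle : A' * B' ≤ A * B := by
      rw [Submodule.mul_le]
      rintro x ⟨hxA, y, hy, rfl⟩ _ ⟨w, hw, rfl⟩
      obtain ⟨a', ha', _, ⟨b', hb', rfl⟩, rfl⟩ := Submodule.mem_sup.1 hw
      have : (LinearMap.mulLeft K e y) * (LinearMap.mulLeft K e⁻¹ (a' + LinearMap.mulLeft K e b'))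
          = a' * y + (e * y) * b' := by
        simp only [LinearMap.mulLeft_apply]; field_simp
      rw [this]
      exact add_mem (Submodule.mul_mem_mul ha' hy) (Submodule.mul_mem_mul hxA hb')
    have h1 := ih _ (hAn ▸ d4) A' B' rfl hA' hB'
    have h2 := Submodule.finrank_mono hle
    have : Module.finrank K A' + Module.finrank K B' = Module.finrank K A + Module.finrank K B := by
      rw [d2, ← d1, ← d3, add_comm]
    rw [this] at h1
    exact h1.trans h2
  · push Not at hex
    obtain ⟨a, ha, ha0⟩ := (Submodule.ne_bot_iff A).1 hA
    obtain ⟨b, hb, hb0⟩ := (Submodule.ne_bot_iff B).1 hB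
    have hmap : B.map (LinearMap.mulLeft K a) ≤ A * B := by
      rintro _ ⟨y, hy, rfl⟩
      exact Submodule.mul_mem_mul ha hy
    have hBAB : Module.finrank K B ≤ Module.finrank K (A * B : Submodule K L) := by
      rw [← finrank_map_inj (f := LinearMap.mulLeft K a) B (mul_right_injective₀ ha0)]
      exact Submodule.finrank_mono hmap
    -- The multipliers of `B` contain all quotients of elements of `A`. If one of these is not a
    -- constant, it generates `L`, and so `B = L`.
    let S : Subalgebra K L :=
      { carrier := {c | ∀ y ∈ B, c * y ∈ B}
        mul_mem' := fun {c d} hc hd y hy => by rw [mul_assoc]; exact hc _ (hd _ hy)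
        add_mem' := fun {c d} hc hd y hy => by rw [add_mul]; exact add_mem (hc _ hy) (hd _ hy)
        algebraMap_mem' := fun c y hy => by
          rw [← Algebra.smul_def]; exact B.smul_mem _ hy }
    have hS : ∀ a' ∈ A, a' * a⁻¹ ∈ S := by
      intro a' ha' y hy
      by_cases hy0 : y = 0
      · simp [hy0]
      obtain ⟨w, hw, hw'⟩ := hex a ha y hy ha0 hy0 ha'
      have : a' * a⁻¹ * y = w := by
        rw [← hw', LinearMap.mulLeft_apply]; field_simp
      rw [this]; exact hw
    by_cases hall : ∀ a' ∈ A, a' * a⁻¹ ∈ Set.range (algebraMap K L)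
    · have : A ≤ Submodule.span K {a} := by
        intro a' ha'
        obtain ⟨c, hc⟩ := hall a' ha'
        rw [Submodule.mem_span_singleton]
        exact ⟨c, by rw [Algebra.smul_def, hc]; field_simp⟩
      have h1 := (Submodule.finrank_mono this).trans (finrank_span_singleton ha0).le
      exact (min_le_right _ _).trans (by omega)
    · push Not at hall
      obtain ⟨a', ha', hc⟩ := hall
      have htop := hK _ hc
      have hST : S = ⊤ := by
        rw [eq_top_iff]
        have h1 : Algebra.adjoin K {a' * a⁻¹} ≤ S := by
          rw [Algebra.adjoin_le_iff, Set.singleton_subset_iff]; exact hS a' ha'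
        have h2 := IntermediateField.adjoin_simple_toSubalgebra_of_isAlgebraic
          (Algebra.IsAlgebraic.isAlgebraic (R := K) (a' * a⁻¹))
        rw [htop, IntermediateField.top_toSubalgebra] at h2
        rw [h2]; exact h1
      have hBtop : B = ⊤ := by
        rw [eq_top_iff]
        intro x _
        have hx : x * b⁻¹ ∈ S := by rw [hST]; trivial
        have := hx b hb
        rwa [inv_mul_cancel_right₀ hb0] at this
      refine (min_le_left _ _).trans ?_
      rw [hBtop, finrank_top] at hBAB
      rw [hBtop]; exact hBAB

end FieldProducts
end SurfGenus

/-! ### Saturation and a Dedekind–Mertens lemma -/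

namespace SurfGenus

section Sat
variable {k F : Type} [Field k] [Field F] [Algebra k F]

/-- The degree-`t` part of the saturation of the graded algebra `⨁ V ^ n`: the elements of `F`
that multiply `V ^ n` into `V ^ (n + t)` for some (equivalently, all large) `n`. -/
def sat (V : Submodule k F) (t : ℕ) : Submodule k F where
  carrier := {x | ∃ n, ∀ y ∈ V ^ n, x * y ∈ V ^ (n + t)}
  zero_mem' := ⟨0, fun y _ => by simp⟩
  add_mem' := by
    rintro x x' ⟨n, hn⟩ ⟨m, hm⟩
    refine ⟨n + m, fun y hy => ?_⟩
    rw [pow_add] at hy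
    refine Submodule.mul_induction_on hy ?_ ?_
    · intro a ha b hb
      have h1 : x * (a * b) ∈ V ^ (n + m + t) := by
        have := Submodule.mul_mem_mul (hn a ha) hb
        rw [← pow_add] at this
        rwa [← mul_assoc, show n + m + t = n + t + m by ring]
      have h2 : x' * (a * b) ∈ V ^ (n + m + t) := by
        have := Submodule.mul_mem_mul ha (hm b hb)
        rw [← pow_add] at this
        rwa [mul_left_comm, show n + m + t = n + (m + t) by ring]
      rw [add_mul]; exact add_mem h1 h2
    · intro a b ha hb
      rw [mul_add]; exact add_mem ha hb
  smul_mem' := by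
    rintro c x ⟨n, hn⟩
    exact ⟨n, fun y hy => by rw [smul_mul_assoc]; exact Submodule.smul_mem _ _ (hn y hy)⟩

variable {V : Submodule k F}

lemma mem_sat {t : ℕ} {x : F} : x ∈ sat V t ↔ ∃ n, ∀ y ∈ V ^ n, x * y ∈ V ^ (n + t) := Iff.rfl

lemma pow_le_sat (V : Submodule k F) (t : ℕ) : V ^ t ≤ sat V t := fun x hx =>
  ⟨0, fun y hy => by
    rw [pow_zero] at hy
    have := Submodule.mul_mem_mul hx hy
    rwa [mul_one, ← zero_add t] at this⟩

lemma le_sat_one (V : Submodule k F) : V ≤ sat V 1 := by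
  simpa using pow_le_sat V 1

lemma sat_mul_mem {i j : ℕ} {x y : F} (hx : x ∈ sat V i) (hy : y ∈ sat V j) :
    x * y ∈ sat V (i + j) := by
  obtain ⟨n, hn⟩ := hx
  obtain ⟨m, hm⟩ := hy
  refine ⟨n + m, fun w hw => ?_⟩
  rw [pow_add] at hw
  refine Submodule.mul_induction_on hw ?_ ?_
  · intro a ha b hb
    have := Submodule.mul_mem_mul (hn a ha) (hm b hb)
    rw [← pow_add] at this
    rwa [show n + m + (i + j) = n + i + (m + j) by ring,
      show x * y * (a * b) = x * a * (y * b) by ring]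
  · intro a b ha hb
    rw [mul_add]; exact add_mem ha hb

lemma sat_mul (V : Submodule k F) (i j : ℕ) : sat V i * sat V j ≤ sat V (i + j) :=
  Submodule.mul_le.2 fun _ hx _ hy => sat_mul_mem hx hy

lemma sat_mono (h1 : (1 : F) ∈ V) : Monotone (sat V) := monotone_nat_of_le_succ fun t x hx => by
  simpa using sat_mul_mem hx (le_sat_one V h1)

lemma pow_mono' (h1 : (1 : F) ∈ V) : Monotone (fun n : ℕ => V ^ n) :=
  monotone_nat_of_le_succ fun t x hx => by
    simpa [pow_succ] using Submodule.mul_mem_mul hx h1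

/-- A finite-dimensional part of the saturation has a uniform exponent. -/
lemma exists_mul_pow_le {t : ℕ} (W : Submodule k F) (hW : W.FG) (hle : W ≤ sat V t) :
    ∃ n, ∀ m, n ≤ m → W * V ^ m ≤ V ^ (m + t) := by
  suffices ∃ n, W * V ^ n ≤ V ^ (n + t) by
    obtain ⟨n, hn⟩ := this
    refine ⟨n, fun m hm => ?_⟩
    obtain ⟨l, rfl⟩ := Nat.exists_eq_add_of_le hm
    calc W * V ^ (n + l) = W * V ^ n * V ^ l := by rw [pow_add, mul_assoc]
      _ ≤ V ^ (n + t) * V ^ l := by gcongr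
      _ = V ^ (n + l + t) := by rw [← pow_add]; ring_nf
  induction W, hW using Submodule.fg_induction with
  | singleton x =>
    obtain ⟨n, hn⟩ := hle (Submodule.mem_span_singleton_self x)
    refine ⟨n, Submodule.mul_le.2 fun a ha b hb => ?_⟩
    obtain ⟨c, rfl⟩ := Submodule.mem_span_singleton.1 ha
    rw [smul_mul_assoc]; exact Submodule.smul_mem _ _ (hn b hb)
  | sup W₁ W₂ _ _ h₁ h₂ =>
    obtain ⟨n, hn⟩ := h₁ (le_sup_left.trans hle)
    obtain ⟨m, hm⟩ := h₂ (le_sup_right.trans hle)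
    refine ⟨n + m, ?_⟩
    rw [Submodule.sup_mul]
    refine sup_le ?_ ?_
    · calc W₁ * V ^ (n + m) = W₁ * V ^ n * V ^ m := by rw [pow_add, mul_assoc]
        _ ≤ V ^ (n + t) * V ^ m := by gcongr
        _ = V ^ (n + m + t) := by rw [← pow_add]; ring_nf
    · calc W₂ * V ^ (n + m) = W₂ * V ^ m * V ^ n := by rw [add_comm, pow_add, mul_assoc]
        _ ≤ V ^ (m + t) * V ^ n := by gcongr
        _ = V ^ (n + m + t) := by rw [← pow_add]; ring_nf

lemma mem_sat_of_pow (hV : V.FG) {n t : ℕ} {x : F} (h : ∀ y ∈ V ^ n, x * y ∈ sat V (n + t)) :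
    x ∈ sat V t := by
  have hfg : ((V ^ n).map (LinearMap.mulLeft k x)).FG := (hV.pow n).map _
  obtain ⟨m, hm⟩ := exists_mul_pow_le (t := n + t) ((V ^ n).map (LinearMap.mulLeft k x)) hfg
    (by rintro _ ⟨y, hy, rfl⟩; exact h y hy)
  refine ⟨n + m, fun y hy => ?_⟩
  rw [pow_add] at hy
  refine Submodule.mul_induction_on hy ?_ ?_
  · intro a ha b hb
    have := hm m le_rfl (Submodule.mul_mem_mul ⟨a, ha, rfl⟩ hb)
    rw [show n + m + t = m + (n + t) by ring, ← mul_assoc]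
    exact this
  · intro a b ha hb
    rw [mul_add]; exact add_mem ha hb

/-- Elements of `sat V 0` stabilise some `V ^ n`, hence are algebraic. -/
lemma isAlgebraic_of_mem_sat_zero (hV : V.FG) (h1 : (1 : F) ∈ V) {x : F} (hx : x ∈ sat V 0) :
    IsIntegral k x := by
  obtain ⟨n, hn⟩ := hx
  refine isIntegral_of_smul_mem_submodule (N := V ^ n) ?_ (hV.pow n) x ?_
  · intro h0
    have := Submodule.pow_mem_pow V h1 n
    rw [h0, one_pow] at this
    exact one_ne_zero this
  · intro y hy; simpa using hn y hy

end Sat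

section DedekindMertens
open MvPolynomial
variable {k F σ : Type} [Field k] [Field F] [Algebra k F] [Fintype σ] [DecidableEq σ]

/-- The linear form `∑ z_i u_i` with coefficient family `z`. -/
noncomputable def linForm (z : σ → F) : MvPolynomial σ F := ∑ i, C (z i) * X i

lemma coeff_linForm_mul (z : σ → F) (q : MvPolynomial σ F) (β : σ →₀ ℕ) :
    coeff β (linForm z * q) =
      ∑ i, z i * (if i ∈ β.support then coeff (β - Finsupp.single i 1) q else 0) := by
  simp only [linForm, Finset.sum_mul, coeff_sum, mul_assoc, coeff_C_mul, coeff_X_mul']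

lemma natCast_le_one (c : ℕ) : (c : Submodule k F) ≤ 1 := by
  induction c with
  | zero => simp
  | succ c ih => rw [Nat.cast_succ]; exact sup_le ih le_rfl

variable {V : Submodule k F}

/-- The core of the Dedekind–Mertens type statement: a power of each `z_i` moves the coefficients
of `q` into the expected degree of the saturation. -/
lemma dm_single {z : σ → F} (hz : ∀ i, z i ∈ V) {t : ℕ} {q : MvPolynomial σ F}
    (h : ∀ β, coeff β (linForm z * q) ∈ sat V t) (i : σ) (d : ℕ)
    (hd : ∀ α : σ →₀ ℕ, d < α i → coeff α q = 0) (j : ℕ) :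
    ∀ α : σ →₀ ℕ, d ≤ α i + j → z i ^ (j + 1) * coeff α q ∈ sat V (t + j) := by
  have key : ∀ α : σ →₀ ℕ, z i * coeff α q = coeff (α + Finsupp.single i 1) (linForm z * q)
      - ∑ l ∈ Finset.univ.erase i, z l * (if l ∈ (α + Finsupp.single i 1).support then
          coeff (α + Finsupp.single i 1 - Finsupp.single l 1) q else 0) := by
    intro α
    rw [coeff_linForm_mul, ← Finset.add_sum_erase _ _ (Finset.mem_univ i)]
    simp
  have hexp : ∀ (α : σ →₀ ℕ) (l : σ), l ≠ i →
      (α + Finsupp.single i 1 - Finsupp.single l 1 : σ →₀ ℕ) i = α i + 1 := by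
    intro α l hl
    simp [hl]
  induction j with
  | zero =>
    intro α hα
    rw [zero_add, pow_one, key, Finset.sum_eq_zero, sub_zero]
    · exact h _
    · intro l hl
      rw [hd _ (by rw [hexp α l (Finset.ne_of_mem_erase hl)]; omega)]
      simp
  | succ j ih =>
    intro α hα
    rw [pow_succ, mul_assoc, key, mul_sub, Finset.mul_sum]
    refine sub_mem ?_ (sum_mem fun l hl => ?_)
    · rw [add_comm t]
      refine sat_mul_mem (pow_le_sat V _ (Submodule.pow_mem_pow _ (hz i) _)) (h _)
    · split_ifs
      · have := sat_mul_mem (le_sat_one V (hz l))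
          (ih (α + Finsupp.single i 1 - Finsupp.single l 1)
            (by rw [hexp α l (Finset.ne_of_mem_erase hl)]; omega))
        rw [mul_left_comm]
        rwa [show t + (j + 1) = 1 + (t + j) by ring]
      · simp

/-- If `n ≥ N + M + 1`, each product of `n + 1` elements of `A ∪ B` contains more than `N` factors
from `A` or more than `M` factors from `B`, so the property passes from `A` and `B` to `A + B`. -/
lemma dm_sup {A B : Submodule k F} (hA : A ≤ V) (hB : B ≤ V) {t : ℕ} {c : F}
    (h₁ : ∃ N, ∀ n, N ≤ n → ∀ y ∈ A ^ (n + 1), y * c ∈ sat V (n + t))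
    (h₂ : ∃ N, ∀ n, N ≤ n → ∀ y ∈ B ^ (n + 1), y * c ∈ sat V (n + t)) :
    ∃ N, ∀ n, N ≤ n → ∀ y ∈ (A ⊔ B) ^ (n + 1), y * c ∈ sat V (n + t) := by
  obtain ⟨N, hN⟩ := h₁
  obtain ⟨M, hM⟩ := h₂
  refine ⟨N + M + 1, fun n hn => ?_⟩
  suffices (A ⊔ B) ^ (n + 1) ≤ (sat V (n + t)).comap (LinearMap.mulRight k c) from
    fun y hy => this hy
  rw [← Submodule.add_eq_sup, add_pow]
  refine Finset.sum_induction _ (fun W => W ≤ (sat V (n + t)).comap (LinearMap.mulRight k c))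
    (fun _ _ => sup_le) bot_le fun m hm => ?_
  have hm' : m ≤ n + 1 := by simpa [Nat.lt_succ_iff] using hm
  refine (mul_le_mul_right (natCast_le_one _) _).trans ?_
  rw [mul_one]
  refine Submodule.mul_le.2 fun a ha b hb => ?_
  change a * b * c ∈ sat V (n + t)
  by_cases hmN : N + 1 ≤ m
  · obtain ⟨p, rfl⟩ := Nat.exists_eq_add_of_le' (show 1 ≤ m by omega)
    have e1 := hN p (by omega) a ha
    have e2 := pow_le_sat V _ (pow_le_pow_left' hB _ hb)
    have := sat_mul_mem e2 e1
    rw [show n + t = n + 1 - (p + 1) + (p + t) by omega, show a * b * c = b * (a * c) by ring]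
    exact this
  · obtain ⟨p, hp⟩ := Nat.exists_eq_add_of_le' (show 1 ≤ n + 1 - m by omega)
    rw [hp] at hb
    have e1 := hM p (by omega) b hb
    have e2 := pow_le_sat V _ (pow_le_pow_left' hA _ ha)
    have := sat_mul_mem e2 e1
    rw [show n + t = m + (p + t) by omega, mul_assoc]
    exact this

/-- If `ℓ q` has coefficients in degree `t` of the saturation, then large powers of `V` move those of
`q` one degree lower than expected. -/
lemma dm_all {z : σ → F} (hz : V = Submodule.span k (Set.range z)) {t : ℕ} {q : MvPolynomial σ F}
    (h : ∀ β, coeff β (linForm z * q) ∈ sat V t) (α : σ →₀ ℕ) :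
    ∃ N, ∀ n, N ≤ n → ∀ y ∈ V ^ (n + 1), y * coeff α q ∈ sat V (n + t) := by
  have hzV : ∀ i, z i ∈ V := fun i => hz ▸ Submodule.subset_span ⟨i, rfl⟩
  suffices ∀ s : Finset σ, ∃ N, ∀ n, N ≤ n →
      ∀ y ∈ (Submodule.span k (z '' s)) ^ (n + 1), y * coeff α q ∈ sat V (n + t) by
    have := this Finset.univ
    rwa [Finset.coe_univ, Set.image_univ, ← hz] at this
  intro s
  induction s using Finset.induction_on with
  | empty => exact ⟨0, fun n _ y hy => by
      have : y = 0 := by simpa [pow_succ] using hy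
      simp [this]⟩
  | insert i s _ ih =>
    rw [Finset.coe_insert, Set.image_insert_eq, Submodule.span_insert]
    refine dm_sup ?_ ?_ ?_ ih
    · rw [Submodule.span_singleton_le_iff_mem]; exact hzV i
    · rw [Submodule.span_le]; rintro _ ⟨l, _, rfl⟩; exact hzV l
    · let d := q.totalDegree
      refine ⟨d, fun n hn y hy => ?_⟩
      rw [Submodule.span_pow, Set.singleton_pow, Submodule.mem_span_singleton] at hy
      obtain ⟨c, rfl⟩ := hy
      have := dm_single hzV h i d (fun β hβ => ?_) n α (by omega)
      · rw [smul_mul_assoc, add_comm n t]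
        exact Submodule.smul_mem _ _ this
      · by_contra hne
        have h1 := le_totalDegree (mem_support_iff.2 hne)
        have h2 : β i ≤ β.sum fun _ e => e := by
          by_cases hb : β i = 0
          · omega
          · exact Finset.single_le_sum (f := fun i => β i) (fun _ _ => Nat.zero_le _)
              (Finsupp.mem_support_iff.2 hb)
        omega

/-- If `ℓ q` has coefficients in degree `t + 1` of the saturation, then `q` has coefficients in
degree `t`. -/
lemma coeff_mem_sat {z : σ → F} (hz : V = Submodule.span k (Set.range z)) {t : ℕ}
    {q : MvPolynomial σ F} (h : ∀ β, coeff β (linForm z * q) ∈ sat V (t + 1)) (α : σ →₀ ℕ) :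
    coeff α q ∈ sat V t := by
  obtain ⟨N, hN⟩ := dm_all hz h α
  have hV : V.FG := hz ▸ Submodule.fg_span (Set.finite_range z)
  refine mem_sat_of_pow hV (n := N + 1) fun y hy => ?_
  rw [mul_comm, show N + 1 + t = N + (t + 1) by ring]
  exact hN N le_rfl y hy

end DedekindMertens
end SurfGenus

/-! ### Hilbert functions of generic hyperplane sections -/

namespace SurfGenus
set_option linter.unusedSectionVars false

section BaseChange
open TensorProduct
variable {k F K : Type} [Field k] [Field F] [Field K] [Algebra k F] [Algebra k K]

/-- If all finite-dimensional subspaces of `S` have dimension at most `n`, then `S` itself is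
finite-dimensional, of dimension at most `n`. -/
lemma finite_of_bounded {S : Submodule k F} {n : ℕ}
    (h : ∀ W : Submodule k F, W ≤ S → W.FG → Module.finrank k W ≤ n) :
    S.FG ∧ Module.finrank k S ≤ n := by
  have hr : Module.rank k S ≤ n := by
    refine rank_le fun s hs => ?_
    have h2 : LinearIndependent k fun i : s => ((i : S) : F) :=
      hs.map' S.subtype (Submodule.ker_subtype S)
    have h3 := finrank_span_eq_card h2
    rw [Fintype.card_coe] at h3
    rw [← h3]
    refine h _ ?_ (Submodule.fg_span (Set.finite_range _))
    rw [Submodule.span_le]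
    rintro _ ⟨i, rfl⟩
    exact i.1.2
  have hf : Module.Finite k S := Module.rank_lt_aleph0_iff.1 (hr.trans_lt (Cardinal.natCast_lt_aleph0))
  refine ⟨Module.Finite.iff_fg.1 hf, ?_⟩
  rw [← Module.finrank_eq_rank] at hr
  exact_mod_cast hr

lemma finrank_baseChange_sub (W : Submodule k F) :
    Module.finrank K (W.baseChange K) = Module.finrank k W := by
  have hinj : Function.Injective (W.subtype.baseChange K) :=
    Module.Flat.lTensor_preserves_injective_linearMap W.subtype W.subtype_injective
  rw [Submodule.baseChange, LinearMap.finrank_range_of_inj hinj, Module.finrank_baseChange]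

lemma fg_baseChange {W : Submodule k F} (hW : W.FG) : (W.baseChange K).FG := by
  have : Module.Finite k W := Module.Finite.iff_fg.2 hW
  exact Module.Finite.iff_fg.1 (Module.Finite.range (W.subtype.baseChange K))

lemma baseChange_mul (W₁ W₂ : Submodule k F) :
    (W₁ * W₂).baseChange K = W₁.baseChange K * W₂.baseChange K := by
  conv_lhs => rw [← Submodule.span_eq W₁, ← Submodule.span_eq W₂, Submodule.span_mul_span]
  conv_rhs => rw [← Submodule.span_eq W₁, ← Submodule.span_eq W₂]
  rw [Submodule.baseChange_span, Submodule.baseChange_span, Submodule.baseChange_span,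
    Submodule.span_mul_span]
  congr 1
  exact Set.image_mul (Algebra.TensorProduct.includeRight : F →ₐ[k] K ⊗[k] F)

lemma baseChange_pow (W : Submodule k F) (n : ℕ) :
    (W ^ n).baseChange K = (W.baseChange K) ^ n := by
  induction n with
  | zero =>
    rw [pow_zero, pow_zero, Submodule.one_eq_span, Submodule.one_eq_span,
      Submodule.baseChange_span, Set.image_singleton]
    rfl
  | succ n ih => rw [pow_succ, pow_succ, baseChange_mul, ih]

end BaseChange

section Ext
variable {k F K F' : Type} [Field k] [Field F] [Field K] [Field F'] [Algebra k F] [Algebra k K]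
  [Algebra K F'] [Algebra F F'] 

variable (K F') in
/-- The `K`-span in `F'` of a `k`-subspace of `F`. -/
def ext (W : Submodule k F) : Submodule K F' := Submodule.span K (algebraMap F F' '' W)

lemma mem_ext {W : Submodule k F} {x : F} (hx : x ∈ W) : algebraMap F F' x ∈ ext K F' W :=
  Submodule.subset_span ⟨x, hx, rfl⟩

lemma ext_mono {W₁ W₂ : Submodule k F} (h : W₁ ≤ W₂) : ext K F' W₁ ≤ ext K F' W₂ :=
  Submodule.span_mono (Set.image_mono h)

variable [Algebra k F'] [IsScalarTower k F F'] [IsScalarTower k K F']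

lemma ext_span (s : Set F) :
    ext K F' (Submodule.span k s) = Submodule.span K (algebraMap F F' '' s) := by
  refine le_antisymm (Submodule.span_le.2 ?_)
    (Submodule.span_mono (Set.image_mono Submodule.subset_span))
  rintro _ ⟨x, hx, rfl⟩
  refine Submodule.span_induction (p := fun x _ => algebraMap F F' x ∈
    Submodule.span K (algebraMap F F' '' s)) ?_ ?_ ?_ ?_ hx
  · intro x hx; exact Submodule.subset_span ⟨x, hx, rfl⟩
  · simp
  · intro x y _ _ hx hy; rw [map_add]; exact add_mem hx hy
  · intro c x _ hx
    rw [Algebra.smul_def, map_mul, ← IsScalarTower.algebraMap_apply,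
      IsScalarTower.algebraMap_apply k K F', ← Algebra.smul_def]
    exact Submodule.smul_mem _ _ hx

lemma ext_mul (W₁ W₂ : Submodule k F) : ext K F' (W₁ * W₂) = ext K F' W₁ * ext K F' W₂ := by
  conv_lhs => rw [← Submodule.span_eq W₁, ← Submodule.span_eq W₂, Submodule.span_mul_span]
  rw [ext_span, ext, ext, Submodule.span_mul_span, Set.image_mul]

lemma ext_pow (W : Submodule k F) (n : ℕ) : ext K F' (W ^ n) = ext K F' W ^ n := by
  induction n with
  | zero =>
    rw [pow_zero, pow_zero, Submodule.one_eq_span, Submodule.one_eq_span, ext_span]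
    simp
  | succ n ih => rw [pow_succ, pow_succ, ext_mul, ih]

lemma fg_ext {W : Submodule k F} (hW : W.FG) : (ext K F' W).FG := by
  obtain ⟨s, rfl⟩ := hW
  rw [ext_span]
  exact Submodule.fg_span (s.finite_toSet.image _)

lemma mem_sat_ext {V : Submodule k F} {t : ℕ} {x : F} (hx : x ∈ sat V t) :
    algebraMap F F' x ∈ sat (ext K F' V) t := by
  obtain ⟨n, hn⟩ := hx
  refine ⟨n, fun y hy => ?_⟩
  rw [← ext_pow] at hy ⊢
  refine Submodule.span_induction (p := fun y _ => algebraMap F F' x * y ∈ ext K F' (V ^ (n + t)))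
    ?_ ?_ ?_ ?_ hy
  · rintro _ ⟨w, hw, rfl⟩
    rw [← map_mul]; exact mem_ext (hn w hw)
  · simp
  · intro x y _ _ hx hy; rw [mul_add]; exact add_mem hx hy
  · intro c x _ hx; rw [mul_smul_comm]; exact Submodule.smul_mem _ _ hx

end Ext

open MvPolynomial TensorProduct

/-- A generic linear section of `(k, F, z)`: `K` is the field of rational functions over `k` in
variables `u_i`, and `F'` is the fraction field of `F[u] / (∑ z_i u_i)`, in which `K` embeds. -/
structure GenSec (k F K F' σ : Type) [Field k] [Field F] [Field K] [Field F'] [Algebra k F]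
    [Algebra k K] [Algebra K F'] [Algebra F F'] [Fintype σ] (z : σ → F) where
  /-- The inclusion of the polynomial ring in the rational function field. -/
  ψ : MvPolynomial σ k →ₐ[k] K
  /-- The projection to the coordinate ring of the universal hyperplane section. -/
  φ : MvPolynomial σ F →ₐ[F] F'
  ψ_inj : Function.Injective ψ
  ψ_frac : ∀ x : K, ∃ p q, q ≠ 0 ∧ ψ q * x = ψ p
  compat : ∀ i, φ (X i) = algebraMap K F' (ψ (X i))
  φ_lin : φ (linForm z) = 0
  ker : ∀ p, φ p = 0 → linForm z ∣ p
  φ_frac : ∀ x : F', ∃ p q, φ q ≠ 0 ∧ φ q * x = φ p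

namespace GenSec
variable {k F K F' σ : Type} [Field k] [Field F] [Field K] [Field F'] [Algebra k F]
    [Algebra k K] [Algebra K F'] [Algebra F F'] [Algebra k F'] [IsScalarTower k F F']
    [IsScalarTower k K F'] [Fintype σ] [DecidableEq σ] {z : σ → F} (G : GenSec k F K F' σ z)

/-- The map `F[u] → K ⊗ F`, a localisation at the nonzero elements of `k[u]`. -/
noncomputable def toT : MvPolynomial σ F →+* K ⊗[k] F :=
  eval₂Hom (Algebra.TensorProduct.includeRight : F →ₐ[k] K ⊗[k] F).toRingHom
    (fun i => G.ψ (X i) ⊗ₜ[k] (1 : F))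

/-- Specialisation `K ⊗ F → F'` to the universal hyperplane section. -/
noncomputable def rho : K ⊗[k] F →ₐ[K] F' :=
  Algebra.TensorProduct.lift (Algebra.ofId K F') (IsScalarTower.toAlgHom k F F')
    (fun _ _ => Commute.all _ _)

lemma rho_tmul (a : K) (x : F) :
    rho (k := k) (K := K) (F' := F') (a ⊗ₜ[k] x) = algebraMap K F' a * algebraMap F F' x := by
  simp [rho, Algebra.ofId_apply]

lemma toT_monomial (α : σ →₀ ℕ) (c : F) :
    G.toT (monomial α c) = G.ψ (monomial α 1) ⊗ₜ[k] c := by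
  have h : ∀ α : σ →₀ ℕ, (α.prod fun i e => (G.ψ (X i) ⊗ₜ[k] (1 : F)) ^ e)
      = G.ψ (monomial α 1) ⊗ₜ[k] (1 : F) := by
    intro α
    rw [monomial_eq, map_one, one_mul]
    simp only [Finsupp.prod, map_prod, map_pow]
    rw [← Algebra.TensorProduct.includeLeft_apply (S := k), map_prod]
    simp
  rw [toT, coe_eval₂Hom, eval₂_monomial, h]
  simp

lemma toT_eq_sum (p : MvPolynomial σ F) :
    G.toT p = ∑ α ∈ p.support, G.ψ (monomial α 1) ⊗ₜ[k] coeff α p := by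
  conv_lhs => rw [p.as_sum]
  rw [map_sum]
  exact Finset.sum_congr rfl fun α _ => G.toT_monomial α _

lemma toT_map (g : MvPolynomial σ k) : G.toT (map (algebraMap k F) g) = G.ψ g ⊗ₜ[k] (1 : F) := by
  induction g using MvPolynomial.induction_on' with
  | monomial α c =>
    rw [map_monomial, toT_monomial, Algebra.algebraMap_eq_smul_one, ← smul_tmul, ← map_smul,
      smul_monomial, smul_eq_mul, mul_one]
  | add p q hp hq => rw [map_add, map_add, hp, hq, map_add, TensorProduct.add_tmul]

lemma toT_map_mul (g : MvPolynomial σ k) (p : MvPolynomial σ F) :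
    G.toT (map (algebraMap k F) g * p) = G.ψ g • G.toT p := by
  rw [map_mul, toT_map, Algebra.smul_def]; rfl

lemma φ_map (g : MvPolynomial σ k) :
    G.φ (map (algebraMap k F) g) = algebraMap K F' (G.ψ g) := by
  induction g using MvPolynomial.induction_on with
  | C c =>
    rw [map_C, ← algebraMap_eq, ← algebraMap_eq, AlgHom.commutes, AlgHom.commutes,
      ← IsScalarTower.algebraMap_apply, ← IsScalarTower.algebraMap_apply]
  | add p q hp hq => simp only [map_add, hp, hq]
  | mul_X p i hp => simp only [map_mul, hp, map_X, G.compat]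

lemma rho_toT (p : MvPolynomial σ F) : rho (G.toT p) = G.φ p := by
  induction p using MvPolynomial.induction_on with
  | C c =>
    rw [toT, coe_eval₂Hom, eval₂_C, ← algebraMap_eq, AlgHom.commutes]
    simp [rho_tmul]
  | add p q hp hq => simp only [map_add, hp, hq]
  | mul_X p i hp =>
    rw [map_mul, map_mul, map_mul, hp, G.compat]
    simp [toT, rho_tmul]

lemma toT_inj : Function.Injective G.toT := by
  rw [injective_iff_map_eq_zero]
  intro p hp
  rw [toT_eq_sum] at hp
  ext α
  rw [coeff_zero]
  by_contra hne
  obtain ⟨f, hf⟩ := Module.Projective.exists_dual_ne_zero k hne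
  have h1 := congrArg (fun y => TensorProduct.rid k K (f.lTensor K y)) hp
  simp only [map_sum, LinearMap.lTensor_tmul, TensorProduct.rid_tmul, map_zero] at h1
  have h2 : G.ψ (∑ β ∈ p.support, monomial β (f (coeff β p))) = 0 := by
    rw [map_sum, ← h1]
    refine Finset.sum_congr rfl fun β _ => ?_
    rw [← map_smul, smul_monomial, smul_eq_mul, mul_one]
  have h3 := congrArg (coeff α) (G.ψ_inj (h2.trans (map_zero _).symm))
  simp only [coeff_sum, coeff_monomial, coeff_zero, Finset.sum_ite_eq'] at h3
  rw [if_pos (mem_support_iff.2 hne)] at h3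
  exact hf h3

lemma coeff_map_mul_mem {W : Submodule k F} {p : MvPolynomial σ F} (hp : ∀ α, coeff α p ∈ W)
    (g : MvPolynomial σ k) (α : σ →₀ ℕ) : coeff α (map (algebraMap k F) g * p) ∈ W := by
  rw [coeff_mul]
  refine sum_mem fun x _ => ?_
  rw [coeff_map, ← Algebra.smul_def]
  exact W.smul_mem _ (hp _)

lemma toT_mem_baseChange {W : Submodule k F} {p : MvPolynomial σ F} (hp : ∀ α, coeff α p ∈ W) :
    G.toT p ∈ W.baseChange K := by
  rw [toT_eq_sum]
  exact sum_mem fun α _ => Submodule.tmul_mem_baseChange_of_mem _ (hp α)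

/-- Clearing denominators. -/
lemma exists_clear {W : Submodule k F} {y : K ⊗[k] F} (hy : y ∈ W.baseChange K) :
    ∃ g ≠ 0, ∃ p, (∀ α, coeff α p ∈ W) ∧ G.ψ g • y = G.toT p := by
  rw [Submodule.baseChange_eq_span] at hy
  induction hy using Submodule.span_induction with
  | mem y hy =>
    obtain ⟨x, hx, rfl⟩ := hy
    refine ⟨1, one_ne_zero, monomial 0 x, fun α => ?_, ?_⟩
    · rw [coeff_monomial]; split_ifs
      · exact hx
      · exact W.zero_mem
    · rw [toT_monomial]; simp
  | zero => exact ⟨1, one_ne_zero, 0, by simp, by simp⟩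
  | add y y' _ _ h h' =>
    obtain ⟨g, hg, p, hp, e⟩ := h
    obtain ⟨g', hg', p', hp', e'⟩ := h'
    refine ⟨g' * g, mul_ne_zero hg' hg, map (algebraMap k F) g' * p + map (algebraMap k F) g * p',
      fun α => ?_, ?_⟩
    · rw [coeff_add]; exact add_mem (coeff_map_mul_mem hp _ _) (coeff_map_mul_mem hp' _ _)
    · rw [map_add, toT_map_mul, toT_map_mul, ← e, ← e', map_mul, smul_add, mul_smul, mul_comm,
        mul_smul]
  | smul c y _ h =>
    obtain ⟨g, hg, p, hp, e⟩ := h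
    obtain ⟨a, b, hb, hc⟩ := G.ψ_frac c
    refine ⟨b * g, mul_ne_zero hb hg, map (algebraMap k F) a * p, coeff_map_mul_mem hp _, ?_⟩
    rw [toT_map_mul, ← e, ← hc, map_mul, smul_smul, smul_smul]
    congr 1; ring

lemma ψ_ne_zero {g : MvPolynomial σ k} (hg : g ≠ 0) : G.ψ g ≠ 0 := fun h =>
  hg (G.ψ_inj (h.trans (map_zero _).symm))

lemma exists_clear' (y : K ⊗[k] F) : ∃ g ≠ 0, ∃ p, G.ψ g • y = G.toT p := by
  obtain ⟨g, hg, p, _, h⟩ := G.exists_clear (W := ⊤) (y := y) (by simp)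
  exact ⟨g, hg, p, h⟩

lemma mem_of_tmul_mem (G : GenSec k F K F' σ z) {W : Submodule k F} {x : F} (h : (1 : K) ⊗ₜ[k] x ∈ W.baseChange K) :
    x ∈ W := by
  obtain ⟨g, hg, p, hp, e⟩ := G.exists_clear h
  have h1 : G.toT (map (algebraMap k F) g * monomial 0 x) = G.toT p := by
    rw [toT_map_mul, ← e, toT_monomial]; simp
  have h2 := G.toT_inj h1
  obtain ⟨α, hα⟩ := ne_zero_iff.1 hg
  have h3 := hp α
  rw [← h2, show (monomial 0 x : MvPolynomial σ F) = C x from rfl, mul_comm, coeff_C_mul, coeff_map, mul_comm,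
    ← Algebra.smul_def] at h3
  exact (W.smul_mem_iff hα).1 h3

/-- The universal linear form in `K ⊗ F`. -/
noncomputable def lT : K ⊗[k] F := G.toT (linForm z)

lemma lT_eq : G.lT = ∑ i, G.ψ (X i) ⊗ₜ[k] z i := by
  rw [lT, linForm, map_sum]
  refine Finset.sum_congr rfl fun i _ => ?_
  rw [C_mul_X_eq_monomial, toT_monomial]; rfl

lemma lT_mem : G.lT ∈ (Submodule.span k (Set.range z)).baseChange K := by
  rw [lT_eq]
  exact sum_mem fun i _ => Submodule.tmul_mem_baseChange_of_mem _ (Submodule.subset_span ⟨i, rfl⟩)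

lemma rho_lT : rho G.lT = (0 : F') := by rw [lT, rho_toT, G.φ_lin]

/-- The kernel of the specialisation is generated by the universal linear form. -/
lemma exists_of_rho_eq_zero {y : K ⊗[k] F} (h : rho y = (0 : F')) : ∃ y', y = G.lT * y' := by
  obtain ⟨g, hg, p, e⟩ := G.exists_clear' y
  have h1 : G.φ p = 0 := by rw [← rho_toT, ← e, map_smul, h, smul_zero]
  obtain ⟨q, rfl⟩ := G.ker p h1
  refine ⟨(G.ψ g)⁻¹ • G.toT q, ?_⟩
  rw [mul_smul_comm, lT, ← map_mul, ← e, inv_smul_smul₀ (G.ψ_ne_zero hg)]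

lemma mem_of_lT_mul_mem {W U : Submodule k F}
    (hU : ∀ q, (∀ β, coeff β (linForm z * q) ∈ W) → ∀ α, coeff α q ∈ U)
    {y : K ⊗[k] F} (h : G.lT * y ∈ W.baseChange K) : y ∈ U.baseChange K := by
  obtain ⟨g, hg, q, e⟩ := G.exists_clear' y
  obtain ⟨f, hf, p, hp, e'⟩ := G.exists_clear h
  have h1 : G.toT (linForm z * (map (algebraMap k F) f * q)) =
      G.toT (map (algebraMap k F) g * p) := by
    rw [map_mul, toT_map_mul, toT_map_mul, ← e, ← e', ← lT, mul_smul_comm, mul_smul_comm,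
      smul_comm]
  have h2 := hU (map (algebraMap k F) f * q) (fun β => by
    rw [G.toT_inj h1]; exact coeff_map_mul_mem hp _ _)
  have h3 := G.toT_mem_baseChange h2
  rw [toT_map_mul, ← e] at h3
  exact ((U.baseChange K).smul_mem_iff (G.ψ_ne_zero hg)).1
    (((U.baseChange K).smul_mem_iff (G.ψ_ne_zero hf)).1 h3)

lemma lT_mul_inj (hz : ∃ i, z i ≠ 0) : Function.Injective (LinearMap.mulLeft K G.lT) := by
  rw [← LinearMap.ker_eq_bot, LinearMap.ker_eq_bot']
  intro y hy
  have hl : linForm z ≠ 0 := by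
    obtain ⟨i, hi⟩ := hz
    intro h
    have := congrArg (coeff (Finsupp.single i 1)) h
    simp only [linForm, coeff_sum, coeff_C_mul, coeff_X, coeff_zero] at this
    rw [Finset.sum_eq_single i] at this
    · simp [hi] at this
    · intro j _ hj
      simp [Finsupp.single_left_inj, hj]
    · simp
  have h1 := G.mem_of_lT_mul_mem (W := ⊥) (U := ⊥) (y := y) (fun q hq => by
    have : linForm z * q = 0 := by ext β; simpa using hq β
    rcases mul_eq_zero.1 this with h | h
    · exact absurd h hl
    · simp [h]) (by
      rw [LinearMap.mulLeft_apply] at hy; rw [hy]; exact Submodule.zero_mem _)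
  simpa using h1

lemma map_rho (W : Submodule k F) :
    (W.baseChange K).map (rho (F' := F')).toLinearMap = ext K F' W := by
  rw [Submodule.baseChange_eq_span, Submodule.map_span, ext]
  congr 1
  ext x
  simp [rho_tmul]

lemma finrank_map_add {M N : Type} [AddCommGroup M] [AddCommGroup N] [Module K M] [Module K N]
    (f : M →ₗ[K] N) (W : Submodule K M) (hW : W.FG) :
    Module.finrank K (W.map f) + Module.finrank K (W ⊓ LinearMap.ker f : Submodule K M)
      = Module.finrank K W := by
  have : Module.Finite K W := Module.Finite.iff_fg.2 hW
  have h := LinearMap.finrank_range_add_finrank_ker (f.domRestrict W)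
  rw [LinearMap.range_domRestrict] at h
  rw [← h]
  congr 1
  rw [LinearMap.ker_domRestrict, ← finrank_map_inj _ W.subtype_injective]
  rw [Submodule.map_comap_subtype]

lemma finrank_split (W : Submodule k F) (hW : W.FG) :
    Module.finrank K (ext K F' W) + Module.finrank K
      (W.baseChange K ⊓ LinearMap.ker (rho (F' := F')).toLinearMap : Submodule K (K ⊗[k] F))
      = Module.finrank k W := by
  rw [← map_rho, finrank_map_add _ _ (fg_baseChange hW), finrank_baseChange_sub]


lemma finrank_lower (G : GenSec k F K F' σ z) (hz : ∃ i, z i ≠ 0) (W U : Submodule k F) (hW : W.FG)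
    (h : Submodule.span k (Set.range z) * U ≤ W) :
    Module.finrank k U + Module.finrank K (ext K F' W) ≤ Module.finrank k W := by
  rw [← finrank_split (K := K) (F' := F') W hW, add_comm, ← finrank_baseChange_sub (K := K) U,
    ← finrank_map_inj _ (G.lT_mul_inj hz)]
  have : Module.Finite K (W.baseChange K) := Module.Finite.iff_fg.2 (fg_baseChange hW)
  have hf : Module.Finite K (W.baseChange K ⊓ LinearMap.ker (rho (F' := F')).toLinearMap :
      Submodule K (K ⊗[k] F)) := Submodule.finiteDimensional_of_le inf_le_left
  refine Nat.add_le_add_left (Submodule.finrank_mono ?_) _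
  rintro _ ⟨y, hy, rfl⟩
  refine ⟨Submodule.baseChange_mono K h ?_, ?_⟩
  · rw [baseChange_mul]
    exact Submodule.mul_mem_mul G.lT_mem hy
  · simp [LinearMap.mem_ker, G.rho_lT]

lemma finrank_upper (G : GenSec k F K F' σ z) (W U : Submodule k F) (hW : W.FG) (hUf : U.FG)
    (hU : ∀ q, (∀ β, coeff β (linForm z * q) ∈ W) → ∀ α, coeff α q ∈ U) :
    Module.finrank k W ≤ Module.finrank K (ext K F' W) + Module.finrank k U := by
  rw [← finrank_split (K := K) (F' := F') W hW, ← finrank_baseChange_sub (K := K) U]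
  refine Nat.add_le_add_left ?_ _
  have : Module.Finite K (U.baseChange K) := Module.Finite.iff_fg.2 (fg_baseChange hUf)
  refine (Submodule.finrank_mono (t := (U.baseChange K).map (LinearMap.mulLeft K G.lT)) ?_).trans
    (Submodule.finrank_map_le _ _)
  rintro y ⟨hy, hy0⟩
  obtain ⟨y', rfl⟩ := G.exists_of_rho_eq_zero hy0
  exact ⟨y', G.mem_of_lT_mul_mem hU hy, rfl⟩

variable {V : Submodule k F}

lemma fg_span_range (hV : V = Submodule.span k (Set.range z)) : V.FG :=
  hV ▸ Submodule.fg_span (Set.finite_range z)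

/-- Multiplication by the universal linear form embeds degree `t` of the coordinate ring in the kernel
of the restriction to the section in degree `t + 1`. -/
lemma hilb_lower (G : GenSec k F K F' σ z) (hV : V = Submodule.span k (Set.range z))
    (hz : ∃ i, z i ≠ 0) (t : ℕ) :
    Module.finrank k (V ^ t : Submodule k F)
      + Module.finrank K (ext K F' V ^ (t + 1) : Submodule K F')
      ≤ Module.finrank k (V ^ (t + 1) : Submodule k F) := by
  rw [← ext_pow]
  refine G.finrank_lower hz _ _ ((fg_span_range hV).pow _) ?_
  rw [← hV, pow_succ']

/-- Degree `t + 1` elements restricting to zero on the section are multiples of the linear form by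
elements of degree `t` of the saturation. -/
lemma hilb_upper (G : GenSec k F K F' σ z) (hV : V = Submodule.span k (Set.range z)) (t : ℕ)
    (hs : (sat V t).FG) :
    Module.finrank k (V ^ (t + 1) : Submodule k F) ≤
      Module.finrank K (ext K F' V ^ (t + 1) : Submodule K F') + Module.finrank k (sat V t) := by
  rw [← ext_pow]
  exact G.finrank_upper _ _ ((fg_span_range hV).pow _) hs fun q hq =>
    coeff_mem_sat hV fun β => pow_le_sat V _ (hq β)

lemma ext_sat_le (V : Submodule k F) (t : ℕ) : ext K F' (sat V t) ≤ sat (ext K F' V) t := by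
  rw [ext, Submodule.span_le]
  rintro _ ⟨x, hx, rfl⟩
  exact mem_sat_ext hx

/-- The exact sequence `H⁰(𝒪(t)) → H⁰(𝒪(t + 1)) → H⁰(𝒪_H(t + 1))`, with saturations in the role of the
spaces of global sections. -/
lemma sat_upper (G : GenSec k F K F' σ z) (hV : V = Submodule.span k (Set.range z)) (t : ℕ)
    (hs : (sat V t).FG) (hs' : (sat (ext K F' V) (t + 1)).FG) :
    (sat V (t + 1)).FG ∧ Module.finrank k (sat V (t + 1)) ≤
      Module.finrank K (sat (ext K F' V) (t + 1)) + Module.finrank k (sat V t) := by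
  refine finite_of_bounded fun W hW hWf => ?_
  refine (G.finrank_upper W (sat V t) hWf hs fun q hq => coeff_mem_sat hV fun β => hW (hq β)).trans
    (Nat.add_le_add_right ?_ _)
  have : Module.Finite K (sat (ext K F' V) (t + 1)) := Module.Finite.iff_fg.2 hs'
  exact Submodule.finrank_mono ((ext_mono hW).trans (ext_sat_le V (t + 1)))

/-- Multiplication by the universal linear form is injective, and its image restricts to zero on the
section. -/
lemma sat_lower (G : GenSec k F K F' σ z) (hV : V = Submodule.span k (Set.range z))
    (hz : ∃ i, z i ≠ 0) (t : ℕ) (hs : (sat V (t + 1)).FG) :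
    Module.finrank k (sat V t) + Module.finrank K (ext K F' (sat V (t + 1)))
      ≤ Module.finrank k (sat V (t + 1)) := by
  refine G.finrank_lower hz _ _ hs ?_
  rw [← hV, add_comm]
  exact (mul_le_mul_left (le_sat_one V) _).trans (sat_mul V 1 t)

/-- If the section is generated in degree `t + 1` then new elements of the saturation in this
degree come from lower degree. -/
lemma sat_le_of_section (G : GenSec k F K F' σ z) (hV : V = Submodule.span k (Set.range z)) (t : ℕ)
    (h : sat (ext K F' V) (t + 1) ≤ ext K F' V ^ (t + 1)) :
    sat V (t + 1) ≤ V ^ (t + 1) ⊔ V * sat V t := by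
  intro x hx
  have h1 := h (mem_sat_ext (K := K) (F' := F') hx)
  rw [← ext_pow, ← map_rho] at h1
  obtain ⟨w, hw, hwx⟩ := h1
  have h2 : rho (k := k) (K := K) (F' := F') ((1 : K) ⊗ₜ[k] x - w) = 0 := by
    rw [map_sub, rho_tmul, map_one, one_mul, ← hwx]; simp
  obtain ⟨y, hy⟩ := G.exists_of_rho_eq_zero h2
  have h3 : y ∈ (sat V t).baseChange K := by
    refine G.mem_of_lT_mul_mem (W := sat V (t + 1)) (fun q hq => coeff_mem_sat hV hq) ?_
    rw [← hy]
    exact sub_mem (Submodule.tmul_mem_baseChange_of_mem _ hx)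
      (Submodule.baseChange_mono K (pow_le_sat V _) hw)
  refine G.mem_of_tmul_mem ?_
  rw [show (1 : K) ⊗ₜ[k] x = w + G.lT * y by rw [← hy]; abel]
  refine add_mem (Submodule.baseChange_mono K le_sup_left hw)
    (Submodule.baseChange_mono K le_sup_right ?_)
  rw [baseChange_mul]
  exact Submodule.mul_mem_mul (hV ▸ G.lT_mem) h3

end GenSec
end SurfGenus

/-! ### Existence of generic hyperplane sections -/

namespace SurfGenus
set_option linter.unusedSectionVars false
open MvPolynomial

section Exist
variable {k F ι : Type} [Field k] [Field F] [Algebra k F] [Fintype ι] [DecidableEq ι]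

/-- If `c V ^ (n + 1)` lies in degree `n` of the saturation, `V` consists of algebraic elements. -/
lemma isIntegral_of_mul_pow {V : Submodule k F} (hV : V.FG) (h1 : (1 : F) ∈ V) {c : F} (hc : c ≠ 0)
    {n : ℕ} (h : ∀ y ∈ V ^ (n + 1), y * c ∈ sat V n) {x : F} (hx : x ∈ V) : IsIntegral k x := by
  have hfg : ((V ^ (n + 1)).map (LinearMap.mulRight k c)).FG := (hV.pow _).map _
  obtain ⟨m, hm⟩ := exists_mul_pow_le (t := n) ((V ^ (n + 1)).map (LinearMap.mulRight k c)) hfg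
    (by rintro _ ⟨y, hy, rfl⟩; exact h y hy)
  have hle : (V ^ (n + 1 + m)).map (LinearMap.mulRight k c) ≤ V ^ (m + n) := by
    refine le_trans ?_ (hm m le_rfl)
    rw [pow_add]
    rintro _ ⟨y, hy, rfl⟩
    refine Submodule.mul_induction_on hy ?_ ?_
    · intro a ha b hb
      rw [LinearMap.mulRight_apply, mul_right_comm]
      exact Submodule.mul_mem_mul ⟨a, ha, rfl⟩ hb
    · intro a b ha hb
      rw [map_add]; exact add_mem ha hb
  have : Module.Finite k (V ^ (m + n) : Submodule k F) := Module.Finite.iff_fg.2 (hV.pow _)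
  have : Module.Finite k (V ^ (n + 1 + m) : Submodule k F) := Module.Finite.iff_fg.2 (hV.pow _)
  have h2 := Submodule.finrank_mono hle
  rw [finrank_map_inj _ (mul_left_injective₀ hc : Function.Injective (LinearMap.mulRight k c))] at h2
  have h3 : V ^ (m + n) = V ^ (n + 1 + m) :=
    Submodule.eq_of_le_of_finrank_le (pow_mono' h1 (by omega)) h2
  refine isIntegral_of_smul_mem_submodule (N := V ^ (m + n)) ?_ (hV.pow _) x ?_
  · intro h0
    have := Submodule.pow_mem_pow V h1 (m + n)
    rw [h0, one_pow] at this
    exact one_ne_zero this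
  · intro y hy
    rw [h3, show n + 1 + m = (m + n) + 1 by ring, pow_succ']
    exact Submodule.mul_mem_mul hx hy

variable (z : Option ι → F)

/-- Substitution of `u_∞ = -∑ z_i u_i` in polynomials in the `u`'s. -/
noncomputable def substNone : MvPolynomial (Option ι) F →ₐ[F] MvPolynomial ι F :=
  aeval (fun o => o.elim (-∑ i, C (z (some i)) * X i) X)

variable {z}

lemma linForm_option (hz : z none = 1) :
    linForm z = X none + ∑ i, C (z (some i)) * X (some i) := by
  rw [linForm, Fintype.sum_option, hz, map_one, one_mul]

/-- The kernel of the substitution is generated by the linear form `∑ z_i u_i`. -/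
lemma substNone_ker (hz : z none = 1) {p : MvPolynomial (Option ι) F} (hp : substNone z p = 0) :
    linForm z ∣ p := by
  rw [← Ideal.mem_span_singleton, ← Ideal.Quotient.eq_zero_iff_mem]
  set I := Ideal.span {linForm z}
  have : ((Ideal.Quotient.mkₐ F I).comp (rename some)).comp (substNone z)
      = Ideal.Quotient.mkₐ F I := by
    ext o
    cases o with
    | none =>
      have h0 : Ideal.Quotient.mkₐ F I (linForm z) = 0 :=
        Ideal.Quotient.eq_zero_iff_mem.2 (Ideal.subset_span rfl)
      rw [linForm_option hz, map_add, map_sum] at h0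
      simp only [map_mul] at h0
      simp only [AlgHom.comp_apply, substNone, aeval_X, Option.elim, map_neg, map_sum, map_mul,
        rename_X, rename_C]
      exact (eq_neg_of_add_eq_zero_left h0).symm
    | some i => simp [substNone]
  have h2 := AlgHom.congr_fun this p
  rw [AlgHom.comp_apply, hp, map_zero] at h2
  exact h2.symm

/-- A relation between the coefficients `u` over `k` would be a multiple of the linear form. By
the Dedekind–Mertens argument this makes all `z_i` algebraic. -/
lemma map_subst_inj (hz : z none = 1) {i : Option ι} (hi : Transcendental k (z i)) :
    Function.Injective ((substNone z).toRingHom.comp (map (algebraMap k F))) := by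
  rw [injective_iff_map_eq_zero]
  intro g hg
  by_contra hg0
  obtain ⟨q, hq⟩ := substNone_ker hz hg
  have hq0 : q ≠ 0 := by
    rintro rfl
    rw [mul_zero] at hq
    exact hg0 (map_injective _ (algebraMap k F).injective (by rw [hq, map_zero]))
  obtain ⟨α, hα⟩ := ne_zero_iff.1 hq0
  set V := Submodule.span k (Set.range z) with hV
  obtain ⟨N, hN⟩ := dm_all (k := k) hV (t := 0) (q := q) (fun β => by
    rw [← hq, coeff_map]
    refine pow_le_sat V 0 ?_
    rw [pow_zero]
    exact Submodule.algebraMap_mem _) α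
  exact hi (isIntegral_of_mul_pow (GenSec.fg_span_range hV)
    (hz ▸ Submodule.subset_span ⟨none, rfl⟩) hα (hN N le_rfl)
    (Submodule.subset_span ⟨i, rfl⟩)).isAlgebraic

/-- A generic section exists as soon as the `z_i` are not all algebraic. With `z_∞ = 1` the equation
of the section is solved for `u_∞`, so `F[u] / (∑ z_i u_i)` is a polynomial ring over `F`. -/
theorem exists_genSec (hz : z none = 1) {i : Option ι} (hi : Transcendental k (z i)) :
    ∃ (K F' : Type) (_ : Field K) (_ : Field F') (_ : Algebra k K) (_ : Algebra K F')
      (_ : Algebra F F') (_ : Algebra k F') (_ : IsScalarTower k F F') (_ : IsScalarTower k K F')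
      (G : GenSec k F K F' (Option ι) z),
      AlgebraicIndependent F (fun i : ι => G.φ (X (some i))) := by
  let K := FractionRing (MvPolynomial (Option ι) k)
  let F' := FractionRing (MvPolynomial ι F)
  let f : MvPolynomial (Option ι) k →+* F' := (algebraMap (MvPolynomial ι F) F').comp
    ((substNone z).toRingHom.comp (map (algebraMap k F)))
  have hf : Function.Injective f :=
    (IsFractionRing.injective (MvPolynomial ι F) F').comp (map_subst_inj hz hi)
  let ae : Algebra K F' := (IsFractionRing.lift hf : K →+* F').toAlgebra
  have hae : ∀ p : MvPolynomial (Option ι) k, algebraMap K F' (algebraMap _ K p) = f p :=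
    fun p => IsFractionRing.lift_algebraMap hf p
  have t1 : IsScalarTower k F F' := inferInstance
  have t2 : IsScalarTower k K F' := IsScalarTower.of_algebraMap_eq fun c => by
    rw [IsScalarTower.algebraMap_apply k (MvPolynomial (Option ι) k) K, hae,
      IsScalarTower.algebraMap_apply k F F', IsScalarTower.algebraMap_apply F (MvPolynomial ι F) F']
    simp [f, algebraMap_eq]
  let φ : MvPolynomial (Option ι) F →ₐ[F] F' :=
    (IsScalarTower.toAlgHom F (MvPolynomial ι F) F').comp (substNone z)
  have hφ : ∀ p, φ p = algebraMap (MvPolynomial ι F) F' (substNone z p) := fun _ => rfl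
  have hinj := IsFractionRing.injective (MvPolynomial ι F) F'
  have hsome : ∀ p : MvPolynomial ι F, substNone z (rename some p) = p := by
    intro p
    have : (substNone z).comp (rename some) = AlgHom.id F _ := by ext i; simp [substNone]
    exact AlgHom.congr_fun this p
  let G : GenSec k F K F' (Option ι) z :=
    { ψ := IsScalarTower.toAlgHom k (MvPolynomial (Option ι) k) K
      φ := φ
      ψ_inj := IsFractionRing.injective (MvPolynomial (Option ι) k) K
      ψ_frac := fun x => by
        obtain ⟨p, q, hq, rfl⟩ := IsFractionRing.div_surjective (A := MvPolynomial (Option ι) k) x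
        have hq0 := nonZeroDivisors.ne_zero hq
        have : algebraMap (MvPolynomial (Option ι) k) K q ≠ 0 := by simpa using hq0
        exact ⟨p, q, hq0, by simpa using mul_div_cancel₀ _ this⟩
      compat := fun i => by
        rw [hφ, IsScalarTower.coe_toAlgHom', hae]; simp [f]
      φ_lin := by
        rw [hφ, linForm_option hz]
        simp [substNone, ← algebraMap_eq]
      ker := fun p hp => by
        rw [hφ] at hp
        exact substNone_ker hz (hinj (hp.trans (map_zero _).symm))
      φ_frac := fun x => by
        obtain ⟨p, q, hq, rfl⟩ := IsFractionRing.div_surjective (A := MvPolynomial ι F) x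
        have hq0 := nonZeroDivisors.ne_zero hq
        have : algebraMap (MvPolynomial ι F) F' q ≠ 0 := by simpa using hq0
        refine ⟨rename some p, rename some q, ?_, ?_⟩
        · rw [hφ, hsome]; exact this
        · rw [hφ, hφ, hsome, hsome]; exact mul_div_cancel₀ _ this }
  refine ⟨K, F', inferInstance, inferInstance, inferInstance, ae, inferInstance, inferInstance,
    t1, t2, G, ?_⟩
  have : (fun i : ι => G.φ (X (some i))) = fun i => algebraMap (MvPolynomial ι F) F' (X i) := by
    funext i; change φ _ = _; rw [hφ]; simp [substNone]
  rw [this]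
  exact (algebraicIndependent_X ι F).map' (f := IsScalarTower.toAlgHom F (MvPolynomial ι F) F') hinj

end Exist
end SurfGenus

/-! ### Growth of the Hilbert function of a curve -/

namespace SurfGenus
set_option linter.unusedSectionVars false

section Step
variable {K A L : Type} [Field K] [CommRing A] [Algebra K A] [Field L] [Algebra K L]
  [FiniteDimensional K L] (ρ : A →ₐ[K] L) (U : Submodule K A) (l : A)

lemma pow_le_pow_of_one_mem {U : Submodule K A} (h1 : (1 : A) ∈ U) :
    Monotone (fun n : ℕ => U ^ n) :=
  monotone_nat_of_le_succ fun t x hx => by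
    simpa [pow_succ] using Submodule.mul_mem_mul hx h1

variable {U l}

/-- The inclusion `U ^ (t + 2) ⊆ l U ^ (t + 1) + U ^ (t + 1)` when the section is already everything
in degree `t`: modulo `l U ^ t`, elements of `U ^ (t + 1)` may be replaced by elements of `U ^ t`. -/
lemma pow_succ_le_of_three_le {t : ℕ}
    (hker : ∀ b ∈ U ^ (t + 1), ρ b = 0 → ∃ c ∈ U ^ t, b = l * c)
    (hsur : (U ^ t).map ρ.toLinearMap = ⊤) (h1 : (1 : A) ∈ U) :
    U ^ (t + 2) ≤ (U ^ (t + 1)).map (LinearMap.mulLeft K l) ⊔ U ^ (t + 1) := by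
  rw [pow_succ' U (t + 1), Submodule.mul_le]
  intro a ha b hb
  obtain ⟨b', hb', e⟩ : ρ b ∈ (U ^ t).map ρ.toLinearMap := hsur ▸ Submodule.mem_top
  obtain ⟨c, hc, hbc⟩ := hker (b - b') (sub_mem hb (pow_le_pow_of_one_mem h1 (Nat.le_succ t) hb'))
    (by rw [map_sub, sub_eq_zero]; exact e.symm)
  rw [show a * b = l * (a * c) + a * b' by linear_combination a * hbc]
  refine add_mem (Submodule.mem_sup_left ⟨a * c, ?_, rfl⟩) (Submodule.mem_sup_right ?_)
  · rw [pow_succ']; exact Submodule.mul_mem_mul ha hc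
  · rw [pow_succ']; exact Submodule.mul_mem_mul ha hb'

/-- The inclusion `U ^ 3 ⊆ l U ^ 2 + U ^ 2`. A functional separating the two sides would produce
two subspaces of `L` with product orthogonal to `ρ U`, too small for Cauchy--Davenport. -/
lemma pow_three_le
    (hK : ∀ c : L, c ∉ Set.range (algebraMap K L) → IntermediateField.adjoin K {c} = ⊤)
    (hU : U.FG) (h1 : (1 : A) ∈ U)
    (hker : ∀ b ∈ U ^ 2, ρ b = 0 → ∃ c ∈ U, b = l * c)
    (hsur : (U ^ 2).map ρ.toLinearMap = ⊤) {r : ℕ}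
    (hr : Module.finrank K U = r) (hr' : Module.finrank K (U.map ρ.toLinearMap) + 1 = r)
    (hs2 : Module.finrank K L + 4 ≤ 2 * r) :
    U ^ 3 ≤ (U ^ 2).map (LinearMap.mulLeft K l) ⊔ U ^ 2 := by
  classical
  by_contra hnot
  obtain ⟨w, hw, hwn⟩ := Set.not_subset.1 hnot
  obtain ⟨ψ, hψw, hψ⟩ := Submodule.exists_le_ker_of_notMem hwn
  have hψ1 : ∀ b ∈ U ^ 2, ψ b = 0 := fun b hb => hψ (Submodule.mem_sup_right hb)
  have hψ2 : ∀ b ∈ U ^ 2, ψ (l * b) = 0 := fun b hb => hψ (Submodule.mem_sup_left ⟨b, hb, rfl⟩)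
  obtain ⟨σ, hσ⟩ := LinearMap.exists_rightInverse_of_surjective
    (ρ.toLinearMap.domRestrict (U ^ 2)) (by rw [LinearMap.range_domRestrict, hsur])
  -- `σ` is a section of `ρ` on `U ^ 2`. For `x ∈ U` the functional `g x` on `L` is induced by
  -- `b ↦ ψ (x * b)` on `U ^ 2`, which kills the kernel of `ρ`.
  let g : A →ₗ[K] Module.Dual K L :=
    ((LinearMap.mul K A).compr₂ ψ).compl₂ ((U ^ 2).subtype.comp σ)
  have hg : ∀ x y, g x y = ψ (x * σ y) := fun x y => rfl
  have hg2 : ∀ x ∈ U, ∀ b ∈ U ^ 2, g x (ρ b) = ψ (x * b) := by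
    intro x hx b hb
    have e := LinearMap.congr_fun hσ (ρ b)
    obtain ⟨c, hc, hbc⟩ := hker (b - σ (ρ b)) (sub_mem hb (σ (ρ b)).2) (by
      rw [map_sub, sub_eq_zero]; exact e.symm)
    have h2 := hψ2 (x * c) (by rw [pow_two]; exact Submodule.mul_mem_mul hx hc)
    rw [hg, eq_comm, ← sub_eq_zero, ← map_sub, ← h2]
    congr 1
    linear_combination x * hbc
  obtain ⟨τ, hτ⟩ : ∃ τ : L →ₗ[K] K, τ ≠ 0 := exists_ne _
  let Θ : L →ₗ[K] Module.Dual K L := (LinearMap.mul K L).compr₂ τ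
  have hΘ : Function.Injective Θ := by
    rw [← LinearMap.ker_eq_bot, LinearMap.ker_eq_bot']
    intro x hx
    by_contra hx0
    refine hτ (LinearMap.ext fun y => ?_)
    have := LinearMap.congr_fun hx (x⁻¹ * y)
    change τ (x * (x⁻¹ * y)) = 0 at this
    rwa [mul_inv_cancel_left₀ hx0] at this
  let e := LinearEquiv.ofInjectiveOfFinrankEq Θ hΘ (Subspace.dual_finrank_eq).symm
  -- The pairing `τ (x * y)` identifies `L` with its dual, so `g x` is multiplication by `c x`
  -- followed by `τ`.
  let c : A →ₗ[K] L := e.symm.toLinearMap.comp g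
  have hc : ∀ x y, τ (c x * y) = g x y := by
    intro x y
    have : e (c x) = g x := e.apply_symm_apply _
    exact LinearMap.congr_fun this y
  have hc0 : ∀ x, c x = 0 ↔ g x = 0 := fun x => e.symm.map_eq_zero_iff
  have hUU : ∀ {x y}, x ∈ U → y ∈ U → x * y ∈ U ^ 2 := fun hx hy => by
    rw [pow_two]; exact Submodule.mul_mem_mul hx hy
  set N : Submodule K A := U ⊓ LinearMap.ker c with hN
  have hUfin : Module.Finite K U := Module.Finite.iff_fg.2 hU
  have hN1 : (1 : A) ∈ N := ⟨h1, (hc0 1).2 (LinearMap.ext fun y => by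
    rw [hg, one_mul]; exact hψ1 _ (σ y).2)⟩
  have hcr := GenSec.finrank_map_add c U hU
  have hNfin : Module.Finite K N := Submodule.finiteDimensional_of_le (inf_le_left : N ≤ U)
  have hNr := GenSec.finrank_map_add ρ.toLinearMap N (Module.Finite.iff_fg.1 hNfin)
  have hUr := GenSec.finrank_map_add ρ.toLinearMap U hU
  have hmono : Module.finrank K (N ⊓ LinearMap.ker ρ.toLinearMap : Submodule K A) ≤
      Module.finrank K (U ⊓ LinearMap.ker ρ.toLinearMap : Submodule K A) := by
    have : Module.Finite K (U ⊓ LinearMap.ker ρ.toLinearMap : Submodule K A) :=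
      Submodule.finiteDimensional_of_le inf_le_left
    exact Submodule.finrank_mono (inf_le_inf_right _ inf_le_left)
  have hCne : U.map c ≠ ⊥ := by
    intro h0
    have hz : ∀ x ∈ U, ∀ y, g x y = 0 := fun x hx y => by
      have : c x ∈ U.map c := ⟨x, hx, rfl⟩
      rw [h0, Submodule.mem_bot, hc0] at this
      rw [this]; rfl
    refine hψw ?_
    rw [pow_succ' U 2] at hw
    refine Submodule.mul_induction_on hw (fun x hx b hb => ?_) (fun x y hx hy => ?_)
    · rw [← hg2 x hx b hb, hz x hx]
    · rw [map_add, hx, hy, add_zero]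
  have hNne : N.map ρ.toLinearMap ≠ ⊥ := by
    intro h0
    have : ρ 1 ∈ N.map ρ.toLinearMap := ⟨1, hN1, rfl⟩
    rw [h0, Submodule.mem_bot, map_one] at this
    exact one_ne_zero this
  have hcd := cauchy_davenport hK _ (N.map ρ.toLinearMap) (U.map c) rfl hNne hCne
  -- For `n ∈ N` and `x, y ∈ U`, `τ (ρ n * c x * ρ y) = ψ (n * x * y) = τ (c n * ρ (x * y)) = 0`.
  have horth := finrank_orth hτ (N.map ρ.toLinearMap * U.map c) (U.map ρ.toLinearMap) (by
    rintro a ha _ ⟨y, hy, rfl⟩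
    refine Submodule.mul_induction_on ha ?_ ?_
    · rintro _ ⟨n, hn, rfl⟩ _ ⟨x, hx, rfl⟩
      have e1 : ρ n * c x * ρ y = c x * ρ (n * y) := by rw [map_mul]; ring
      have e2 := hg2 n hn.1 (x * y) (hUU hx hy)
      rw [(hc0 n).1 hn.2] at e2
      change τ (ρ n * c x * ρ y) = 0
      rw [e1, hc, hg2 x hx _ (hUU hn.1 hy), mul_left_comm, ← e2]
      rfl
    · intro a b ha hb
      rw [add_mul, map_add, ha, hb, add_zero])
  rw [← hN] at hcr
  have hposC : 0 < Module.finrank K (U.map c) := by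
    have : Module.Finite K (U.map c) := inferInstance
    rw [Module.finrank_pos_iff_exists_ne_zero]
    obtain ⟨x, hx, hx0⟩ := Submodule.exists_mem_ne_zero_of_ne_bot hCne
    exact ⟨⟨x, hx⟩, fun h => hx0 (congrArg Subtype.val h)⟩
  rcases min_le_iff.1 hcd with h | h <;> omega

/-- If the Hilbert function of the curve grows by the minimal amount `s = [L : K]` from `t` to
`t + 1`, then it grows by at most `s` in the next step. -/
lemma finrank_pow_step
    (hK : ∀ c : L, c ∉ Set.range (algebraMap K L) → IntermediateField.adjoin K {c} = ⊤)
    (hU : U.FG) (h1 : (1 : A) ∈ U) (hl : l ∈ U) (hl0 : ρ l = 0)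
    (hinj : Function.Injective (LinearMap.mulLeft K l))
    (hsur : (U ^ 2).map ρ.toLinearMap = ⊤) {r : ℕ}
    (hr : Module.finrank K U = r) (hr' : Module.finrank K (U.map ρ.toLinearMap) + 1 = r)
    (hs2 : Module.finrank K L + 4 ≤ 2 * r) {t : ℕ} (ht : 1 ≤ t)
    (heq : Module.finrank K (U ^ (t + 1) : Submodule K A)
      = Module.finrank K (U ^ t : Submodule K A) + Module.finrank K L) :
    Module.finrank K (U ^ (t + 2) : Submodule K A)
      ≤ Module.finrank K (U ^ (t + 1) : Submodule K A) + Module.finrank K L := by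
  have hsurt : ∀ n, (U ^ (n + 2)).map ρ.toLinearMap = ⊤ := by
    intro n
    rw [eq_top_iff, ← hsur]
    exact Submodule.map_mono (pow_le_pow_of_one_mem h1 (by omega))
  have hfin : ∀ n, Module.Finite K (U ^ n : Submodule K A) := fun n =>
    Module.Finite.iff_fg.2 (hU.pow n)
  have hlmul : ∀ n, (U ^ n).map (LinearMap.mulLeft K l) ≤ U ^ (n + 1) := by
    rintro n _ ⟨x, hx, rfl⟩
    rw [pow_succ']; exact Submodule.mul_mem_mul hl hx
  have hker : ∀ b ∈ U ^ (t + 1), ρ b = 0 → ∃ c ∈ U ^ t, b = l * c := by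
    have h2 := GenSec.finrank_map_add ρ.toLinearMap (U ^ (t + 1)) (hU.pow _)
    obtain ⟨n, rfl⟩ : ∃ n, t = n + 1 := ⟨t - 1, by omega⟩
    rw [hsurt n, finrank_top] at h2
    have hle : (U ^ (n + 1)).map (LinearMap.mulLeft K l) ≤
        U ^ (n + 1 + 1) ⊓ LinearMap.ker ρ.toLinearMap := by
      refine le_inf (hlmul _) ?_
      rintro _ ⟨x, _, rfl⟩
      simp [hl0]
    have : Module.Finite K (U ^ (n + 1 + 1) ⊓ LinearMap.ker ρ.toLinearMap : Submodule K A) :=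
      Submodule.finiteDimensional_of_le inf_le_left
    have h3 := Submodule.eq_of_le_of_finrank_le hle (by
      rw [finrank_map_inj _ hinj]; omega)
    intro b hb hb0
    have : b ∈ U ^ (n + 1 + 1) ⊓ LinearMap.ker ρ.toLinearMap := ⟨hb, hb0⟩
    rw [← h3] at this
    obtain ⟨c, hc, rfl⟩ := this
    exact ⟨c, hc, rfl⟩
  have hmain : U ^ (t + 2) ≤ (U ^ (t + 1)).map (LinearMap.mulLeft K l) ⊔ U ^ (t + 1) := by
    rcases Nat.lt_or_ge 1 t with h | h
    · obtain ⟨n, rfl⟩ : ∃ n, t = n + 2 := ⟨t - 2, by omega⟩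
      exact pow_succ_le_of_three_le ρ hker (hsurt n) h1
    · obtain rfl : t = 1 := by omega
      rw [pow_one] at hker
      exact pow_three_le ρ hK hU h1 hker hsur hr hr' hs2
  have hinf : (U ^ t).map (LinearMap.mulLeft K l) ≤
      (U ^ (t + 1)).map (LinearMap.mulLeft K l) ⊓ U ^ (t + 1) :=
    le_inf (Submodule.map_mono (pow_le_pow_of_one_mem h1 (Nat.le_succ t))) (hlmul t)
  have h4 := Submodule.finrank_sup_add_finrank_inf_eq
    ((U ^ (t + 1)).map (LinearMap.mulLeft K l)) (U ^ (t + 1))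
  have h5 := Submodule.finrank_mono hmain
  have h6 := Submodule.finrank_mono hinf
  rw [finrank_map_inj _ hinj] at h4 h6
  omega

end Step
end SurfGenus

/-! ### Tensor products over an algebraically closed field -/

namespace SurfGenus
set_option linter.unusedSectionVars false

section TensorDomain
open TensorProduct
variable {k A B : Type} [Field k] [IsAlgClosed k] 

/-- A nonzero element of a finitely generated domain over an algebraically closed field does not
vanish at some rational point. -/
lemma exists_point [CommRing A] [IsDomain A] [Algebra k A] [Algebra.FiniteType k A] {a : A}
    (ha : a ≠ 0) : ∃ χ : A →ₐ[k] k, χ a ≠ 0 := by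
  let S := Localization.Away a
  have : Algebra.FiniteType A S := IsLocalization.finiteType_of_monoid_fg (Submonoid.powers a) S
  have : Algebra.FiniteType k S := Algebra.FiniteType.trans (S := A) inferInstance inferInstance
  have hu : IsUnit (algebraMap A S a) := IsLocalization.Away.algebraMap_isUnit a
  have : Nontrivial S := (IsLocalization.injective S
    (powers_le_nonZeroDivisors_of_noZeroDivisors ha)).nontrivial
  obtain ⟨m, hm⟩ := Ideal.exists_maximal S
  let _ : Field (S ⧸ m) := Ideal.Quotient.field m
  have : Module.Finite k (S ⧸ m) := finite_of_finite_type_of_isJacobsonRing k (S ⧸ m)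
  let e : k ≃ₐ[k] (S ⧸ m) := AlgEquiv.ofBijective (Algebra.ofId k (S ⧸ m))
    IsAlgClosed.algebraMap_bijective_of_isIntegral
  let f : S →ₐ[k] k := e.symm.toAlgHom.comp (Ideal.Quotient.mkₐ k m)
  refine ⟨f.comp (IsScalarTower.toAlgHom k A S), ?_⟩
  exact (hu.map f).ne_zero

/-- Over an algebraically closed field, a tensor product of fields is a domain. -/
theorem isDomain_tensor [Field A] [Algebra k A] [Field B] [Algebra k B] :
    IsDomain (A ⊗[k] B) := by
  classical
  have hnt : Nontrivial (A ⊗[k] B) := inferInstance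
  suffices NoZeroDivisors (A ⊗[k] B) from NoZeroDivisors.to_isDomain _
  refine ⟨fun {p q} hpq => ?_⟩
  let b := Module.Free.chooseBasis k B
  let bb := Algebra.TensorProduct.basis A b
  by_contra! hne
  obtain ⟨i, hi⟩ : ∃ i, bb.repr p i ≠ 0 := by
    by_contra! h; exact hne.1 (bb.repr.map_eq_zero_iff.1 (Finsupp.ext h))
  obtain ⟨j, hj⟩ : ∃ j, bb.repr q j ≠ 0 := by
    by_contra! h; exact hne.2 (bb.repr.map_eq_zero_iff.1 (Finsupp.ext h))
  let s : Finset A := (bb.repr p).support.image (bb.repr p) ∪ (bb.repr q).support.image (bb.repr q)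
  let A' := Algebra.adjoin k (s : Set A)
  have hft : Algebra.FiniteType k A' :=
    (Subalgebra.fg_iff_finiteType _).1 (Subalgebra.fg_adjoin_finset s)
  have hp : ∀ i, bb.repr p i ∈ A' := fun i => by
    by_cases h : bb.repr p i = 0
    · rw [h]; exact zero_mem _
    · exact Algebra.subset_adjoin (Finset.mem_coe.2 (Finset.mem_union_left _
        (Finset.mem_image_of_mem _ (Finsupp.mem_support_iff.2 h))))
  have hq : ∀ i, bb.repr q i ∈ A' := fun i => by
    by_cases h : bb.repr q i = 0
    · rw [h]; exact zero_mem _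
    · exact Algebra.subset_adjoin (Finset.mem_coe.2 (Finset.mem_union_right _
        (Finset.mem_image_of_mem _ (Finsupp.mem_support_iff.2 h))))
  let ι : A' ⊗[k] B →ₐ[k] A ⊗[k] B := Algebra.TensorProduct.map A'.val (AlgHom.id k B)
  have hι : Function.Injective ι :=
    Module.Flat.rTensor_preserves_injective_linearMap (M := B) A'.val.toLinearMap
      Subtype.val_injective
  let lift : ∀ y : A ⊗[k] B, (∀ i, bb.repr y i ∈ A') → A' ⊗[k] B := fun y hy =>
    ∑ i ∈ (bb.repr y).support, (⟨bb.repr y i, hy i⟩ : A') ⊗ₜ[k] b i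
  have hlift : ∀ y hy, ι (lift y hy) = y := by
    intro y hy
    conv_rhs => rw [← bb.linearCombination_repr y, Finsupp.linearCombination_apply, Finsupp.sum]
    rw [map_sum]
    refine Finset.sum_congr rfl fun i _ => ?_
    simp [ι, bb, TensorProduct.smul_tmul']
  have hmul : lift p hp * lift q hq = 0 := hι (by rw [map_mul, hlift, hlift, hpq, map_zero])
  have hne' : (⟨bb.repr p i, hp i⟩ * ⟨bb.repr q j, hq j⟩ : A') ≠ 0 := by
    intro h
    exact mul_ne_zero hi hj (congrArg Subtype.val h)
  obtain ⟨χ, hχ⟩ := exists_point (k := k) hne'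
  rw [map_mul] at hχ
  let ev : A' ⊗[k] B →ₐ[k] B := Algebra.TensorProduct.lift
    ((Algebra.ofId k B).comp χ) (AlgHom.id k B) (fun _ _ => Commute.all _ _)
  have hev : ∀ y hy i, ev (lift y hy) = 0 → χ ⟨bb.repr y i, hy i⟩ = 0 := by
    intro y hy i h
    have h2 : ev (lift y hy) =
        ∑ i ∈ (bb.repr y).support, χ (⟨bb.repr y i, hy i⟩ : A') • b i := by
      rw [map_sum]
      refine Finset.sum_congr rfl fun i _ => ?_
      simp [ev, Algebra.ofId_apply, Algebra.smul_def]
    rw [h2] at h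
    by_cases hi : bb.repr y i = 0
    · have : (⟨bb.repr y i, hy i⟩ : A') = 0 := Subtype.ext hi
      rw [this, map_zero]
    · exact linearIndependent_iff'.1 b.linearIndependent _ _ h i (Finsupp.mem_support_iff.2 hi)
  have h3 := congrArg ev hmul
  rw [map_mul, map_zero] at h3
  rcases mul_eq_zero.1 h3 with h | h
  · exact hχ (by rw [hev p hp i h, zero_mul])
  · exact hχ (by rw [hev q hq j h, mul_zero])

end TensorDomain
end SurfGenus

/-! ### Pairs of points on a generic linear section -/

namespace SurfGenus
set_option linter.unusedSectionVars false

section Pairs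
open TensorProduct

lemma isAlgebraic_map {k A B : Type} [Field k] [Field A] [CommRing B] [IsDomain B] [Algebra k A]
    [Algebra k B] (h : A →ₐ[k] B) {S : Set A} {T : Set B} (hST : h '' S ⊆ T) {y : A}
    (hy : IsAlgebraic (Algebra.adjoin k S) y) : IsAlgebraic (Algebra.adjoin k T) (h y) := by
  have hle : ∀ s : Algebra.adjoin k S, h s ∈ Algebra.adjoin k T := fun s =>
    Algebra.adjoin_mono hST ((AlgHom.map_adjoin h S) ▸ Subalgebra.mem_map.2 ⟨s, s.2, rfl⟩)
  let g : Algebra.adjoin k S →ₐ[k] Algebra.adjoin k T :=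
    (h.comp (Algebra.adjoin k S).val).codRestrict _ hle
  exact hy.ringHom_of_comp_eq g h.toRingHom
    (fun s t e => Subtype.ext (h.toRingHom.injective (congrArg Subtype.val e))) rfl

/-- An element `y` with `y ⊗ 1 = 1 ⊗ y` is a constant. -/
lemma mem_range_of_tmul_comm {k F : Type} [Field k] [Field F] [Algebra k F] {y : F}
    (h : y ⊗ₜ[k] (1 : F) = 1 ⊗ₜ[k] y) : y ∈ Set.range (algebraMap k F) := by
  obtain ⟨g, hg⟩ : ∃ g : F →ₗ[k] k, g 1 = 1 := by
    obtain ⟨g, hg⟩ := LinearMap.exists_leftInverse_of_injective (Algebra.linearMap k F)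
      (LinearMap.ker_eq_bot.2 (algebraMap k F).injective)
    exact ⟨g, by simpa using LinearMap.congr_fun hg 1⟩
  have := congrArg (fun q => TensorProduct.rid k F (LinearMap.lTensor F g q)) h
  simp only [LinearMap.lTensor_tmul, hg, TensorProduct.rid_tmul, one_smul] at this
  exact ⟨g y, by rw [Algebra.algebraMap_eq_smul_one]; exact this.symm⟩

variable {k F G Ω δ I ι : Type} [Field k] [Field F] [Field G] [Field Ω]
  [Algebra k F] [Algebra k G] [Algebra k Ω] [Fintype δ] [Fintype I] [Fintype ι] [DecidableEq ι]
  {z : ι → F} {f : F →ₐ[k] G} {u : I → ι → G}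

/-- Two embeddings of `G = F(u)` over the field generated by the coefficients `u` of the sections,
independent in the sense that the transcendence degree of the compositum is at least that of
two generic points together with the coefficients of linear forms vanishing on both. -/
structure IsPair {k F G Ω I ι : Type} (δ : Type) [Field k] [Field F] [Field G] [Field Ω]
    [Algebra k F] [Algebra k G] [Algebra k Ω] [Fintype δ] [Fintype I] [Fintype ι]
    (z : ι → F) (f : F →ₐ[k] G) (u : I → ι → G) (a j : G →ₐ[k] Ω) : Prop where
  agree : ∀ m i, a (u m i) = j (u m i)
  lin : ∀ m, ∑ i, a (f (z i)) * a (u m i) = ∑ i, j (f (z i)) * j (u m i)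
  alg : ∀ w : Ω, IsAlgebraic (Algebra.adjoin k (Set.range a ∪ Set.range j)) w
  trdeg : ((2 * Fintype.card δ + Fintype.card I * (Fintype.card ι - 1) : ℕ) : Cardinal)
    ≤ Algebra.trdeg k Ω

/-- The coordinates of the two points of a pair and the coefficients other than the `i`-th. -/
def pairFam {B : Type} (x : δ → F) (h₁ h₂ : F → B) (i : ι) (U : I → ι → B) :
    (δ ⊕ δ) ⊕ (I × {l // l ≠ i}) → B :=
  Sum.elim (Sum.elim (h₁ ∘ x) (h₂ ∘ x)) (fun p => U p.1 p.2)

section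
variable {B : Type} [CommRing B] [IsDomain B] [Algebra k B] {x : δ → F}
  (hx : IsTranscendenceBasis k x) (h₁ h₂ : F →ₐ[k] B) (i : ι) (U : I → ι → B)

lemma pairFam_left (hx : IsTranscendenceBasis k x) (y : F) :
    IsAlgebraic (Algebra.adjoin k (Set.range (pairFam x h₁ h₂ i U))) (h₁ y) :=
  isAlgebraic_map h₁ (by rintro _ ⟨_, ⟨d, rfl⟩, rfl⟩; exact ⟨Sum.inl (Sum.inl d), rfl⟩)
    (hx.isAlgebraic.isAlgebraic y)

lemma pairFam_right (hx : IsTranscendenceBasis k x) (y : F) :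
    IsAlgebraic (Algebra.adjoin k (Set.range (pairFam x h₁ h₂ i U))) (h₂ y) :=
  isAlgebraic_map h₂ (by rintro _ ⟨_, ⟨d, rfl⟩, rfl⟩; exact ⟨Sum.inl (Sum.inr d), rfl⟩)
    (hx.isAlgebraic.isAlgebraic y)

lemma pairFam_coeff (m : I) {l : ι} (hl : l ≠ i) :
    IsAlgebraic (Algebra.adjoin k (Set.range (pairFam x h₁ h₂ i U))) (U m l) :=
  isAlgebraic_algebraMap (⟨_, Algebra.subset_adjoin ⟨Sum.inr (m, ⟨l, hl⟩), rfl⟩⟩ :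
    Algebra.adjoin k (Set.range (pairFam x h₁ h₂ i U)))

end

lemma IsPair.coeff_eq {a j : G →ₐ[k] Ω} (h : IsPair δ z f u a j) {i : ι}
    (hi : a (f (z i)) ≠ j (f (z i))) (m : I) :
    a (u m i) = -(∑ l ∈ Finset.univ.erase i, (a (f (z l)) - j (f (z l))) * a (u m l)) *
      (a (f (z i)) - j (f (z i)))⁻¹ := by
  rw [eq_mul_inv_iff_mul_eq₀ (sub_ne_zero.2 hi), eq_neg_iff_add_eq_zero, mul_comm,
    Finset.add_sum_erase _ (fun l => (a (f (z l)) - j (f (z l))) * a (u m l)) (Finset.mem_univ i)]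
  simp only [sub_mul, Finset.sum_sub_distrib]
  rw [sub_eq_zero, h.lin]
  exact Finset.sum_congr rfl fun l _ => by rw [h.agree]

/-- The two points of a pair and the free coefficients are algebraically independent. -/
lemma IsPair.algebraicIndependent {a j : G →ₐ[k] Ω} (h : IsPair δ z f u a j) {x : δ → F}
    (hx : IsTranscendenceBasis k x)
    (hG : IntermediateField.adjoin k (Set.range f ∪ Set.range fun p : I × ι => u p.1 p.2) = ⊤)
    {i : ι} (hi : a (f (z i)) ≠ j (f (z i))) :
    AlgebraicIndependent k
      (pairFam x (a.comp f) (j.comp f) i fun m l => a (u m l)) := by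
  set w := pairFam x (a.comp f) (j.comp f) i fun m l => a (u m l) with hw
  let R := Algebra.adjoin k (Set.range w)
  have hL : ∀ y, IsAlgebraic R (a (f y)) := pairFam_left (a.comp f) (j.comp f) i _ hx
  have hR : ∀ y, IsAlgebraic R (j (f y)) := pairFam_right (a.comp f) (j.comp f) i _ hx
  have hC : ∀ m l, IsAlgebraic R (a (u m l)) := by
    have h0 : ∀ m l, l ≠ i → IsAlgebraic R (a (u m l)) := fun m l hl =>
      pairFam_coeff (a.comp f) (j.comp f) i (fun m l => a (u m l)) m hl
    intro m l
    by_cases hl : l = i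
    · subst hl
      rw [h.coeff_eq hi]
      refine IsAlgebraic.mul (IsAlgebraic.neg (Finset.sum_induction _ _ (fun _ _ => IsAlgebraic.add)
        isAlgebraic_zero fun l hl' => ?_)) ((hL _).sub (hR _)).inv
      exact ((hL _).sub (hR _)).mul (h0 m l (Finset.ne_of_mem_erase hl'))
    · exact h0 m l hl
  have hgen : ∀ b : G →ₐ[k] Ω, (∀ y, IsAlgebraic R (b (f y))) → (∀ m l, IsAlgebraic R (b (u m l))) →
      ∀ g, IsAlgebraic R (b g) := by
    intro b hb1 hb2 g
    have hg : g ∈ IntermediateField.adjoin k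
        (Set.range f ∪ Set.range fun p : I × ι => u p.1 p.2) := hG ▸ IntermediateField.mem_top
    induction hg using IntermediateField.adjoin_induction with
    | mem x hx =>
      rcases hx with ⟨y, rfl⟩ | ⟨p, rfl⟩
      · exact hb1 y
      · exact hb2 _ _
    | algebraMap c =>
      rw [AlgHom.commutes, IsScalarTower.algebraMap_apply k R Ω]; exact isAlgebraic_algebraMap _
    | add x y _ _ hx hy => rw [map_add]; exact hx.add hy
    | inv x _ hx => rw [map_inv₀]; exact hx.inv
    | mul x y _ _ hx hy => rw [map_mul]; exact hx.mul hy
  have halg : Algebra.IsAlgebraic R Ω := ⟨fun y => (h.alg y).adjoin_of_forall_isAlgebraic (by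
    rintro _ ⟨⟨g, rfl⟩ | ⟨g, rfl⟩, _⟩
    · exact hgen a hL hC g
    · exact hgen j hR (fun m l => by rw [← h.agree]; exact hC m l) g)⟩
  refine (Algebra.IsAlgebraic.isTranscendenceBasis_of_le_trdeg_of_finite k w ?_).1
  refine le_trans (le_of_eq ?_) h.trdeg
  rw [Cardinal.mk_fintype]
  congr 1
  simp only [Fintype.card_sum, Fintype.card_prod, Fintype.card_subtype_compl,
    Fintype.card_unique]
  ring

variable (f u) in
/-- The evaluation of polynomials over `F ⊗ F` in the free coefficients at a pair. -/
noncomputable def pairEval (a j : G →ₐ[k] Ω) (i : ι) :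
    MvPolynomial (I × {l // l ≠ i}) (F ⊗[k] F) →ₐ[k] Ω :=
  MvPolynomial.aevalTower
    (Algebra.TensorProduct.lift (a.comp f) (j.comp f) (fun _ _ => Commute.all _ _))
    (fun p => a (u p.1 p.2))

lemma pairEval_left (a j : G →ₐ[k] Ω) (i : ι) (y : F) :
    pairEval f u a j i (MvPolynomial.C (y ⊗ₜ 1)) = a (f y) := by
  rw [pairEval, MvPolynomial.aevalTower_C]; simp

lemma pairEval_right (a j : G →ₐ[k] Ω) (i : ι) (y : F) :
    pairEval f u a j i (MvPolynomial.C (1 ⊗ₜ y)) = j (f y) := by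
  rw [pairEval, MvPolynomial.aevalTower_C]; simp

lemma pairEval_X (a j : G →ₐ[k] Ω) (i : ι) (p : I × {l // l ≠ i}) :
    pairEval f u a j i (MvPolynomial.X p) = a (u p.1 p.2) := by
  rw [pairEval, MvPolynomial.aevalTower_X]

variable [IsAlgClosed k]

/-- The evaluation at a pair is injective: `F ⊗ F` is a domain, so the polynomial ring over it is an
algebraic extension of a polynomial ring in the family `pairFam`, whose image is algebraically
independent. -/
lemma IsPair.pairEval_injective {a j : G →ₐ[k] Ω} (h : IsPair δ z f u a j) {x : δ → F}
    (hx : IsTranscendenceBasis k x)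
    (hG : IntermediateField.adjoin k (Set.range f ∪ Set.range fun p : I × ι => u p.1 p.2) = ⊤)
    {i : ι} (hi : a (f (z i)) ≠ j (f (z i))) :
    Function.Injective (pairEval f u a j i) := by
  have hdom : IsDomain (F ⊗[k] F) := isDomain_tensor
  have hind := h.algebraicIndependent hx hG hi
  let D := MvPolynomial (I × {l // l ≠ i}) (F ⊗[k] F)
  let c : F ⊗[k] F →ₐ[k] D := IsScalarTower.toAlgHom k (F ⊗[k] F) D
  let h₁ : F →ₐ[k] D := c.comp Algebra.TensorProduct.includeLeft
  let h₂ : F →ₐ[k] D := c.comp Algebra.TensorProduct.includeRight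
  let w := pairFam x h₁ h₂ i (fun m l => if hl : l ≠ i then
    (MvPolynomial.X (m, ⟨l, hl⟩) : D) else 0)
  let R := Algebra.adjoin k (Set.range w)
  have hcomp : (pairEval f u a j i) ∘ w =
      pairFam x (a.comp f) (j.comp f) i fun m l => a (u m l) := by
    funext q
    rcases q with (d | d) | ⟨m, l, hl⟩
    · exact pairEval_left a j i (x d)
    · exact pairEval_right a j i (x d)
    · change pairEval f u a j i (if hl : l ≠ i then _ else _) = a (u m l)
      rw [dif_pos hl, pairEval_X]
  have halg : ∀ p : D, IsAlgebraic R p := by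
    intro p
    induction p using MvPolynomial.induction_on with
    | C y =>
      induction y using TensorProduct.induction_on with
      | zero => rw [map_zero]; exact isAlgebraic_zero
      | tmul y y' =>
        have : (MvPolynomial.C (y ⊗ₜ[k] y') : D) = h₁ y * h₂ y' := by
          change _ = c _ * c _
          rw [← map_mul]
          simp [c]; rfl
        rw [this]
        exact (pairFam_left h₁ h₂ i _ hx y).mul (pairFam_right h₁ h₂ i _ hx y')
      | add y y' hy hy' => rw [map_add]; exact hy.add hy'
    | add p q hp hq => exact hp.add hq
    | mul_X p q hp =>
      refine hp.mul ?_
      obtain ⟨m, l, hl⟩ := q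
      have := pairFam_coeff (k := k) (x := x) h₁ h₂ i (fun m l => if hl : l ≠ i then
        (MvPolynomial.X (m, ⟨l, hl⟩) : D) else 0) m hl
      rwa [dif_pos hl] at this
  rw [injective_iff_map_eq_zero]
  intro p hp
  by_contra hp0
  obtain ⟨q, hq0, p', hq⟩ := (halg p).exists_nonzero_dvd (mem_nonZeroDivisors_of_ne_zero hp0)
  have hq1 : pairEval f u a j i (q : D) = 0 := by
    change pairEval f u a j i (algebraMap R D q) = 0
    rw [hq, map_mul, hp, zero_mul]
  obtain ⟨P, hP⟩ : ∃ P : MvPolynomial _ k, MvPolynomial.aeval w P = (q : D) := by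
    have : (q : D) ∈ Algebra.adjoin k (Set.range w) := q.2
    rw [Algebra.adjoin_range_eq_range_aeval] at this
    exact this
  rw [← hP, ← AlgHom.comp_apply, MvPolynomial.comp_aeval] at hq1
  have hP0 : P = 0 := by
    refine (injective_iff_map_eq_zero _).1 hind P ?_
    rw [← hq1]
    congr 2
    exact hcomp.symm
  apply hq0
  apply Subtype.ext
  rw [← hP, hP0, map_zero]
  rfl

/-- The two points of a pair have different `i`-th coordinates, unless that coordinate is
constant. -/
lemma IsPair.coord_ne {a j : G →ₐ[k] Ω} (h : IsPair δ z f u a j) {x : δ → F}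
    (hx : IsTranscendenceBasis k x) (hz : IntermediateField.adjoin k (Set.range z) = ⊤)
    (hG : IntermediateField.adjoin k (Set.range f ∪ Set.range fun p : I × ι => u p.1 p.2) = ⊤)
    (hne : a ≠ j) {i : ι} (hi : z i ∉ Set.range (algebraMap k F)) :
    a (f (z i)) ≠ j (f (z i)) := by
  obtain ⟨i₀, hi₀⟩ : ∃ i, a (f (z i)) ≠ j (f (z i)) := by
    by_contra! hcon
    apply hne
    have h1 : ∀ y, a (f y) = j (f y) := by
      intro y
      have hy : y ∈ IntermediateField.adjoin k (Set.range z) := hz ▸ IntermediateField.mem_top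
      induction hy using IntermediateField.adjoin_induction with
      | mem x hx => obtain ⟨i, rfl⟩ := hx; exact hcon i
      | algebraMap c => simp only [AlgHom.commutes]
      | add x y _ _ hx hy => simp only [map_add, hx, hy]
      | inv x _ hx => simp only [map_inv₀, hx]
      | mul x y _ _ hx hy => simp only [map_mul, hx, hy]
    ext g
    have hg : g ∈ IntermediateField.adjoin k
        (Set.range f ∪ Set.range fun p : I × ι => u p.1 p.2) := hG ▸ IntermediateField.mem_top
    induction hg using IntermediateField.adjoin_induction with
    | mem x hx =>
      rcases hx with ⟨y, rfl⟩ | ⟨p, rfl⟩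
      · exact h1 y
      · exact h.agree _ _
    | algebraMap c => simp only [AlgHom.commutes]
    | add x y _ _ hx hy => simp only [map_add, hx, hy]
    | inv x _ hx => simp only [map_inv₀, hx]
    | mul x y _ _ hx hy => simp only [map_mul, hx, hy]
  have hinj := h.pairEval_injective hx hG hi₀
  intro he
  rw [← pairEval_left (u := u) a j i₀, ← pairEval_right (u := u) a j i₀] at he
  have h3 := MvPolynomial.C_injective _ _ (hinj he)
  exact hi (mem_range_of_tmul_comm h3)

/-- All pairs of distinct points behave alike: whether an element of `G` takes the same value at
both points does not depend on the pair. -/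
theorem IsPair.compare {Ω' : Type} [Field Ω'] [Algebra k Ω'] {a j : G →ₐ[k] Ω} {a' j' : G →ₐ[k] Ω'}
    (h : IsPair δ z f u a j) (h' : IsPair δ z f u a' j') {x : δ → F}
    (hx : IsTranscendenceBasis k x) (hz : IntermediateField.adjoin k (Set.range z) = ⊤)
    (hG : IntermediateField.adjoin k (Set.range f ∪ Set.range fun p : I × ι => u p.1 p.2) = ⊤)
    (hne : a ≠ j) (hne' : a' ≠ j') {i : ι} (hi : z i ∉ Set.range (algebraMap k F)) (g : G)
    (hg : a g = j g) : a' g = j' g := by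
  have hdom : IsDomain (F ⊗[k] F) := isDomain_tensor
  have hc := h.coord_ne hx hz hG hne hi
  have hc' := h'.coord_ne hx hz hG hne' hi
  have hinj := h.pairEval_injective hx hG hc
  have hinj' := h'.pairEval_injective hx hG hc'
  let D := MvPolynomial (I × {l // l ≠ i}) (F ⊗[k] F)
  let M := FractionRing D
  let θ : M →+* Ω := IsFractionRing.lift (g := (pairEval f u a j i).toRingHom) hinj
  let θ' : M →+* Ω' := IsFractionRing.lift (g := (pairEval f u a' j' i).toRingHom) hinj'
  have hθ : ∀ p : D, θ (algebraMap D M p) = pairEval f u a j i p :=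
    fun p => IsFractionRing.lift_algebraMap hinj p
  have hθ' : ∀ p : D, θ' (algebraMap D M p) = pairEval f u a' j' i p :=
    fun p => IsFractionRing.lift_algebraMap hinj' p
  have hL : ∀ y, ∃ m : M, θ m = a (f y) ∧ θ' m = a' (f y) := fun y =>
    ⟨algebraMap D M (MvPolynomial.C (y ⊗ₜ 1)), by rw [hθ, pairEval_left],
      by rw [hθ', pairEval_left]⟩
  have hR : ∀ y, ∃ m : M, θ m = j (f y) ∧ θ' m = j' (f y) := fun y =>
    ⟨algebraMap D M (MvPolynomial.C (1 ⊗ₜ y)), by rw [hθ, pairEval_right],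
      by rw [hθ', pairEval_right]⟩
  have h0 : ∀ m l, l ≠ i → ∃ q : M, θ q = a (u m l) ∧ θ' q = a' (u m l) := fun m l hl =>
    ⟨algebraMap D M (MvPolynomial.X (m, ⟨l, hl⟩)), by rw [hθ, pairEval_X], by rw [hθ', pairEval_X]⟩
  have hC : ∀ m l, ∃ q : M, θ q = a (u m l) ∧ θ' q = a' (u m l) := by
    intro m l
    by_cases hl : l = i
    · subst hl
      choose p hp hp' using fun y => hL y
      choose q hq hq' using fun y => hR y
      have hw : ∀ l', ∃ w : M, l' ≠ l → θ w = a (u m l') ∧ θ' w = a' (u m l') := by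
        intro l'
        by_cases hl' : l' = l
        · exact ⟨0, fun h => absurd hl' h⟩
        · obtain ⟨w, hw⟩ := h0 m l' hl'
          exact ⟨w, fun _ => hw⟩
      choose w hw using hw
      refine ⟨-(∑ l' ∈ Finset.univ.erase l, (p (z l') - q (z l')) * w l') *
        (p (z l) - q (z l))⁻¹, ?_, ?_⟩
      · rw [h.coeff_eq hc, map_mul, map_neg, map_sum, map_inv₀, map_sub, hp, hq]
        congr 2
        refine Finset.sum_congr rfl fun l' hl' => ?_
        rw [map_mul, map_sub, hp, hq, (hw l' (Finset.ne_of_mem_erase hl')).1]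
      · rw [h'.coeff_eq hc', map_mul, map_neg, map_sum, map_inv₀, map_sub, hp', hq']
        congr 2
        refine Finset.sum_congr rfl fun l' hl' => ?_
        rw [map_mul, map_sub, hp', hq', (hw l' (Finset.ne_of_mem_erase hl')).2]
    · exact h0 m l hl
  have key : ∀ (b : G →ₐ[k] Ω) (b' : G →ₐ[k] Ω'), (∀ y, ∃ m : M, θ m = b (f y) ∧ θ' m = b' (f y)) →
      (∀ m l, ∃ q : M, θ q = b (u m l) ∧ θ' q = b' (u m l)) →
      ∀ g, ∃ m : M, θ m = b g ∧ θ' m = b' g := by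
    intro b b' hb1 hb2 g
    have hg : g ∈ IntermediateField.adjoin k
        (Set.range f ∪ Set.range fun p : I × ι => u p.1 p.2) := hG ▸ IntermediateField.mem_top
    induction hg using IntermediateField.adjoin_induction with
    | mem x hx =>
      rcases hx with ⟨y, rfl⟩ | ⟨p, rfl⟩
      · exact hb1 y
      · exact hb2 _ _
    | algebraMap c =>
      obtain ⟨m, hm, hm'⟩ := hb1 (algebraMap k F c)
      exact ⟨m, by rw [hm]; simp, by rw [hm']; simp⟩
    | add x y _ _ hx hy =>
      obtain ⟨m, hm, hm'⟩ := hx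
      obtain ⟨n, hn, hn'⟩ := hy
      exact ⟨m + n, by rw [map_add, map_add, hm, hn], by rw [map_add, map_add, hm', hn']⟩
    | inv x _ hx =>
      obtain ⟨m, hm, hm'⟩ := hx
      exact ⟨m⁻¹, by rw [map_inv₀, map_inv₀, hm], by rw [map_inv₀, map_inv₀, hm']⟩
    | mul x y _ _ hx hy =>
      obtain ⟨m, hm, hm'⟩ := hx
      obtain ⟨n, hn, hn'⟩ := hy
      exact ⟨m * n, by rw [map_mul, map_mul, hm, hn], by rw [map_mul, map_mul, hm', hn']⟩
  obtain ⟨m, hm, hm'⟩ := key a a' hL hC g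
  obtain ⟨n, hn, hn'⟩ := key j j' hR (fun m l => by
    rw [← h.agree, ← h'.agree]; exact hC m l) g
  have : m = n := θ.injective (by rw [hm, hn, hg])
  rw [← hm', ← hn', this]

end Pairs
end SurfGenus

/-! ### Transcendence degrees of generic sections -/

namespace SurfGenus
set_option linter.unusedSectionVars false
open MvPolynomial

namespace GenSec
variable {k F K F' ι : Type} [Field k] [Field F] [Field K] [Field F'] [Algebra k F]
    [Algebra k K] [Algebra K F'] [Algebra F F'] [Algebra k F'] [IsScalarTower k F F']
    [IsScalarTower k K F'] [Fintype ι] [DecidableEq ι] {z : Option ι → F}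
    (G : GenSec k F K F' (Option ι) z)

/-- The coefficients of the generic section. -/
noncomputable def coef (i : Option ι) : F' := G.φ (X i)

lemma coef_eq (i : Option ι) : G.coef i = algebraMap K F' (G.ψ (X i)) := G.compat i

lemma sum_coef (hz : z none = 1) :
    ∑ i, algebraMap F F' (z (some i)) * G.coef (some i) = - G.coef none := by
  have h := G.φ_lin
  rw [linForm_option hz, map_add, map_sum] at h
  rw [eq_neg_iff_add_eq_zero, add_comm, ← h]
  congr 1
  refine Finset.sum_congr rfl fun i _ => ?_
  rw [map_mul, ← MvPolynomial.algebraMap_eq, AlgHom.commutes]; rfl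

/-- `F'` is generated over `k` by `F` and the coefficients other than the first. -/
lemma adjoin_coef (hz : z none = 1) :
    IntermediateField.adjoin k (Set.range (algebraMap F F') ∪
      Set.range fun i : ι => G.coef (some i)) = ⊤ := by
  rw [eq_top_iff]
  rintro x -
  set E := IntermediateField.adjoin k (Set.range (algebraMap F F') ∪
      Set.range fun i : ι => G.coef (some i))
  have hF : ∀ y, algebraMap F F' y ∈ E := fun y =>
    IntermediateField.subset_adjoin _ _ (Or.inl ⟨y, rfl⟩)
  have hs : ∀ i : ι, G.coef (some i) ∈ E := fun i =>
    IntermediateField.subset_adjoin _ _ (Or.inr ⟨i, rfl⟩)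
  have hc : ∀ i, G.coef i ∈ E := by
    rintro (_ | i)
    · have := G.sum_coef hz
      rw [← neg_eq_iff_eq_neg] at this
      rw [← this]
      exact neg_mem (sum_mem fun i _ => mul_mem (hF _) (hs i))
    · exact hs i
  have hφ : ∀ p, G.φ p ∈ E := by
    intro p
    induction p using MvPolynomial.induction_on with
    | C y => rw [← MvPolynomial.algebraMap_eq, AlgHom.commutes]; exact hF y
    | add p q hp hq => rw [map_add]; exact add_mem hp hq
    | mul_X p i hp => rw [map_mul]; exact mul_mem hp (hc i)
  obtain ⟨p, q, hq, h⟩ := G.φ_frac x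
  rw [eq_div_of_mul_eq hq ((mul_comm _ _).trans h)]
  exact div_mem (hφ p) (hφ q)

/-- The free coefficients are independent over `F`. -/
lemma trdeg_add_le (hind : AlgebraicIndependent F (fun i : ι => G.φ (X (some i)))) :
    Algebra.trdeg k F + Fintype.card ι ≤ Algebra.trdeg k F' := by
  rw [← trdeg_add_eq k F (A := F')]
  gcongr
  rw [← Cardinal.mk_fintype]
  exact hind.cardinalMk_le_trdeg


lemma trdeg_base_le (G : GenSec k F K F' (Option ι) z) : Algebra.trdeg k K ≤ (Fintype.card ι + 1 : ℕ) := by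
  let S := Set.range fun i => G.ψ (X i)
  have hmem : ∀ p, G.ψ p ∈ Algebra.adjoin k S := by
    intro p
    induction p using MvPolynomial.induction_on with
    | C y => rw [← MvPolynomial.algebraMap_eq, AlgHom.commutes]; exact Subalgebra.algebraMap_mem _ _
    | add p q hp hq => rw [map_add]; exact add_mem hp hq
    | mul_X p i hp => rw [map_mul]; exact mul_mem hp (Algebra.subset_adjoin ⟨i, rfl⟩)
  have : Algebra.IsAlgebraic (Algebra.adjoin k S) K := by
    refine ⟨fun x => ?_⟩
    obtain ⟨p, q, hq, h⟩ := G.ψ_frac x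
    have hq' : G.ψ q ≠ 0 := fun h0 => hq (G.ψ_inj (h0.trans (map_zero _).symm))
    have h1 : ∀ p, IsAlgebraic (Algebra.adjoin k S) (G.ψ p) := fun p =>
      isAlgebraic_algebraMap (⟨_, hmem p⟩ : Algebra.adjoin k S)
    rw [eq_div_of_mul_eq hq' ((mul_comm _ _).trans h), div_eq_mul_inv]
    exact (h1 p).mul (h1 q).inv
  refine (Algebra.IsAlgebraic.trdeg_le_cardinalMk k S).trans (Cardinal.mk_range_le.trans ?_)
  rw [Cardinal.mk_fintype, Fintype.card_option]

/-- A generic hyperplane section drops the dimension by at most one. -/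
lemma trdeg_le (hind : AlgebraicIndependent F (fun i : ι => G.φ (X (some i)))) :
    Algebra.trdeg k F ≤ Algebra.trdeg K F' + 1 := by
  have h1 := G.trdeg_add_le hind
  rw [← trdeg_add_eq k K (A := F')] at h1
  have h2 := h1.trans (add_le_add_left G.trdeg_base_le _)
  rw [Nat.cast_add, add_comm (_ + _) (Algebra.trdeg K F'), add_comm (Fintype.card ι : Cardinal),
    Nat.cast_one, ← add_assoc] at h2
  exact (Cardinal.add_le_add_iff_of_lt_aleph0 (Cardinal.natCast_lt_aleph0)).1 h2

end GenSec
end SurfGenus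

/-! ### Monodromy of the points of a generic section of codimension two -/

namespace SurfGenus
set_option linter.unusedSectionVars false
open MvPolynomial

/-- In characteristic zero an algebraic element outside the base field is moved by an embedding. -/
lemma exists_algHom_ne {K E Ω : Type} [Field K] [CharZero K] [Field E] [Field Ω] [Algebra K E]
    [Algebra K Ω] [IsAlgClosed Ω] [Algebra.IsAlgebraic K E] {x : E}
    (hx : x ∉ Set.range (algebraMap K E)) (b : Ω) : ∃ j : E →ₐ[K] Ω, j x ≠ b := by
  classical
  have hxint : IsIntegral K x := Algebra.IsIntegral.isIntegral x
  have h2 := (minpoly.two_le_natDegree_iff hxint).2 hx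
  rw [← Polynomial.card_rootSet_eq_natDegree (K := Ω) (minpoly.irreducible hxint).separable
    (IsAlgClosed.splits _)] at h2
  obtain ⟨y, hy⟩ := Fintype.exists_ne_of_one_lt_card h2
    (if h : b ∈ (minpoly K x).rootSet Ω then ⟨b, h⟩ else Classical.choice (Fintype.card_pos_iff.1 (by omega)))
  have hyb : (y : Ω) ≠ b := by
    rintro rfl
    rw [dif_pos y.2] at hy
    exact hy rfl
  obtain ⟨j, hj⟩ := IntermediateField.exists_algHom_of_splits_of_aeval (K := Ω)
    (fun s : E => ⟨Algebra.IsIntegral.isIntegral (R := K) s, IsAlgClosed.splits _⟩)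
    (Polynomial.aeval_eq_zero_of_mem_rootSet y.2)
  exact ⟨j, hj ▸ hyb⟩

lemma exists_finite_basis {k F : Type} [Field k] [Field F] [Algebra k F]
    (h : Algebra.trdeg k F < Cardinal.aleph0) :
    ∃ (δ : Type) (_ : Fintype δ) (x : δ → F), IsTranscendenceBasis k x := by
  obtain ⟨δ, x, hx⟩ := exists_isTranscendenceBasis' k F
  rw [← hx.cardinalMk_eq_trdeg, Cardinal.lt_aleph0_iff_fintype] at h
  exact ⟨δ, h.some, x, hx⟩

section
variable {k F k₁ F₁ K L ι : Type} [Field k] [IsAlgClosed k] [CharZero k] [Field F] [Field k₁]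
  [Field F₁] [Field K] [Field L] [Algebra k F]
  [Algebra k k₁] [Algebra k₁ F₁] [Algebra F F₁] [Algebra k F₁] [IsScalarTower k F F₁]
  [IsScalarTower k k₁ F₁] [Fintype ι] [DecidableEq ι] {z : Option ι → F}
  (G₁ : GenSec k F k₁ F₁ (Option ι) z)
  [Algebra k₁ K] [Algebra K L] [Algebra F₁ L] [Algebra k₁ L] [IsScalarTower k₁ F₁ L]
  [IsScalarTower k₁ K L] 

lemma adjoin_some_eq_top (hz0 : z none = 1) (hz : IntermediateField.adjoin k (Set.range z) = ⊤) :
    IntermediateField.adjoin k (Set.range (z ∘ some)) = ⊤ := by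
  rw [eq_top_iff, ← hz, IntermediateField.adjoin_le_iff]
  rintro _ ⟨_ | i, rfl⟩
  · rw [hz0]; exact one_mem _
  · exact IntermediateField.subset_adjoin _ _ ⟨i, rfl⟩

/-- The monodromy of the points of a general linear section of codimension two is twice
transitive: the extension `L / K` has no proper intermediate field. -/
theorem adjoin_eq_top_of_section [Algebra k L] [IsScalarTower k F₁ L] [IsScalarTower k k₁ L]
    (G₂ : GenSec k₁ F₁ K L (Option ι) (fun i => algebraMap F F₁ (z i)))
    (hind₁ : AlgebraicIndependent F (fun i : ι => G₁.φ (X (some i))))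
    (hind₂ : AlgebraicIndependent F₁ (fun i : ι => G₂.φ (X (some i))))
    (hz0 : z none = 1) (hz : IntermediateField.adjoin k (Set.range z) = ⊤)
    {i : ι} (hi : z (some i) ∉ Set.range (algebraMap k F)) (hd : Algebra.trdeg k F ≤ 2)
    [FiniteDimensional K L] (c : L) (hc : c ∉ Set.range (algebraMap K L)) :
    IntermediateField.adjoin K {c} = ⊤ := by
  obtain ⟨δ, _, x, hx⟩ := exists_finite_basis (hd.trans_lt Cardinal.natCast_lt_aleph0)
  have hδ := hx.cardinalMk_eq_trdeg
  rw [Cardinal.mk_fintype] at hδ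
  have hδ2 : Fintype.card δ ≤ 2 := by
    rw [← hδ] at hd; exact_mod_cast hd
  let Ω := AlgebraicClosure L
  let f : F →ₐ[k] L := (IsScalarTower.toAlgHom k F₁ L).comp (IsScalarTower.toAlgHom k F F₁)
  let u : Bool → ι → L := fun b i => b.rec (algebraMap F₁ L (G₁.coef (some i))) (G₂.coef (some i))
  have : CharZero K := by
    have : CharZero k₁ := charZero_of_injective_algebraMap (algebraMap k k₁).injective
    exact charZero_of_injective_algebraMap (algebraMap k₁ K).injective
  have hG : IntermediateField.adjoin k (Set.range f ∪ Set.range fun p : Bool × ι => u p.1 p.2) = ⊤ := by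
    set E := IntermediateField.adjoin k (Set.range f ∪ Set.range fun p : Bool × ι => u p.1 p.2)
    have h1 : ∀ y : F₁, algebraMap F₁ L y ∈ E := by
      intro y
      have hy : y ∈ IntermediateField.adjoin k (Set.range (algebraMap F F₁) ∪
        Set.range fun i : ι => G₁.coef (some i)) := G₁.adjoin_coef hz0 ▸ IntermediateField.mem_top
      induction hy using IntermediateField.adjoin_induction with
      | mem x hx =>
        rcases hx with ⟨y, rfl⟩ | ⟨i, rfl⟩
        · exact IntermediateField.subset_adjoin _ _ (Or.inl ⟨y, rfl⟩)
        · exact IntermediateField.subset_adjoin _ _ (Or.inr ⟨(false, i), rfl⟩)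
      | algebraMap c =>
        rw [← IsScalarTower.algebraMap_apply]; exact IntermediateField.algebraMap_mem _ _
      | add x y _ _ hx hy => rw [map_add]; exact add_mem hx hy
      | inv x _ hx => rw [map_inv₀]; exact inv_mem hx
      | mul x y _ _ hx hy => rw [map_mul]; exact mul_mem hx hy
    rw [eq_top_iff]
    rintro y -
    have hy : y ∈ IntermediateField.adjoin k₁ (Set.range (algebraMap F₁ L) ∪
      Set.range fun i : ι => G₂.coef (some i)) :=
      G₂.adjoin_coef (by rw [hz0, map_one]) ▸ IntermediateField.mem_top
    induction hy using IntermediateField.adjoin_induction with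
    | mem x hx =>
      rcases hx with ⟨y, rfl⟩ | ⟨i, rfl⟩
      · exact h1 y
      · exact IntermediateField.subset_adjoin _ _ (Or.inr ⟨(true, i), rfl⟩)
    | algebraMap c => rw [IsScalarTower.algebraMap_apply k₁ F₁ L]; exact h1 _
    | add x y _ _ hx hy => exact add_mem hx hy
    | inv x _ hx => exact inv_mem hx
    | mul x y _ _ hx hy => exact mul_mem hx hy
  have htr : ((2 * Fintype.card δ + Fintype.card Bool * (Fintype.card ι - 1) : ℕ) : Cardinal)
      ≤ Algebra.trdeg k Ω := by
    have hι : 0 < Fintype.card ι := Fintype.card_pos_iff.2 ⟨i⟩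
    have e1 := trdeg_add_eq k L (A := Ω)
    have e2 := trdeg_add_eq k F₁ (A := L)
    have e3 := G₁.trdeg_add_le hind₁
    have e4 := hind₂.cardinalMk_le_trdeg
    rw [Cardinal.mk_fintype] at e4
    rw [← hδ] at e3
    calc ((2 * Fintype.card δ + Fintype.card Bool * (Fintype.card ι - 1) : ℕ) : Cardinal)
        ≤ ((Fintype.card δ + Fintype.card ι + Fintype.card ι : ℕ) : Cardinal) := by
          rw [Nat.cast_le, Fintype.card_bool]; omega
      _ ≤ Algebra.trdeg k F₁ + Algebra.trdeg F₁ L := by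
          push_cast; exact add_le_add e3 e4
      _ ≤ Algebra.trdeg k Ω := by rw [e2, ← e1]; exact le_self_add
  have hkL : ∀ y : k, algebraMap k L y = algebraMap K L (algebraMap k₁ K (algebraMap k k₁ y)) := by
    intro y
    rw [← IsScalarTower.algebraMap_apply k₁ K L, ← IsScalarTower.algebraMap_apply k k₁ L]
  let res : (L →ₐ[K] Ω) → (L →ₐ[k] Ω) := fun j => { j.toRingHom with
    commutes' := fun y => by
      change j (algebraMap k L y) = _
      rw [hkL, j.commutes, IsScalarTower.algebraMap_apply k L Ω, hkL]
      rfl }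
  let a : L →ₐ[K] Ω := IsScalarTower.toAlgHom K L Ω
  have hpair : ∀ j : L →ₐ[K] Ω, IsPair δ (z ∘ some) f u (res a) (res j) := by
    intro j
    have hres : ∀ (b : L →ₐ[K] Ω) y, res b y = b y := fun _ _ => rfl
    have hk₁ : ∀ (b : L →ₐ[K] Ω) (y : k₁), b (algebraMap F₁ L (algebraMap k₁ F₁ y)) =
        algebraMap K Ω (algebraMap k₁ K y) := fun b y => by
      rw [← IsScalarTower.algebraMap_apply k₁ F₁ L, IsScalarTower.algebraMap_apply k₁ K L,
        b.commutes]
    have hfalse : ∀ (b : L →ₐ[K] Ω),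
        ∑ i, b (f (z (some i))) * b (u false i) = - b (algebraMap F₁ L (G₁.coef none)) := by
      intro b
      rw [← map_neg, ← map_neg, ← G₁.sum_coef hz0, map_sum, map_sum]
      exact Finset.sum_congr rfl fun i _ => by rw [map_mul, map_mul]; rfl
    have htrue : ∀ (b : L →ₐ[K] Ω),
        ∑ i, b (f (z (some i))) * b (u true i) = - b (G₂.coef none) := by
      intro b
      rw [← map_neg, ← G₂.sum_coef (by rw [hz0, map_one]), map_sum]
      exact Finset.sum_congr rfl fun i _ => by rw [map_mul]; rfl
    refine ⟨?_, ?_, ?_, htr⟩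
    · rintro (_ | _) i
      · change a (algebraMap F₁ L (G₁.coef (some i))) = j (algebraMap F₁ L (G₁.coef (some i)))
        rw [G₁.coef_eq, hk₁, hk₁]
      · change a (G₂.coef (some i)) = j (G₂.coef (some i))
        rw [G₂.coef_eq, a.commutes, j.commutes]
    · simp only [hres, Function.comp_apply]
      rintro (_ | _)
      · rw [hfalse, hfalse, G₁.coef_eq, hk₁, hk₁]
      · rw [htrue, htrue, G₂.coef_eq, a.commutes, j.commutes]
    · intro w
      have hw : IsAlgebraic L w := Algebra.IsAlgebraic.isAlgebraic w
      let B := Algebra.adjoin k (Set.range (res a) ∪ Set.range (res j))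
      let g : L →ₐ[k] B := (res a).codRestrict B
        fun s => Algebra.subset_adjoin (Or.inl ⟨s, rfl⟩)
      exact hw.ringHom_of_comp_eq g.toRingHom (RingHom.id Ω) g.toRingHom.injective rfl
  have hne : ∀ j : L →ₐ[K] Ω, a ≠ j → res a ≠ res j := fun j h h' => h (AlgHom.ext fun x =>
    AlgHom.congr_fun h' x)
  obtain ⟨j', hj'⟩ := exists_algHom_ne hc (a c)
  by_contra htop
  obtain ⟨y, hy⟩ : ∃ y : L, y ∉ IntermediateField.adjoin K {c} := by
    by_contra! h
    exact htop (eq_top_iff.2 fun y _ => h y)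
  obtain ⟨j, hj⟩ := exists_algHom_ne (K := IntermediateField.adjoin K {c}) (E := L) (Ω := Ω)
    (x := y) (by rintro ⟨w, rfl⟩; exact hy w.2) (a y)
  have hjc : j c = a c := j.commutes ⟨c, IntermediateField.mem_adjoin_simple_self K c⟩
  refine hj' (Eq.symm ?_)
  refine (hpair (j.restrictScalars K)).compare (hpair j') hx (adjoin_some_eq_top hz0 hz) hG
    (hne _ fun h => hj (AlgHom.congr_fun h y).symm) (hne _ fun h => hj' (AlgHom.congr_fun h c).symm)
    hi c ?_
  exact hjc.symm
end
end SurfGenus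

/-! ### Irreducibility of the generic hyperplane section -/

namespace SurfGenus
set_option linter.unusedSectionVars false

/-- An embedding of the field of algebraic elements extends to a field of transcendence degree one,
sending a given transcendental element to a given transcendental element. -/
lemma exists_extend {k₁ F₁ Ω : Type} [Field k₁] [Field F₁] [Field Ω] [Algebra k₁ F₁] [Algebra k₁ Ω]
    [Algebra F₁ Ω] [IsScalarTower k₁ F₁ Ω] [IsAlgClosed Ω] {t : F₁} (ht : Transcendental k₁ t)
    (hd : Algebra.trdeg k₁ F₁ ≤ 1) {T : Ω} (hT : Transcendental F₁ T)
    (j₀ : algebraicClosure k₁ F₁ →ₐ[k₁] Ω) :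
    ∃ j : F₁ →ₐ[k₁] Ω, (∀ e : algebraicClosure k₁ F₁, j e = j₀ e) ∧ j t = T := by
  let E := algebraicClosure k₁ F₁
  let R := Polynomial E
  have ht' : Transcendental E t := ht.extendScalars E
  have hb : IsTranscendenceBasis k₁ (fun _ : Unit => t) :=
    (algebraicIndependent_unique_type_iff.2 ht).isTranscendenceBasis_of_trdeg_le_of_finite
      (by simpa using hd)
  let f₁ : R →ₐ[E] F₁ := Polynomial.aeval t
  let f₂ : R →+* Ω := Polynomial.eval₂RingHom j₀.toRingHom T
  have hf₁ : Function.Injective f₁ := transcendental_iff_injective.1 ht'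
  have hf₂ : Function.Injective f₂ := by
    let B := algebraicClosure F₁ Ω
    have hB : ∀ e, j₀ e ∈ B := fun e => mem_algebraicClosure_iff.2
      (((Algebra.IsAlgebraic.isAlgebraic (R := k₁) e).algHom j₀).tower_top F₁)
    let g : E →+* B := j₀.toRingHom.codRestrict B hB
    have hTB : Transcendental B T := hT.extendScalars B
    have h1 := transcendental_iff_injective.1 hTB
    have h2 : Function.Injective ((Polynomial.aeval T : Polynomial B →ₐ[B] Ω) ∘
        Polynomial.map g) := h1.comp (Polynomial.map_injective g g.injective)
    intro p q hpq
    refine h2 ?_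
    have h3 : ∀ p : R, Polynomial.aeval T (Polynomial.map g p) = f₂ p := by
      intro p
      rw [Polynomial.aeval_def, Polynomial.eval₂_map]
      rfl
    rw [Function.comp_apply, Function.comp_apply, h3, h3, hpq]
  let _ : Algebra R F₁ := f₁.toRingHom.toAlgebra
  let _ : Algebra R Ω := f₂.toAlgebra
  have : Module.IsTorsionFree R F₁ := Module.isTorsionFree_iff_algebraMap_injective.2 hf₁
  have : Module.IsTorsionFree R Ω := Module.isTorsionFree_iff_algebraMap_injective.2 hf₂
  have : Algebra.IsAlgebraic R F₁ := by
    refine ⟨fun w => ?_⟩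
    have hw := hb.isAlgebraic.isAlgebraic w
    let S := f₁.range
    have hle : Algebra.adjoin k₁ (Set.range fun _ : Unit => t) ≤ S.restrictScalars k₁ := by
      rw [Algebra.adjoin_le_iff]
      rintro _ ⟨_, rfl⟩
      exact ⟨Polynomial.X, Polynomial.aeval_X t⟩
    have hw' : IsAlgebraic S w := hw.ringHom_of_comp_eq
      (Subalgebra.inclusion hle).toRingHom (RingHom.id F₁) (Subalgebra.inclusion_injective hle) rfl
    exact IsAlgebraic.of_ringHom_of_comp_eq (f₁.rangeRestrict.toRingHom) (RingHom.id F₁)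
      (a := w) hw' f₁.rangeRestrict_surjective Function.injective_id rfl
  let j : F₁ →ₐ[R] Ω := IsAlgClosed.lift
  have hj : ∀ p : R, j (f₁ p) = f₂ p := fun p => j.commutes p
  have hjE : ∀ e : E, j e = j₀ e := fun e => by
    have := hj (Polynomial.C e)
    rw [show f₁ (Polynomial.C e) = (e : F₁) from Polynomial.aeval_C t e] at this
    rw [this]
    exact Polynomial.eval₂_C _ _
  refine ⟨{ j.toRingHom with commutes' := fun c => ?_ }, hjE, ?_⟩
  · change j (algebraMap k₁ F₁ c) = _
    rw [← j₀.commutes, ← hjE]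
    rfl
  · change j t = T
    have := hj Polynomial.X
    rw [show f₁ Polynomial.X = t from Polynomial.aeval_X t] at this
    rw [this]
    exact Polynomial.eval₂_X _ _

variable {k F k₁ F₁ ι : Type} [Field k] [IsAlgClosed k] [CharZero k] [Field F] [Field k₁]
  [Field F₁] [Algebra k F]
  [Algebra k k₁] [Algebra k₁ F₁] [Algebra F F₁] [Algebra k F₁] [IsScalarTower k F F₁]
  [IsScalarTower k k₁ F₁] [Fintype ι] [DecidableEq ι] {z : Option ι → F}
  (G₁ : GenSec k F k₁ F₁ (Option ι) z)

open MvPolynomial in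
/-- A general hyperplane section of a surface is geometrically irreducible: the constants `k₁`
are algebraically closed in its function field `F₁`. -/
theorem mem_range_of_isAlgebraic
    (hind₁ : AlgebraicIndependent F (fun i : ι => G₁.φ (X (some i))))
    (hz0 : z none = 1) (hz : IntermediateField.adjoin k (Set.range z) = ⊤)
    {i : ι} (hi : z (some i) ∉ Set.range (algebraMap k F)) (hd : Algebra.trdeg k F ≤ 2)
    (hd₁ : Algebra.trdeg k₁ F₁ ≤ 1) {t : F₁} (ht : Transcendental k₁ t)
    {y : F₁} (hy : IsAlgebraic k₁ y) : y ∈ Set.range (algebraMap k₁ F₁) := by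
  obtain ⟨δ, _, x, hx⟩ := exists_finite_basis (hd.trans_lt Cardinal.natCast_lt_aleph0)
  have hδ := hx.cardinalMk_eq_trdeg
  rw [Cardinal.mk_fintype] at hδ
  have hδ2 : Fintype.card δ ≤ 2 := by
    rw [← hδ] at hd; exact_mod_cast hd
  let P := Polynomial F₁
  let Q := FractionRing P
  let Ω := AlgebraicClosure Q
  have hPΩ : Function.Injective (algebraMap P Ω) := by
    rw [IsScalarTower.algebraMap_eq P Q Ω]
    exact (algebraMap Q Ω).injective.comp (IsFractionRing.injective P Q)
  let T : Ω := algebraMap P Ω Polynomial.X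
  have hT : Transcendental F₁ T :=
    (transcendental_algebraMap_iff hPΩ).2 (Polynomial.transcendental_X F₁)
  have hkF : IsScalarTower k F₁ Ω := inferInstance
  have hk₁F : IsScalarTower k₁ F₁ Ω := inferInstance
  have hkk₁ : IsScalarTower k k₁ Ω := IsScalarTower.of_algebraMap_eq fun c => by
    rw [IsScalarTower.algebraMap_apply k F₁ Ω, IsScalarTower.algebraMap_apply k k₁ F₁,
      ← IsScalarTower.algebraMap_apply k₁ F₁ Ω]
  let f : F →ₐ[k] F₁ := IsScalarTower.toAlgHom k F F₁
  let u : Unit → ι → F₁ := fun _ i => G₁.coef (some i)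
  have hG : IntermediateField.adjoin k (Set.range f ∪ Set.range fun p : Unit × ι => u p.1 p.2) = ⊤ := by
    rw [eq_top_iff, ← G₁.adjoin_coef hz0]
    apply IntermediateField.adjoin.mono
    rintro _ (⟨y, rfl⟩ | ⟨i, rfl⟩)
    · exact Or.inl ⟨y, rfl⟩
    · exact Or.inr ⟨((), i), rfl⟩
  have htr : ((2 * Fintype.card δ + Fintype.card Unit * (Fintype.card ι - 1) : ℕ) : Cardinal)
      ≤ Algebra.trdeg k Ω := by
    have hι : 0 < Fintype.card ι := Fintype.card_pos_iff.2 ⟨i⟩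
    have e1 := trdeg_add_eq k F₁ (A := Ω)
    have e3 := G₁.trdeg_add_le hind₁
    have e4 := (algebraicIndependent_unique_type_iff (x := fun _ : Unit => T).2 hT).cardinalMk_le_trdeg
    rw [Cardinal.mk_fintype] at e4
    rw [← hδ] at e3
    calc ((2 * Fintype.card δ + Fintype.card Unit * (Fintype.card ι - 1) : ℕ) : Cardinal)
        ≤ ((Fintype.card δ + Fintype.card ι + Fintype.card Unit : ℕ) : Cardinal) := by
          rw [Nat.cast_le, Fintype.card_unit]; omega
      _ ≤ Algebra.trdeg k F₁ + Algebra.trdeg F₁ Ω := by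
          push_cast; exact add_le_add e3 e4
      _ ≤ Algebra.trdeg k Ω := by rw [e1]
  let res : (F₁ →ₐ[k₁] Ω) → (F₁ →ₐ[k] Ω) := fun j => { j.toRingHom with
    commutes' := fun y => by
      change j (algebraMap k F₁ y) = _
      rw [IsScalarTower.algebraMap_apply k k₁ F₁, j.commutes,
        ← IsScalarTower.algebraMap_apply k k₁ Ω] }
  let a : F₁ →ₐ[k₁] Ω := IsScalarTower.toAlgHom k₁ F₁ Ω
  have hpair : ∀ j : F₁ →ₐ[k₁] Ω, j t = T → IsPair δ (z ∘ some) f u (res a) (res j) := by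
    intro j hjt
    have hres : ∀ (b : F₁ →ₐ[k₁] Ω) y, res b y = b y := fun _ _ => rfl
    have hsum : ∀ (b : F₁ →ₐ[k₁] Ω),
        ∑ i, b (f (z (some i))) * b (u () i) = - b (G₁.coef none) := by
      intro b
      rw [← map_neg, ← G₁.sum_coef hz0, map_sum]
      exact Finset.sum_congr rfl fun i _ => by rw [map_mul]; rfl
    refine ⟨?_, ?_, ?_, htr⟩
    · rintro _ i
      change a (G₁.coef (some i)) = j (G₁.coef (some i))
      rw [G₁.coef_eq, a.commutes, j.commutes]
    · simp only [hres, Function.comp_apply]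
      rintro _
      rw [hsum, hsum, G₁.coef_eq, a.commutes, j.commutes]
    · intro w
      have hw : IsAlgebraic P w :=
        (IsFractionRing.isAlgebraic_iff P Q Ω).2 (Algebra.IsAlgebraic.isAlgebraic (R := Q) w)
      let B := Algebra.adjoin k (Set.range (res a) ∪ Set.range (res j))
      have hB : ∀ p : P, algebraMap P Ω p ∈ B := by
        intro p
        induction p using Polynomial.induction_on' with
        | add p q hp hq => rw [map_add]; exact add_mem hp hq
        | monomial n c =>
          rw [← Polynomial.C_mul_X_pow_eq_monomial, map_mul, map_pow]
          have h1 : algebraMap P Ω (Polynomial.C c) ∈ B :=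
            Algebra.subset_adjoin (Or.inl ⟨c, IsScalarTower.algebraMap_apply F₁ P Ω c⟩)
          have h2 : algebraMap P Ω Polynomial.X ∈ B := Algebra.subset_adjoin (Or.inr ⟨t, hjt⟩)
          exact mul_mem h1 (pow_mem h2 n)
      let g : P →+* B := (algebraMap P Ω).codRestrict B hB
      refine hw.ringHom_of_comp_eq g (RingHom.id Ω) ?_ rfl
      intro p q hpq
      exact hPΩ (congrArg Subtype.val hpq)
  have hne : ∀ j : F₁ →ₐ[k₁] Ω, j t = T → res a ≠ res j := fun j hj h => by
    have : a t = j t := AlgHom.congr_fun h t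
    rw [hj] at this
    exact hT (this ▸ isAlgebraic_algebraMap t)
  by_contra hcon
  let E := algebraicClosure k₁ F₁
  let y' : E := ⟨y, mem_algebraicClosure_iff.2 hy⟩
  have : CharZero k₁ := charZero_of_injective_algebraMap (algebraMap k k₁).injective
  obtain ⟨j₀, hj₀⟩ := exists_algHom_ne (K := k₁) (E := E) (Ω := Ω) (x := y')
    (by rintro ⟨c, hc⟩; exact hcon ⟨c, congrArg Subtype.val hc⟩) (a y)
  obtain ⟨j, hj, hjt⟩ := exists_extend ht hd₁ hT (a.comp E.val)
  obtain ⟨j', hj', hjt'⟩ := exists_extend ht hd₁ hT j₀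
  refine hj₀ ?_
  rw [← hj' y']
  refine ((hpair j hjt).compare (hpair j' hjt') hx (adjoin_some_eq_top hz0 hz) hG
    (hne _ hjt) (hne _ hjt') hi y ?_).symm
  exact (hj y').symm
end SurfGenus

/-! ### Numerical consequences -/

namespace SurfGenus
set_option linter.unusedSectionVars false

/-- Let `hA`, `hB`, `hD` satisfy the inequalities between the Hilbert functions of a surface and of
its successive hyperplane sections. If `hA` is eventually a quadratic polynomial with leading
coefficient `s / 2`, then `hD ≤ s`. -/
lemma numeric_bound {hA hB hD : ℕ → ℕ} {s π pa : ℤ} {N : ℕ}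
    (lowA : ∀ t, hA t + hB (t + 1) ≤ hA (t + 1)) (lowB : ∀ t, hB t + hD (t + 1) ≤ hB (t + 1))
    (mono : Monotone hD)
    (quad : ∀ t : ℕ, N ≤ t → 2 * (hA t : ℤ) = s * (t * (t + 1)) + 2 * (1 - π) * t + 2 + 2 * pa)
    (m : ℕ) : (hD m : ℤ) ≤ s := by
  by_contra! hlt
  have h1 : ∀ n : ℕ, (s + 1) * n ≤ hB (m + n) := by
    intro n
    induction n with
    | zero => simp
    | succ n ih =>
      have e1 := lowB (m + n)
      have e2 := mono (show m ≤ m + n + 1 by omega)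
      rw [← add_assoc]; push_cast
      zify at e1 e2; linarith
  have h2 : ∀ n : ℕ, (s + 1) * (n * (n + 1)) ≤ 2 * hA (m + n) := by
    intro n
    induction n with
    | zero => simp
    | succ n ih =>
      have e1 := lowA (m + n)
      have e2 := h1 (n + 1)
      rw [← add_assoc] at e2 ⊢; push_cast at e2 ⊢
      zify at e1; linarith
  set C : ℤ := 2 * s * m + 2 * (1 - π)
  set D : ℤ := s * (m * m + m) + 2 * (1 - π) * m + 2 + 2 * pa
  let n : ℕ := C.natAbs + D.natAbs + 1 + N
  have e1 := h2 n
  have e2 := quad (m + n) (by omega)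
  have e3 : (n : ℤ) = |C| + |D| + 1 + N := by simp [n]
  have e4 : (s + 1) * (n * (n + 1)) ≤ s * (n * (n + 1)) + C * n + D := by
    refine e1.trans (le_of_eq ?_)
    rw [e2]; push_cast; simp only [C, D]; ring
  have e5 := le_abs_self C
  have e6 := le_abs_self D
  have e7 := abs_nonneg C
  have e8 := abs_nonneg D
  have e9 : (0 : ℤ) ≤ N := by positivity
  have hn : (1 : ℤ) ≤ n := by linarith
  nlinarith [mul_le_mul_of_nonneg_right (show C ≤ n - |D| - 1 by linarith) (show (0 : ℤ) ≤ n by linarith),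
    mul_nonneg e8 (show (0 : ℤ) ≤ n - 1 by linarith)]

/-- Linear growth contradicts the quadratic Hilbert polynomial. -/
lemma numeric_linear {hA : ℕ → ℕ} {s π pa : ℤ} {N : ℕ} (hs : 0 < s) {c : ℕ}
    (quad : ∀ t : ℕ, N ≤ t → 2 * (hA t : ℤ) = s * (t * (t + 1)) + 2 * (1 - π) * t + 2 + 2 * pa)
    (up : ∀ t, hA t ≤ 1 + c * t) : False := by
  set C : ℤ := 2 * c - 2 * (1 - π)
  set D : ℤ := - 2 * pa
  let n : ℕ := C.natAbs + D.natAbs + 1 + N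
  have e1 := up n
  have e2 := quad n (by omega)
  have e3 : (n : ℤ) = |C| + |D| + 1 + N := by simp [n]
  have e5 := le_abs_self C
  have e6 := le_abs_self D
  have e7 := abs_nonneg C
  have e8 := abs_nonneg D
  have e9 : (0 : ℤ) ≤ N := by positivity
  have hn : (1 : ℤ) ≤ n := by linarith
  zify at e1
  have e4 : s * (n * (n + 1)) ≤ C * n + D := by
    simp only [C, D]; linarith
  nlinarith [mul_le_mul_of_nonneg_right (show C ≤ n - |D| - 1 by linarith) (show (0 : ℤ) ≤ n by linarith),
    mul_nonneg e8 (show (0 : ℤ) ≤ n - 1 by linarith),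
    mul_le_mul_of_nonneg_right (show (1 : ℤ) ≤ s from hs) (show (0 : ℤ) ≤ n * (n + 1) by positivity)]

/-- A sequence that strictly decreases until it vanishes has sum at most a triangular number. -/
lemma sum_le_triangle {d : ℕ → ℤ} (anti : ∀ t, d (t + 1) ≤ d t)
    (hstab : ∀ t, d (t + 1) = d t → d (t + 2) = d (t + 1)) {n : ℕ} (ev : ∀ t, n ≤ t → d t = 0)
    (T : ℕ) : 2 * ∑ t ∈ Finset.range T, d t ≤ d 0 * (d 0 + 1) := by
  have hanti : Antitone d := antitone_nat_of_succ_le anti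
  have hpos : ∀ t, 0 ≤ d t := fun t => by
    rw [← ev (max n t) (le_max_left _ _)]; exact hanti (le_max_right _ _)
  have hstrict : ∀ t, d t ≠ 0 → d (t + 1) ≤ d t - 1 := by
    intro t ht
    by_contra! hlt
    have h1 : d (t + 1) = d t := le_antisymm (anti t) (by linarith)
    have h2 : ∀ m, d (t + m + 1) = d (t + m) := by
      intro m
      induction m with
      | zero => exact h1
      | succ m ih => exact hstab _ ih
    have h3 : ∀ m, d (t + m) = d t := by
      intro m
      induction m with
      | zero => rfl
      | succ m ih => rw [← add_assoc, h2, ih]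
    exact ht ((h3 n).symm.trans (ev _ (by omega)))
  have key : 2 * ∑ t ∈ Finset.range T, d t + d T * (d T + 1) ≤ d 0 * (d 0 + 1) := by
    induction T with
    | zero => simp
    | succ T ih =>
      rw [Finset.sum_range_succ]
      by_cases h0 : d T = 0
      · have : d (T + 1) = 0 := le_antisymm (h0 ▸ anti T) (hpos _)
        rw [this, h0]; rw [h0] at ih; linarith
      · have h1 := hstrict T h0
        have h2 := hpos (T + 1)
        nlinarith
  have := hpos T
  nlinarith

/-- The numerical part of the bound. Here `hA`, `hB` are the Hilbert functions of the surface and of its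
generic hyperplane section, `a`, `b` those of their saturations, and `s'` is the number of points of
the section of codimension two. The deficits `b t - hB t` decrease strictly until they vanish, which
bounds their sum by a triangular number and `pa` from below; the upper bound comes from `upA`. -/
lemma numeric_end {hA hB a b : ℕ → ℕ} {r s' n N : ℕ} {s π pa : ℤ}
    (hA0 : hA 0 = 1) (hB1 : hB 1 = r) (lowA : ∀ t, hA t + hB (t + 1) ≤ hA (t + 1))
    (lowB : ∀ t, 1 ≤ t → hB t + s' ≤ hB (t + 1))
    (step : ∀ t, 1 ≤ t → hB (t + 1) = hB t + s' → hB (t + 2) ≤ hB (t + 1) + s')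
    (hb : ∀ t, 1 ≤ t → b (t + 1) = b t + s') (ha0 : a 0 = 1)
    (upA : ∀ t, a (t + 1) ≤ a t + b (t + 1)) (hAa : ∀ t, hA t ≤ a t)
    (ev : ∀ t, n ≤ t → hA (t + 1) = hA t + hB (t + 1) ∧ hB t = b t)
    (quad : ∀ t : ℕ, N ≤ t → 2 * (hA t : ℤ) = s * (t * (t + 1)) + 2 * (1 - π) * t + 2 + 2 * pa) :
    -((s - r + 1 - π + 1) * (s - r + 1 - π)) ≤ 2 * pa ∧ pa ≤ 0 := by
  have hbt : ∀ t, b (t + 1) = b 1 + t * s' := by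
    intro t
    induction t with
    | zero => simp
    | succ t ih => rw [hb (t + 1) (by omega), ih]; ring
  have hlarge : ∀ t, n + N ≤ t → (b (t + 1) : ℤ) = s * (t + 1) + 1 - π := by
    intro t ht
    have e1 := (ev t (by omega)).1
    have e2 := (ev (t + 1) (by omega)).2
    have e3 := quad t (by omega)
    have e4 := quad (t + 1) (by omega)
    rw [← e2]; zify at e1; push_cast at e4; linarith
  have hss : (s' : ℤ) = s := by
    have e1 := hlarge (n + N) le_rfl
    have e2 := hlarge (n + N + 1) (by omega)
    rw [hb _ (by omega)] at e2
    push_cast at e1 e2; linarith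
  have hb1 : (b 1 : ℤ) = s + 1 - π := by
    have e1 := hlarge (n + N) le_rfl
    rw [hbt] at e1
    push_cast at e1; rw [hss] at e1; linarith
  have hbz : ∀ t : ℕ, (b (t + 1) : ℤ) = s * (t + 1) + 1 - π := by
    intro t; rw [hbt]; push_cast; rw [hss, hb1]; ring
  constructor
  · let d : ℕ → ℤ := fun t => (b (t + 1) : ℤ) - hB (t + 1)
    have hanti : ∀ t, d (t + 1) ≤ d t := by
      intro t
      have e1 := lowB (t + 1) (by omega)
      have e2 := hb (t + 1) (by omega)
      simp only [d]; zify at e1 e2; linarith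
    have hsum := sum_le_triangle (d := d) hanti (fun t ht => by
      have e1 := lowB (t + 2) (by omega)
      have e2 := hb (t + 1) (by omega)
      have e3 := hb (t + 2) (by omega)
      have e4 := step (t + 1) (by omega) (by
        simp only [d] at ht; zify; zify at e2; linarith)
      simp only [d]; zify at e1 e2 e3 e4
      rw [show t + 2 + 1 = t + 1 + 2 by ring, show t + 1 + 1 = t + 2 by ring] at *
      linarith) (n := n) (fun t ht => by
      simp only [d]; rw [(ev (t + 1) (by omega)).2]; simp)
    have hlow : ∀ T : ℕ, 2 + s * (T * (T + 1)) + 2 * (1 - π) * T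
        - 2 * ∑ t ∈ Finset.range T, d t ≤ 2 * hA T := by
      intro T
      induction T with
      | zero => simp [hA0]
      | succ T ih =>
        have e1 := lowA T
        have e2 := hbz T
        rw [Finset.sum_range_succ]
        simp only [d] at ih ⊢; zify at e1; push_cast; linarith
    have e1 := hlow N
    have e2 := quad N le_rfl
    have e3 := hsum N
    have e4 : d 0 = s + 1 - π - r := by simp only [d, zero_add, hb1, hB1]
    rw [e4] at e3
    linarith
  · have hup : ∀ T : ℕ, 2 * (a T : ℤ) ≤ 2 + s * (T * (T + 1)) + 2 * (1 - π) * T := by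
      intro T
      induction T with
      | zero => simp [ha0]
      | succ T ih =>
        have e1 := upA T
        have e2 := hbz T
        zify at e1; push_cast; linarith
    have e1 := hup N
    have e2 := quad N le_rfl
    have e3 := hAa N
    zify at e3
    linarith
end SurfGenus

/-! ### Saturation in degree zero and in large degrees -/

namespace SurfGenus
set_option linter.unusedSectionVars false

section Aux
variable {k F : Type} [Field k] [Field F] [Algebra k F] {V : Submodule k F}

lemma finrank_one_submodule : Module.finrank k (1 : Submodule k F) = 1 := by
  rw [Submodule.one_eq_span]; exact finrank_span_singleton one_ne_zero

/-- The saturation in degree zero consists of constants. -/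
lemma sat_zero (hV : V.FG) (h1 : (1 : F) ∈ V)
    (hc : ∀ x : F, IsAlgebraic k x → x ∈ Set.range (algebraMap k F)) : sat V 0 = 1 := by
  refine le_antisymm ?_ (pow_zero V ▸ pow_le_sat V 0)
  intro x hx
  obtain ⟨c, rfl⟩ := hc x (isAlgebraic_of_mem_sat_zero hV h1 hx).isAlgebraic
  exact Submodule.mem_one.2 ⟨c, rfl⟩

/-- If the saturation is generated in bounded degree, then it agrees with the powers of `V` in
large degrees. -/
lemma sat_eventually {t₀ : ℕ} (hfg : (sat V t₀).FG)
    (h : ∀ t, t₀ ≤ t → sat V (t + 1) ≤ V ^ (t + 1) ⊔ V * sat V t) :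
    ∃ n, ∀ t, n ≤ t → sat V t = V ^ t := by
  obtain ⟨n, hn⟩ := exists_mul_pow_le (sat V t₀) hfg le_rfl
  have key : ∀ m, sat V (t₀ + m) ≤ V ^ (t₀ + m) ⊔ V ^ m * sat V t₀ := by
    intro m
    induction m with
    | zero => rw [add_zero, pow_zero, one_mul]; exact le_sup_right
    | succ m ih =>
      refine (h (t₀ + m) (by omega)).trans (sup_le le_sup_left ?_)
      refine (mul_le_mul' le_rfl ih : V * _ ≤ _).trans ?_
      rw [Submodule.mul_sup, ← mul_assoc, ← pow_succ', ← pow_succ']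
      exact le_rfl
  refine ⟨t₀ + n, fun t ht => le_antisymm ?_ (pow_le_sat V t)⟩
  obtain ⟨m, rfl⟩ := Nat.exists_eq_add_of_le (show t₀ ≤ t by omega)
  refine (key m).trans (sup_le le_rfl ?_)
  rw [mul_comm, add_comm]
  exact hn m (by omega)

/-- If the powers of a generating subspace have bounded dimension, some power is everything. -/
lemma exists_pow_eq_top (hV : V.FG) (h1 : (1 : F) ∈ V)
    (hgen : IntermediateField.adjoin k (V : Set F) = ⊤) {c : ℕ}
    (hb : ∀ t, Module.finrank k (V ^ t : Submodule k F) ≤ c) : ∃ t, V ^ t = ⊤ := by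
  obtain ⟨t₀, ht₀⟩ := Nat.sSup_mem (Set.range_nonempty fun t => Module.finrank k (V ^ t : Submodule k F))
    ⟨c, by rintro _ ⟨t, rfl⟩; exact hb t⟩
  have hmax : ∀ t, Module.finrank k (V ^ t : Submodule k F) ≤
      Module.finrank k (V ^ t₀ : Submodule k F) := fun t => by
    have := le_csSup (a := Module.finrank k (V ^ t : Submodule k F))
      (s := Set.range fun t => Module.finrank k (V ^ t : Submodule k F))
      ⟨c, by rintro _ ⟨t, rfl⟩; exact hb t⟩ ⟨t, rfl⟩
    rwa [← ht₀] at this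
  have hst : ∀ t, t₀ ≤ t → V ^ t = V ^ t₀ := by
    intro t ht
    have : Module.Finite k (V ^ t : Submodule k F) := Module.Finite.iff_fg.2 (hV.pow _)
    exact (Submodule.eq_of_le_of_finrank_le (pow_mono' h1 ht) (hmax t)).symm
  set W := V ^ t₀ with hW
  have hfin : Module.Finite k W := Module.Finite.iff_fg.2 (hV.pow _)
  have hW1 : (1 : F) ∈ W := by simpa using Submodule.pow_mem_pow V h1 t₀
  have hmul : ∀ x ∈ W, ∀ y ∈ W, x * y ∈ W := fun x hx y hy => by
    rw [← hst (t₀ + t₀) (by omega), pow_add]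
    exact Submodule.mul_mem_mul hx hy
  refine ⟨t₀, eq_top_iff.2 ?_⟩
  rintro x -
  have hx : x ∈ IntermediateField.adjoin k (V : Set F) := hgen ▸ IntermediateField.mem_top
  change x ∈ W
  induction hx using IntermediateField.adjoin_induction with
  | mem x hx =>
    rw [← hst (t₀ + 1) (by omega), pow_succ']
    simpa using Submodule.mul_mem_mul (N := V ^ t₀) hx hW1
  | algebraMap c => rw [Algebra.algebraMap_eq_smul_one]; exact Submodule.smul_mem _ _ hW1
  | add x y _ _ hx hy => exact add_mem hx hy
  | inv x _ hx =>
    by_cases h0 : x = 0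
    · rw [h0, inv_zero]; exact zero_mem _
    let g : W →ₗ[k] W := (LinearMap.mulLeft k x).restrict fun y hy => hmul x hx y hy
    have hg : Function.Injective g := fun a b hab => Subtype.ext
      (mul_left_cancel₀ h0 (congrArg Subtype.val hab))
    obtain ⟨y, hy⟩ := (LinearMap.injective_iff_surjective.1 hg) ⟨1, hW1⟩
    have : x * y = 1 := congrArg Subtype.val hy
    rw [← eq_inv_of_mul_eq_one_right this]
    exact y.2
  | mul x y _ _ hx hy => exact hmul x hx y hy

/-- If `V` consists of algebraic elements, the dimensions of its saturations are bounded. -/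
lemma sat_bounded {σ : Type} [Fintype σ] {z : σ → F} (hV : V = Submodule.span k (Set.range z))
    (h1 : (1 : F) ∈ V) (hz : ∀ i, IsAlgebraic k (z i)) :
    ∃ c, ∀ t, (sat V t).FG ∧ Module.finrank k (sat V t) ≤ c := by
  let B := Algebra.adjoin k (Set.range z)
  have hB : (Subalgebra.toSubmodule B).FG := fg_adjoin_of_finite (Set.finite_range z)
    (by rintro _ ⟨i, rfl⟩; exact (hz i).isIntegral)
  have hVB : V ≤ Subalgebra.toSubmodule B := by
    rw [hV, Submodule.span_le]; exact Algebra.subset_adjoin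
  have hpow : ∀ n, V ^ n ≤ Subalgebra.toSubmodule B := by
    intro n
    induction n with
    | zero => rw [pow_zero, Submodule.one_le]; exact one_mem B
    | succ n ih =>
      rw [pow_succ, Submodule.mul_le]
      exact fun x hx y hy => mul_mem (S := Subalgebra k F) (ih hx) (hVB hy)
  have hfin : Module.Finite k (Subalgebra.toSubmodule B) := Module.Finite.iff_fg.2 hB
  refine ⟨Module.finrank k (Subalgebra.toSubmodule B), fun t => ?_⟩
  have hle : sat V t ≤ Subalgebra.toSubmodule B := by
    intro x hx
    obtain ⟨n, hn⟩ := mem_sat.1 hx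
    have := hn 1 (by simpa using Submodule.pow_mem_pow V h1 n)
    rw [mul_one] at this
    exact hpow _ this
  have : Module.Finite k (sat V t) := Submodule.finiteDimensional_of_le hle
  exact ⟨Module.Finite.iff_fg.1 this, Submodule.finrank_mono hle⟩

end Aux

lemma GenSec.adjoin_map {k F K F' ι : Type} [Field k] [Field F] [Field K] [Field F'] [Algebra k F]
    [Algebra k K] [Algebra K F'] [Algebra F F'] [Algebra k F'] [IsScalarTower k F F']
    [IsScalarTower k K F'] [Fintype ι] [DecidableEq ι] {z : Option ι → F}
    (G : GenSec k F K F' (Option ι) z) (hz0 : z none = 1)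
    (hz : IntermediateField.adjoin k (Set.range z) = ⊤) :
    IntermediateField.adjoin K (Set.range fun i => algebraMap F F' (z i)) = ⊤ := by
  set E := IntermediateField.adjoin K (Set.range fun i => algebraMap F F' (z i))
  have hk : ∀ c : k, algebraMap k F' c ∈ E := fun c => by
    rw [IsScalarTower.algebraMap_apply k K F']; exact IntermediateField.algebraMap_mem _ _
  have hF : ∀ y : F, algebraMap F F' y ∈ E := by
    intro y
    have hy : y ∈ IntermediateField.adjoin k (Set.range z) := hz ▸ IntermediateField.mem_top
    induction hy using IntermediateField.adjoin_induction with
    | mem x hx =>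
      obtain ⟨i, rfl⟩ := hx; exact IntermediateField.subset_adjoin _ _ ⟨i, rfl⟩
    | algebraMap c => rw [← IsScalarTower.algebraMap_apply]; exact hk c
    | add x y _ _ hx hy => rw [map_add]; exact add_mem hx hy
    | inv x _ hx => rw [map_inv₀]; exact inv_mem hx
    | mul x y _ _ hx hy => rw [map_mul]; exact mul_mem hx hy
  rw [eq_top_iff]
  rintro y -
  have hy : y ∈ IntermediateField.adjoin k (Set.range (algebraMap F F') ∪
    Set.range fun i : ι => G.coef (some i)) := G.adjoin_coef hz0 ▸ IntermediateField.mem_top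
  induction hy using IntermediateField.adjoin_induction with
  | mem x hx =>
    rcases hx with ⟨y, rfl⟩ | ⟨i, rfl⟩
    · exact hF y
    · change G.coef (some i) ∈ E
      rw [G.coef_eq]; exact IntermediateField.algebraMap_mem _ _
  | algebraMap c => exact hk c
  | add x y _ _ hx hy => exact add_mem hx hy
  | inv x _ hx => exact inv_mem hx
  | mul x y _ _ hx hy => exact mul_mem hx hy
end SurfGenus

/-! ### The bound for function fields -/

namespace SurfGenus
set_option linter.unusedSectionVars false

section Core
open MvPolynomial TensorProduct
variable {k F ι : Type} [Field k] [Field F] [Algebra k F] [Fintype ι]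
  [DecidableEq ι] {z : Option ι → F}

lemma mem_range_of_isAlgebraic_of_isAlgClosed [IsAlgClosed k] {x : F} (hx : IsAlgebraic k x) :
    x ∈ Set.range (algebraMap k F) := by
  have hx' := hx.isIntegral
  have h1 := IsAlgClosed.degree_eq_one_of_irreducible k (minpoly.irreducible hx')
  exact minpoly.mem_range_of_degree_eq_one k x h1

lemma notMem_range_of_linearIndependent (hz0 : z none = 1) (hli : LinearIndependent k z) (i : ι) :
    z (some i) ∉ Set.range (algebraMap k F) := by
  rintro ⟨c, hc⟩
  refine hli.notMem_span_image (s := {none}) (x := some i) (by simp) ?_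
  rw [Set.image_singleton, hz0, ← hc, Algebra.algebraMap_eq_smul_one]
  exact Submodule.smul_mem _ _ (Submodule.mem_span_singleton_self _)

lemma ext_span_range {K F' : Type} [Field K] [Field F']
    [Algebra k K] [Algebra K F'] [Algebra F F'] [Algebra k F'] [IsScalarTower k F F']
    [IsScalarTower k K F'] {V : Submodule k F} (hV : V = Submodule.span k (Set.range z)) :
    ext K F' V = Submodule.span K (Set.range fun i => algebraMap F F' (z i)) := by
  rw [hV, ext_span, ← Set.range_comp]; rfl

/-- The bound on the arithmetic genus, for the surface given by a field `F` and rational functions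
`z` on it, with Hilbert function `t ↦ dim V ^ t`. -/
theorem genus_bound [IsAlgClosed k] [CharZero k] {r N : ℕ} {s π pa : ℤ} (hr : 4 ≤ r) (hs1 : (r : ℤ) - 1 ≤ s)
    (hs2 : s ≤ 2 * (r : ℤ) - 4) (hι : Fintype.card ι = r) (hz0 : z none = 1)
    (hli : LinearIndependent k z) (hz : IntermediateField.adjoin k (Set.range z) = ⊤)
    {V : Submodule k F} (hV : V = Submodule.span k (Set.range z))
    (quad : ∀ t : ℕ, N ≤ t → 2 * (Module.finrank k (V ^ t : Submodule k F) : ℤ)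
      = s * (t * (t + 1)) + 2 * (1 - π) * t + 2 + 2 * pa) :
    -((s - r + 1 - π + 1) * (s - r + 1 - π)) ≤ 2 * pa ∧ pa ≤ 0 := by
  have hcard : 0 < Fintype.card ι := by omega
  obtain ⟨i₀⟩ := Fintype.card_pos_iff.1 hcard
  have hi₀ := notMem_range_of_linearIndependent hz0 hli i₀
  have hVfg : V.FG := GenSec.fg_span_range hV
  have h1V : (1 : F) ∈ V := by rw [hV, ← hz0]; exact Submodule.subset_span ⟨none, rfl⟩
  have hzne : ∃ i, z i ≠ 0 := ⟨none, by rw [hz0]; exact one_ne_zero⟩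
  have hVr : Module.finrank k V = r + 1 := by
    rw [hV, finrank_span_eq_card hli, Fintype.card_option, hι]
  have hsat0 : sat V 0 = 1 := sat_zero hVfg h1V fun x => mem_range_of_isAlgebraic_of_isAlgClosed
  have hfin0 : (sat V 0).FG := by rw [hsat0]; rw [Submodule.one_eq_span]; exact Submodule.fg_span_singleton _
  -- `(k₁, F₁, V₁)` is the generic hyperplane section, a curve.
  obtain ⟨k₁, F₁, _, _, _, _, _, _, _, _, G₁, hind₁⟩ := exists_genSec (k := k) hz0 (i := some i₀)
    (fun h => hi₀ (mem_range_of_isAlgebraic_of_isAlgClosed h))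
  have : CharZero k₁ := charZero_of_injective_algebraMap (algebraMap k k₁).injective
  let z₁ : Option ι → F₁ := fun i => algebraMap F F₁ (z i)
  have hz₁0 : z₁ none = 1 := by simp [z₁, hz0]
  have hz₁ne : ∃ i, z₁ i ≠ 0 := ⟨none, by rw [hz₁0]; exact one_ne_zero⟩
  have hz₁ : IntermediateField.adjoin k₁ (Set.range z₁) = ⊤ := G₁.adjoin_map hz0 hz
  set V₁ : Submodule k₁ F₁ := ext k₁ F₁ V with hV₁def
  have hV₁ : V₁ = Submodule.span k₁ (Set.range z₁) := ext_span_range hV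
  have h1V₁ : (1 : F₁) ∈ V₁ := by rw [hV₁, ← hz₁0]; exact Submodule.subset_span ⟨none, rfl⟩
  have hV₁fg : V₁.FG := GenSec.fg_span_range hV₁
  -- Otherwise the Hilbert function of the surface would grow at most linearly.
  have htr : ∃ i, Transcendental k₁ (z₁ i) := by
    by_contra! hcon
    obtain ⟨c, hc⟩ := sat_bounded hV₁ h1V₁ fun i => not_not.1 (hcon i)
    have hup : ∀ t, (sat V t).FG ∧ Module.finrank k (sat V t) ≤ 1 + c * t := by
      intro t
      induction t with
      | zero => exact ⟨hfin0, by rw [hsat0, finrank_one_submodule]; omega⟩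
      | succ t ih =>
        obtain ⟨e1, e2⟩ := G₁.sat_upper hV t ih.1 (hc (t + 1)).1
        refine ⟨e1, ?_⟩
        have e3 := (hc (t + 1)).2
        rw [← hV₁def] at e2
        have e4 := ih.2
        rw [mul_add]; omega
    refine numeric_linear (s := s) (c := c) (by omega) quad fun t => ?_
    have : Module.Finite k (sat V t) := Module.Finite.iff_fg.2 (hup t).1
    exact (Submodule.finrank_mono (pow_le_sat V t)).trans (hup t).2
  obtain ⟨i₁, hi₁⟩ := htr
  -- `(K, L, V₂)` is the generic section of codimension two, a point of degree `[L : K]`.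
  obtain ⟨K, L, _, _, _, _, _, _, _, _, G₂, hind₂⟩ := exists_genSec (k := k₁) hz₁0 hi₁
  let _ : Algebra k L := ((algebraMap F₁ L).comp (algebraMap k F₁)).toAlgebra
  have : IsScalarTower k F₁ L := IsScalarTower.of_algebraMap_eq fun _ => rfl
  have : IsScalarTower k k₁ L := IsScalarTower.of_algebraMap_eq fun x => by
    rw [IsScalarTower.algebraMap_apply k F₁ L, IsScalarTower.algebraMap_apply k k₁ F₁,
      IsScalarTower.algebraMap_apply k₁ F₁ L]
  have : CharZero K := charZero_of_injective_algebraMap (algebraMap k₁ K).injective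
  let z₂ : Option ι → L := fun i => algebraMap F₁ L (z₁ i)
  have hz₂0 : z₂ none = 1 := by simp [z₂, hz₁0]
  have hz₂ : IntermediateField.adjoin K (Set.range z₂) = ⊤ := G₂.adjoin_map hz₁0 hz₁
  set V₂ : Submodule K L := ext K L V₁ with hV₂def
  have hV₂ : V₂ = Submodule.span K (Set.range z₂) := ext_span_range hV₁
  have h1V₂ : (1 : L) ∈ V₂ := by rw [hV₂, ← hz₂0]; exact Submodule.subset_span ⟨none, rfl⟩
  have hV₂fg : V₂.FG := GenSec.fg_span_range hV₂
  have lowA := G₁.hilb_lower hV hzne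
  have lowB := G₂.hilb_lower hV₁ hz₁ne
  have hmono : Monotone fun t => Module.finrank K (V₂ ^ t : Submodule K L) := fun a b hab => by
    have : Module.Finite K (V₂ ^ b : Submodule K L) := Module.Finite.iff_fg.2 (hV₂fg.pow _)
    exact Submodule.finrank_mono (pow_mono' h1V₂ hab)
  have hD : ∀ m, (Module.finrank K (V₂ ^ m : Submodule K L) : ℤ) ≤ s :=
    numeric_bound (hA := fun t => Module.finrank k (V ^ t : Submodule k F))
      (hB := fun t => Module.finrank k₁ (V₁ ^ t : Submodule k₁ F₁)) lowA lowB hmono quad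
  have hgen₂ : IntermediateField.adjoin K (V₂ : Set L) = ⊤ := by
    rw [eq_top_iff, ← hz₂]
    exact IntermediateField.adjoin.mono _ _ _ (by rw [hV₂]; exact Submodule.subset_span)
  obtain ⟨t₂, ht₂⟩ := exists_pow_eq_top (c := s.toNat) hV₂fg h1V₂ hgen₂ fun t => by
    have := hD t; omega
  have hfinL : FiniteDimensional K L := ⟨ht₂ ▸ hV₂fg.pow t₂⟩
  have hs' : (Module.finrank K L : ℤ) ≤ s := by
    have := hD t₂
    rwa [ht₂, finrank_top] at this
  have hd₁ : Algebra.trdeg k₁ F₁ ≤ 1 := by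
    have := G₂.trdeg_le hind₂
    rwa [trdeg_eq_zero (R := K) (A := L), zero_add] at this
  have hd : Algebra.trdeg k F ≤ 2 :=
    (G₁.trdeg_le hind₁).trans ((add_le_add_left hd₁ 1).trans (by rw [one_add_one_eq_two]))
  have hsat₁0 : sat V₁ 0 = 1 := sat_zero hV₁fg h1V₁ fun y hy =>
    mem_range_of_isAlgebraic G₁ hind₁ hz0 hz hi₀ hd hd₁ hi₁ hy
  have hfin₁0 : (sat V₁ 0).FG := by rw [hsat₁0]; rw [Submodule.one_eq_span]; exact Submodule.fg_span_singleton _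
  have hV₁r : Module.finrank k₁ V₁ = r := by
    have e1 := lowA 0
    have e2 := G₁.hilb_upper hV 0 hfin0
    rw [← hV₁def, zero_add, pow_one, pow_one, hVr] at e1 e2
    rw [pow_zero, finrank_one_submodule] at e1
    rw [hsat0, finrank_one_submodule] at e2
    omega
  have hV₂r : Module.finrank K V₂ + 1 = r := by
    have e1 := lowB 0
    have e2 := G₂.hilb_upper hV₁ 0 hfin₁0
    rw [← hV₂def, zero_add, pow_one, pow_one, hV₁r] at e1 e2
    rw [pow_zero, finrank_one_submodule] at e1
    rw [hsat₁0, finrank_one_submodule] at e2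
    omega
  -- `2 dim V₂ = 2 (r - 1) > s ≥ [L : K]`: the points impose independent conditions on quadrics.
  have hV₂sq : V₂ ^ 2 = ⊤ := by
    rw [pow_two]; exact mul_eq_top_of_finrank _ _ (by omega)
  have hV₂top : ∀ t, 1 ≤ t → V₂ ^ (t + 1) = ⊤ := fun t ht => by
    rw [eq_top_iff, ← hV₂sq]; exact pow_mono' h1V₂ (by omega)
  have hfin₂ : ∀ t, (sat V₂ t).FG := fun t => Module.Finite.iff_fg.1 inferInstance
  have hfin₁ : ∀ t, (sat V₁ t).FG := by
    intro t
    induction t with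
    | zero => exact hfin₁0
    | succ t ih => exact (G₂.sat_upper hV₁ t ih (hfin₂ _)).1
  have hfin : ∀ t, (sat V t).FG := by
    intro t
    induction t with
    | zero => exact hfin0
    | succ t ih => exact (G₁.sat_upper hV t ih (hfin₁ _)).1
  obtain ⟨n₁, hn₁⟩ := sat_eventually (hfin₁ 1) fun t ht =>
    G₂.sat_le_of_section hV₁ t (by rw [← hV₂def, hV₂top t ht]; exact le_top)
  obtain ⟨n, hn⟩ := sat_eventually (hfin n₁) fun t ht =>
    G₁.sat_le_of_section hV t (by rw [← hV₁def, hn₁ (t + 1) (by omega)])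
  have hK := adjoin_eq_top_of_section G₁ G₂ hind₁ hind₂ hz0 hz hi₀ hd
  have hU : ∀ t, Module.finrank K ((V₁.baseChange K) ^ t : Submodule K (K ⊗[k₁] F₁))
      = Module.finrank k₁ (V₁ ^ t : Submodule k₁ F₁) := fun t => by
    rw [← baseChange_pow, finrank_baseChange_sub]
  refine numeric_end (hA := fun t => Module.finrank k (V ^ t : Submodule k F))
      (hB := fun t => Module.finrank k₁ (V₁ ^ t : Submodule k₁ F₁))
      (a := fun t => Module.finrank k (sat V t)) (b := fun t => Module.finrank k₁ (sat V₁ t))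
      (s' := Module.finrank K L) (n := n + n₁) ?_ ?_ lowA ?_ ?_ ?_ ?_ ?_ ?_ ?_ quad
  · rw [pow_zero]; exact finrank_one_submodule
  · rw [pow_one]; exact hV₁r
  · intro t ht
    have := lowB t
    rwa [← hV₂def, hV₂top t ht, finrank_top] at this
  · intro t ht heq
    simp only [← hU] at heq ⊢
    refine finrank_pow_step (GenSec.rho (k := k₁) (K := K) (F' := L)) hK (fg_baseChange hV₁fg) ?_
      (hV₁ ▸ G₂.lT_mem) G₂.rho_lT (G₂.lT_mul_inj hz₁ne) ?_ (r := r) ?_ ?_ (by omega) ht heq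
    · exact Submodule.tmul_mem_baseChange_of_mem (1 : K) h1V₁
    · rw [← baseChange_pow, GenSec.map_rho, ext_pow, ← hV₂def, hV₂sq]
    · rw [finrank_baseChange_sub, hV₁r]
    · rw [GenSec.map_rho, ← hV₂def, hV₂r]
  · intro t ht
    have e1 := (G₂.sat_upper hV₁ t (hfin₁ t) (hfin₂ _)).2
    have e2 := G₂.sat_lower hV₁ hz₁ne t (hfin₁ _)
    have e3 : ext K L (sat V₁ (t + 1)) = ⊤ := by
      rw [eq_top_iff, ← hV₂top t ht, hV₂def, ← ext_pow]
      exact ext_mono (pow_le_sat V₁ _)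
    have e4 := Submodule.finrank_le (sat (ext K L V₁) (t + 1))
    rw [e3, finrank_top] at e2
    omega
  · rw [hsat0]; exact finrank_one_submodule
  · intro t
    have := (G₁.sat_upper hV t (hfin t) (hfin₁ _)).2
    rw [← hV₁def] at this
    omega
  · intro t
    have : Module.Finite k (sat V t) := Module.Finite.iff_fg.2 (hfin t)
    exact Submodule.finrank_mono (pow_le_sat V t)
  · intro t ht
    refine ⟨?_, by rw [hn₁ t (by omega)]⟩
    have e1 := lowA t
    have e2 := G₁.hilb_upper hV t (hfin t)
    rw [← hV₁def] at e1 e2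
    rw [hn t (by omega)] at e2
    omega

end Core
end SurfGenus

/-! ### From homogeneous ideals to function fields -/

namespace SurfGenus
set_option linter.unusedSectionVars false

section Translation
open MvPolynomial

lemma span_singleton_mul_eq_map {Q : Type} [Field Q] [Algebra ℂ Q] (c : Q) (W : Submodule ℂ Q) :
    Submodule.span ℂ {c} * W = W.map (LinearMap.mulLeft ℂ c) := by
  ext x; rw [Submodule.mem_span_singleton_mul]; rfl

/-- Rescaling does not change the dimensions of the powers of a subspace. -/
lemma finrank_pow_scale {Q : Type} [Field Q] [Algebra ℂ Q] {c : Q} (hc : c ≠ 0)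
    (W : Submodule ℂ Q) (t : ℕ) :
    Module.finrank ℂ (W.map (LinearMap.mulLeft ℂ c) ^ t : Submodule ℂ Q)
      = Module.finrank ℂ (W ^ t : Submodule ℂ Q) := by
  rw [← span_singleton_mul_eq_map, mul_pow, Submodule.span_pow, Set.singleton_pow,
    span_singleton_mul_eq_map]
  exact finrank_map_inj _ (mul_right_injective₀ (pow_ne_zero t hc))

lemma finrank_pow_map {A B : Type} [CommRing A] [CommRing B] [Algebra ℂ A] [Algebra ℂ B]
    (f : A →ₐ[ℂ] B) (hf : Function.Injective f) (W : Submodule ℂ A) (t : ℕ) :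
    Module.finrank ℂ (W.map f.toLinearMap ^ t : Submodule ℂ B)
      = Module.finrank ℂ (W ^ t : Submodule ℂ A) := by
  rw [← Submodule.map_pow]; exact finrank_map_inj _ hf

lemma degQ_eq {n : ℕ} (I : Ideal (MPoly n)) (t : ℕ) :
    degQ I t = (Submodule.span ℂ (Set.range fun i => Ideal.Quotient.mkₐ ℂ I (X i))) ^ t := by
  rw [degQ, ← homogeneousSubmodule_one_pow, Submodule.map_pow, homogeneousSubmodule_one_eq_span_X,
    Submodule.map_span, ← Set.range_comp]
  rfl

lemma even_prod (t : ℤ) : t * (t + 1) = 2 * (t * (t + 1) / 2) :=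
  (Int.mul_ediv_cancel' (Int.even_mul_succ_self t).two_dvd).symm

/-- The bound for homogeneous prime ideals. The function field is generated over `ℂ` by the quotients
`x_i / x_0` of the coordinates, and their span `V` has `dim V ^ t` equal to the Hilbert function. -/
theorem surface_bound (r : ℕ) (s π pa : ℤ) (hr : 4 ≤ r)
    (hs1 : (r : ℤ) - 1 ≤ s) (hs2 : s ≤ 2 * (r : ℤ) - 4)
    (IS : Ideal (MPoly (r + 1)))
    (hprime : IS.IsPrime) (hnd : Nondeg IS) (hsinv : SurfInv IS s π pa) :
    -(binom2 (s - (r : ℤ) + 1 - π + 1)) ≤ pa ∧ pa ≤ 0 := by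
  obtain ⟨N, hN⟩ := hsinv
  let A := MPoly (r + 1) ⧸ IS
  let Q := FractionRing A
  let g : A →ₐ[ℂ] Q := IsScalarTower.toAlgHom ℂ A Q
  have hg : Function.Injective g := IsFractionRing.injective A Q
  let x : Fin (r + 1) → Q := fun i => g (Ideal.Quotient.mkₐ ℂ IS (X i))
  have hxli : LinearIndependent ℂ x := by
    rw [Fintype.linearIndependent_iff]
    intro c hc
    have h1 : g (Ideal.Quotient.mkₐ ℂ IS (∑ i, c i • X i)) = 0 := by
      rw [← hc, map_sum, map_sum]; simp only [map_smul, x]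
    have h2 : (∑ i, c i • X i : MPoly (r + 1)) ∈ IS :=
      Ideal.Quotient.eq_zero_iff_mem.1 ((map_eq_zero_iff g hg).1 h1)
    have h3 := hnd _ (Submodule.sum_mem _ fun i _ => Submodule.smul_mem _ _
      ((mem_homogeneousSubmodule _ _).2 (isHomogeneous_X ℂ i))) h2
    intro j
    have h4 := congrArg (coeff (Finsupp.single j 1)) h3
    simpa [coeff_sum, coeff_X, Finsupp.single_left_inj] using h4
  have hx0 : x 0 ≠ 0 := hxli.ne_zero 0
  let y : Fin (r + 1) → Q := fun i => (x 0)⁻¹ * x i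
  have hyli : LinearIndependent ℂ y := hxli.map' (LinearMap.mulLeft ℂ (x 0)⁻¹)
    (LinearMap.ker_eq_bot.2 (mul_right_injective₀ (inv_ne_zero hx0)))
  let E := IntermediateField.adjoin ℂ (Set.range y)
  let e := (finSuccEquiv r).symm
  let z : Option (Fin r) → E := fun j =>
    ⟨y (e j), IntermediateField.subset_adjoin _ _ ⟨_, rfl⟩⟩
  have hzrange : Subtype.val '' Set.range z = Set.range y := by
    rw [← Set.range_comp]
    exact e.surjective.range_comp y
  have hzli : LinearIndependent ℂ z := by
    refine LinearIndependent.of_comp E.val.toLinearMap ?_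
    exact hyli.comp e e.injective
  have hz0 : z none = 1 := Subtype.ext (by
    change (x 0)⁻¹ * x (e none) = 1
    rw [show e none = 0 from finSuccEquiv_symm_none]
    exact inv_mul_cancel₀ hx0)
  have hz : IntermediateField.adjoin ℂ (Set.range z) = ⊤ := by
    refine IntermediateField.lift_injective E ?_
    rw [IntermediateField.lift_adjoin, IntermediateField.lift_top, hzrange]
  have hspan : (Submodule.span ℂ (Set.range z)).map E.val.toLinearMap
      = ((Submodule.span ℂ (Set.range fun i => Ideal.Quotient.mkₐ ℂ IS (X i))).map
        g.toLinearMap).map (LinearMap.mulLeft ℂ (x 0)⁻¹) := by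
    rw [Submodule.map_span, Submodule.map_span, Submodule.map_span, ← Set.range_comp,
      ← Set.range_comp, ← Set.range_comp]
    exact congrArg _ (e.surjective.range_comp y)
  have hilb : ∀ t, Module.finrank ℂ ((Submodule.span ℂ (Set.range z)) ^ t : Submodule ℂ E)
      = Module.finrank ℂ (degQ IS t) := by
    intro t
    rw [degQ_eq, ← finrank_pow_map E.val E.val.injective, hspan,
      finrank_pow_scale (inv_ne_zero hx0), finrank_pow_map g hg]
  have quad : ∀ t : ℕ, N.toNat ≤ t →
      2 * (Module.finrank ℂ ((Submodule.span ℂ (Set.range z)) ^ t : Submodule ℂ E) : ℤ)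
      = s * (t * (t + 1)) + 2 * (1 - π) * t + 2 + 2 * pa := by
    intro t ht
    have h1 := hN t (by omega)
    rw [hilbZ, hilbNat, degQZ, if_pos (by omega), Int.toNat_natCast] at h1
    rw [hilb, h1]
    linear_combination (-s) * even_prod (t : ℤ)
  have := genus_bound hr hs1 hs2 (Fintype.card_fin r) hz0 hzli hz rfl quad
  refine ⟨?_, this.2⟩
  have h1 := this.1
  have h2 := even_prod (s - r + 1 - π)
  rw [binom2]
  have h3 : (s - r + 1 - π + 1) * (s - r + 1 - π + 1 - 1) = (s - r + 1 - π) * (s - r + 1 - π + 1) := by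
    ring
  rw [h3]
  rw [mul_comm, h2] at h1
  linarith

end Translation
end SurfGenus

/-- Corollary 3.5.  Let `S ⊆ ℙ^r` be an integral nondegenerate surface of
degree `s`, sectional genus `π` and arithmetic genus `p_a(S)`, with `r ≥ 4` and
`r-1 ≤ s ≤ 2r-4`.  Then `-binom(π₀-π+1, 2) ≤ p_a(S) ≤ 0`. -/
theorem statement_14 (r : ℕ) (s π pa : ℤ) (hr : 4 ≤ r)
    (hs1 : (r : ℤ) - 1 ≤ s) (hs2 : s ≤ 2 * (r : ℤ) - 4)
    (IS : Ideal (MPoly (r + 1)))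
    (hsurf : IsSurface IS) (hnd : Nondeg IS) (hsinv : SurfInv IS s π pa) :
    -(binom2 (s - (r : ℤ) + 1 - π + 1)) ≤ pa ∧ pa ≤ 0 := by
  exact SurfGenus.surface_bound r s π pa hr hs1 hs2 IS hsurf.2.1 hnd hsinv
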